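/- The sum of all cyclic numbers ≤ x is asymptotically equivalent to x² / (2 · e^γ · log log log x) as x → ∞, where γ is the Euler–Mascheroni constant. -/

import Mathlib

open Filter Asymptotics Real

/-- A positive integer `n` is *cyclic* if `gcd(n, φ(n)) = 1`. -/
def IsCyclicNum (n : ℕ) : Prop := 0 < n ∧ Nat.gcd n (Nat.totient n) = 1

instance : DecidablePred IsCyclicNum := fun n =>
  decidable_of_iff (0 < n ∧ Nat.gcd n (Nat.totient n) = 1) Iff.rfl

/-- The `n`-th cyclic number, indexed from 1: `cyclicNum 1 = 1`, `cyclicNum 2 = 2`, .... -/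
noncomputable def cyclicNum (n : ℕ) : ℕ := Nat.nth IsCyclicNum (n - 1)

/-- The number of cyclic numbers less than or equal to the real number `x`. -/
noncomputable def cyclicCount (x : ℝ) : ℕ :=
  ((Finset.range (⌊x⌋₊ + 1)).filter IsCyclicNum).card

/-- The sum of all cyclic numbers `≤ x`. -/
noncomputable def cyclicSum (x : ℝ) : ℝ :=
  ∑ n ∈ (Finset.range (⌊x⌋₊ + 1)).filter IsCyclicNum, (n : ℝ)

/-!
Write `L = log log N`. Over the primes `q ≤ N` with `q ≡ 1 (mod p)`, the sum of `1 / q` is of order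
`L / p`. If `p` is slightly smaller than `L`, almost every multiple of `p` up to `N` is therefore
divisible by such a `q`, and then `p ∣ q - 1 ∣ φ n`; conversely, hardly any `n ≤ N` has a prime `p`
slightly larger than `L` dividing `gcd(n, φ n)`. So up to a negligible set the cyclic numbers
`n ≤ N` are those without prime factors below about `L`. By Mertens' third theorem these have
density `∏_{p ≤ L} (1 - 1 / p) ~ e ^ (-γ) / log L`, and since they are evenly spread over `[1, N]`,
their sum is this density times `N ^ 2 / 2`.

Both estimates for the sum of `1 / q` have to be uniform in `p`: the upper bound follows from a
Selberg sieve, the lower bound from `L(s, χ)` at real `s → 1⁺`, with a lower bound for `|L(s, χ)|`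
polynomial in `1 / p`.
-/

namespace CyclicNum

open Finset
open scoped Topology ArithmeticFunction.Moebius

/-! ### Ramanujan sums and a sieve in arithmetic progressions -/

/-- The Ramanujan sum `c_d(n)`, in its divisor form `∑_{e ∣ gcd(d, n)} μ(d / e) e`. -/
noncomputable def ramanujanSum (d n : ℕ) : ℝ :=
  ∑ e ∈ d.divisors with e ∣ n, (μ (d / e) : ℝ) * e

lemma abs_moebius_cast_le_one (n : ℕ) : |(μ n : ℝ)| ≤ 1 := by
  exact_mod_cast ArithmeticFunction.abs_moebius_le_one

lemma sum_divisors_moebius_div (n : ℕ) :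
    ∑ e ∈ n.divisors, (μ (n / e) : ℝ) = if n = 1 then 1 else 0 := by
  have h := congrArg (fun f ↦ f n) (ArithmeticFunction.coe_moebius_mul_coe_zeta (R := ℝ))
  rw [Nat.sum_div_divisors n fun e ↦ (μ e : ℝ)]
  simpa only [ArithmeticFunction.coe_mul_zeta_apply, ArithmeticFunction.one_apply,
    ArithmeticFunction.intCoe_apply] using h

lemma sum_divisors_filter_dvd_moebius_div {d : ℕ} (hd : d ≠ 0) (g : ℕ) :
    ∑ e ∈ d.divisors with g ∣ e, (μ (d / e) : ℝ) = if g = d then 1 else 0 := by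
  by_cases hg : g ∣ d
  · obtain ⟨k, rfl⟩ := hg
    have hg0 : 0 < g := Nat.pos_of_ne_zero (left_ne_zero_of_mul hd)
    have hmultiples : {e ∈ (g * k).divisors | g ∣ e} = k.divisors.image (g * ·) := by
      ext e
      simp only [mem_filter, Nat.mem_divisors, mem_image]
      constructor
      · rintro ⟨⟨h, -⟩, f, rfl⟩
        exact ⟨f, ⟨Nat.dvd_of_mul_dvd_mul_left hg0 h, right_ne_zero_of_mul hd⟩, rfl⟩
      · rintro ⟨f, ⟨h, -⟩, rfl⟩
        exact ⟨⟨Nat.mul_dvd_mul_left g h, hd⟩, dvd_mul_right _ _⟩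
    rw [hmultiples, sum_image fun _ _ _ _ h ↦ Nat.eq_of_mul_eq_mul_left hg0 h]
    simp only [Nat.mul_div_mul_left _ _ hg0, sum_divisors_moebius_div, left_eq_mul₀ hg0.ne']
  · rw [if_neg fun h ↦ hg h.dvd, filter_false_of_mem, sum_empty]
    exact fun e he h ↦ hg (h.trans (Nat.dvd_of_mem_divisors he))

lemma gcd_eq_sum_totient {d e : ℕ} (he : e ∈ d.divisors) (e' : ℕ) :
    (e.gcd e' : ℝ) =
      ∑ g ∈ d.divisors, (if g ∣ e then 1 else 0) * (if g ∣ e' then 1 else 0) * (g.totient : ℝ) := by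
  obtain ⟨hed, hd⟩ := Nat.mem_divisors.1 he
  have hdivisors : (e.gcd e').divisors = {g ∈ d.divisors | g ∣ e ∧ g ∣ e'} := by
    ext g
    simp only [Nat.mem_divisors, mem_filter, Nat.dvd_gcd_iff]
    have := Nat.gcd_ne_zero_left (n := e') (ne_zero_of_dvd_ne_zero hd hed)
    exact ⟨fun h ↦ ⟨⟨h.1.1.trans hed, hd⟩, h.1⟩, fun h ↦ ⟨h.2, this⟩⟩
  rw [← Nat.sum_totient (e.gcd e'), hdivisors, sum_filter, Nat.cast_sum]
  refine sum_congr rfl fun g _ ↦ ?_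
  split_ifs <;> simp_all

lemma sum_moebius_mul_moebius_mul_gcd {d d' : ℕ} (hd : d ≠ 0) (hd' : d' ≠ 0) :
    ∑ e ∈ d.divisors, ∑ e' ∈ d'.divisors, (μ (d / e) : ℝ) * μ (d' / e') * (e.gcd e' : ℝ) =
      if d = d' then (d.totient : ℝ) else 0 := by
  calc ∑ e ∈ d.divisors, ∑ e' ∈ d'.divisors, (μ (d / e) : ℝ) * μ (d' / e') * (e.gcd e' : ℝ)
      = ∑ e ∈ d.divisors, ∑ e' ∈ d'.divisors, ∑ g ∈ d.divisors, (g.totient : ℝ) *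
          ((if g ∣ e then (μ (d / e) : ℝ) else 0) * if g ∣ e' then (μ (d' / e') : ℝ) else 0) := by
        refine sum_congr rfl fun e he ↦ sum_congr rfl fun e' _ ↦ ?_
        rw [gcd_eq_sum_totient he, mul_sum]
        refine sum_congr rfl fun g _ ↦ ?_
        split_ifs <;> ring
    _ = ∑ g ∈ d.divisors, (g.totient : ℝ) * ((∑ e ∈ d.divisors with g ∣ e, (μ (d / e) : ℝ)) *
          ∑ e' ∈ d'.divisors with g ∣ e', (μ (d' / e') : ℝ)) := by
        rw [sum_congr rfl fun _ _ ↦ sum_comm, sum_comm]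
        simp only [sum_filter]
        refine sum_congr rfl fun g _ ↦ ?_
        rw [sum_mul_sum, mul_sum]
        exact sum_congr rfl fun e _ ↦ by rw [mul_sum]
    _ = if d = d' then (d.totient : ℝ) else 0 := by
        simp only [sum_divisors_filter_dvd_moebius_div hd, sum_divisors_filter_dvd_moebius_div hd']
        rw [sum_eq_single d (fun g _ hg ↦ by simp [hg]) (by simp [hd])]
        simp

lemma exists_dvd_progression_iff_modEq (a : ℕ) {k l : ℕ} (hl : 0 < l) (hlk : l.Coprime k) :
    ∃ v : ℕ, ∀ m : ℕ, l ∣ a + k * m ↔ m ≡ v [MOD l] := by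
  have : NeZero l := ⟨hl.ne'⟩
  let u : (ZMod l)ˣ := ZMod.unitOfCoprime k hlk.symm
  have hu : (u : ZMod l) = k := ZMod.coe_unitOfCoprime k hlk.symm
  refine ⟨(-(↑u⁻¹ * a : ZMod l)).val, fun m ↦ ?_⟩
  rw [← ZMod.natCast_eq_zero_iff, ← ZMod.natCast_eq_natCast_iff, ZMod.natCast_zmod_val]
  push_cast
  rw [← hu]
  constructor
  · intro h
    linear_combination (↑u⁻¹ : ZMod l) * h - (m : ZMod l) * u.inv_mul
  · intro h
    linear_combination (u : ZMod l) * h - (a : ZMod l) * u.mul_inv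

lemma abs_card_dvd_progression_sub_le (a X : ℕ) {k l : ℕ} (hl : 0 < l) (hlk : l.Coprime k) :
    |(#{m ∈ range X | l ∣ a + k * m} : ℝ) - X / l| ≤ 1 := by
  obtain ⟨v, hv⟩ := exists_dvd_progression_iff_modEq a hl hlk
  simp_rw [hv]
  rw [← Nat.count_eq_card_filter_range, Nat.count_modEq_card _ hl]
  have hl' : (0 : ℝ) < l := by exact_mod_cast hl
  have hdiv : (X : ℝ) / l = (X / l : ℕ) + ((X % l : ℕ) : ℝ) / l := by
    field_simp
    exact_mod_cast (Nat.div_add_mod X l).symm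
  have hmod_nonneg : 0 ≤ ((X % l : ℕ) : ℝ) / l := by positivity
  have hmod_le : ((X % l : ℕ) : ℝ) / l ≤ 1 :=
    (div_le_one hl').2 (by exact_mod_cast (Nat.mod_lt _ hl).le)
  rw [hdiv, abs_le]
  push_cast
  split_ifs <;> constructor <;> linarith

lemma sum_divisors_id_le_sq (n : ℕ) : ∑ e ∈ n.divisors, (e : ℝ) ≤ (n : ℝ) ^ 2 := by
  calc ∑ e ∈ n.divisors, (e : ℝ) ≤ ∑ _e ∈ n.divisors, (n : ℝ) :=
        sum_le_sum fun e he ↦ by exact_mod_cast Nat.divisor_le he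
    _ = (#n.divisors : ℝ) * n := by rw [sum_const, nsmul_eq_mul]
    _ ≤ n * n := by gcongr; exact Nat.card_divisors_le_self n
    _ = (n : ℝ) ^ 2 := (sq _).symm

lemma sum_ramanujanSum_mul_ramanujanSum (a k X d d' : ℕ) :
    ∑ m ∈ range X, ramanujanSum d (a + k * m) * ramanujanSum d' (a + k * m) =
      ∑ e ∈ d.divisors, ∑ e' ∈ d'.divisors, (μ (d / e) : ℝ) * μ (d' / e') *
        (e * e' * #{m ∈ range X | e.lcm e' ∣ a + k * m}) := by
  simp only [ramanujanSum, sum_filter, sum_mul_sum]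
  rw [sum_comm]
  refine sum_congr rfl fun e _ ↦ ?_
  rw [sum_comm]
  refine sum_congr rfl fun e' _ ↦ ?_
  rw [← sum_boole, mul_sum, mul_sum]
  refine sum_congr rfl fun m _ ↦ ?_
  simp only [Nat.lcm_dvd_iff]
  by_cases he : e ∣ a + k * m <;> by_cases he' : e' ∣ a + k * m <;> simp [he, he']
  ring

lemma abs_sum_ramanujanSum_mul_sub_le (a X : ℕ) {k d d' : ℕ} (hd : d ≠ 0) (hd' : d' ≠ 0)
    (hdk : d.Coprime k) (hdk' : d'.Coprime k) :
    |∑ m ∈ range X, ramanujanSum d (a + k * m) * ramanujanSum d' (a + k * m) -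
      X * (if d = d' then (d.totient : ℝ) else 0)| ≤ (d : ℝ) ^ 2 * (d' : ℝ) ^ 2 := by
  rw [sum_ramanujanSum_mul_ramanujanSum, ← sum_moebius_mul_moebius_mul_gcd hd hd', mul_sum,
    ← sum_sub_distrib]
  calc _ ≤ ∑ e ∈ d.divisors, ∑ e' ∈ d'.divisors, (e : ℝ) * e' := by
        refine (abs_sum_le_sum_abs _ _).trans (sum_le_sum fun e he ↦ ?_)
        rw [mul_sum, ← sum_sub_distrib]
        refine (abs_sum_le_sum_abs _ _).trans (sum_le_sum fun e' he' ↦ ?_)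
        have hlcm : 0 < e.lcm e' :=
          Nat.lcm_pos (Nat.pos_of_mem_divisors he) (Nat.pos_of_mem_divisors he')
        have hcoprime : (e.lcm e').Coprime k :=
          ((hdk.coprime_dvd_left (Nat.dvd_of_mem_divisors he)).mul_left
            (hdk'.coprime_dvd_left (Nat.dvd_of_mem_divisors he'))).coprime_dvd_left
              (Nat.lcm_dvd_mul e e')
        have hgcd : (e : ℝ) * e' / e.lcm e' = e.gcd e' := by
          rw [div_eq_iff (by positivity)]
          exact_mod_cast (Nat.gcd_mul_lcm e e').symm
        have hcount := abs_card_dvd_progression_sub_le a X hlcm hcoprime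
        set T : ℝ := (#{m ∈ range X | e.lcm e' ∣ a + k * m} : ℝ)
        calc |(μ (d / e) : ℝ) * μ (d' / e') * (e * e' * T) -
              X * (μ (d / e) * μ (d' / e') * e.gcd e')|
            = |(μ (d / e) : ℝ)| * |(μ (d' / e') : ℝ)| * (e * e' * |T - X / e.lcm e'|) := by
              rw [← hgcd, ← abs_of_nonneg (by positivity : (0 : ℝ) ≤ e * e'), ← abs_mul, ← abs_mul,
                ← abs_mul, abs_of_nonneg (by positivity : (0 : ℝ) ≤ e * e')]
              congr 1
              ring
          _ ≤ 1 * 1 * (e * e' * 1) := by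
              gcongr <;> exact abs_moebius_cast_le_one _
          _ = e * e' := by ring
    _ = (∑ e ∈ d.divisors, (e : ℝ)) * ∑ e' ∈ d'.divisors, (e' : ℝ) := by rw [sum_mul_sum]
    _ ≤ (d : ℝ) ^ 2 * (d' : ℝ) ^ 2 := by gcongr <;> exact sum_divisors_id_le_sq _

/-- The integers `1 ≤ d ≤ R` prime to the modulus `k`: the sieving moduli. -/
def sieveModuli (k R : ℕ) : Finset ℕ := {d ∈ Icc 1 R | d.Coprime k}

/-- The Selberg sieve denominator `∑ μ(d)² / φ(d)` over the sieving moduli. -/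
noncomputable def selbergSum (k R : ℕ) : ℝ :=
  ∑ d ∈ sieveModuli k R, (μ d : ℝ) ^ 2 / d.totient

/-- The truncated Ramanujan expansion `∑ μ(d) / φ(d) · c_d(n)` over the sieving moduli; its square
divided by `selbergSum k R ^ 2` majorises the indicator of the integers free of primes `≤ R`. -/
noncomputable def sieveWeight (k R n : ℕ) : ℝ :=
  ∑ d ∈ sieveModuli k R, (μ d : ℝ) / d.totient * ramanujanSum d n

lemma mem_sieveModuli {k R d : ℕ} : d ∈ sieveModuli k R ↔ (1 ≤ d ∧ d ≤ R) ∧ d.Coprime k := by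
  rw [sieveModuli, mem_filter, mem_Icc]

lemma one_le_selbergSum (k : ℕ) {R : ℕ} (hR : 1 ≤ R) : 1 ≤ selbergSum k R := by
  have hone : 1 ∈ sieveModuli k R := mem_sieveModuli.2 ⟨⟨le_rfl, hR⟩, Nat.coprime_one_left k⟩
  calc (1 : ℝ) = (μ 1 : ℝ) ^ 2 / Nat.totient 1 := by norm_num
    _ ≤ selbergSum k R :=
        single_le_sum (f := fun d ↦ (μ d : ℝ) ^ 2 / d.totient) (fun d _ ↦ by positivity) hone

lemma sieveWeight_of_lt_minFac (k : ℕ) {R n : ℕ} (hR : R < n.minFac) :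
    sieveWeight k R n = selbergSum k R := by
  refine sum_congr rfl fun d hd ↦ ?_
  obtain ⟨⟨hd1, hdR⟩, -⟩ := mem_sieveModuli.1 hd
  have hdivisors : {e ∈ d.divisors | e ∣ n} = {1} := by
    ext e
    simp only [mem_filter, Nat.mem_divisors, mem_singleton]
    constructor
    · rintro ⟨⟨hed, -⟩, hen⟩
      have hle := Nat.le_of_dvd hd1 hed
      have := Nat.pos_of_dvd_of_pos hed hd1
      by_contra he
      have := Nat.minFac_le_of_dvd (by lia) hen
      lia
    · rintro rfl
      exact ⟨⟨one_dvd d, by lia⟩, one_dvd n⟩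
  rw [ramanujanSum, hdivisors, sum_singleton, Nat.div_one]
  push_cast
  ring

lemma sum_sieveWeight_sq (a k X R : ℕ) :
    ∑ m ∈ range X, sieveWeight k R (a + k * m) ^ 2 =
      ∑ d ∈ sieveModuli k R, ∑ d' ∈ sieveModuli k R,
        (μ d : ℝ) / d.totient * (μ d' / d'.totient) *
          ∑ m ∈ range X, ramanujanSum d (a + k * m) * ramanujanSum d' (a + k * m) := by
  simp only [sieveWeight, sq, sum_mul_sum]
  rw [sum_comm]
  refine sum_congr rfl fun d _ ↦ ?_
  rw [sum_comm]
  refine sum_congr rfl fun d' _ ↦ ?_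
  rw [mul_sum]
  exact sum_congr rfl fun m _ ↦ by ring

lemma abs_moebius_div_totient_le_one (d : ℕ) : |(μ d : ℝ) / d.totient| ≤ 1 := by
  rcases Nat.eq_zero_or_pos d with rfl | hd
  · simp
  have htotient : (1 : ℝ) ≤ d.totient := by exact_mod_cast Nat.totient_pos.2 hd
  rw [abs_div, Nat.abs_cast, div_le_one (by linarith)]
  exact (abs_moebius_cast_le_one d).trans htotient

lemma selbergSum_eq_sum_sum (k R : ℕ) :
    selbergSum k R = ∑ d ∈ sieveModuli k R, ∑ d' ∈ sieveModuli k R,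
      (μ d : ℝ) / d.totient * (μ d' / d'.totient) * (if d = d' then (d.totient : ℝ) else 0) := by
  refine sum_congr rfl fun d hd ↦ ?_
  have htotient : (d.totient : ℝ) ≠ 0 := by
    have := Nat.totient_pos.2 (mem_sieveModuli.1 hd).1.1
    positivity
  simp only [mul_ite, mul_zero, sum_ite_eq, hd, if_true]
  field_simp

lemma sum_sieveModuli_sq_le (k R : ℕ) : ∑ d ∈ sieveModuli k R, (d : ℝ) ^ 2 ≤ (R : ℝ) ^ 3 := by
  have hcard : #(sieveModuli k R) ≤ R := (card_filter_le _ _).trans (by simp)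
  calc ∑ d ∈ sieveModuli k R, (d : ℝ) ^ 2 ≤ ∑ _d ∈ sieveModuli k R, (R : ℝ) ^ 2 := by
        refine sum_le_sum fun d hd ↦ ?_
        have := (mem_sieveModuli.1 hd).1.2
        gcongr
    _ = #(sieveModuli k R) * (R : ℝ) ^ 2 := by rw [sum_const, nsmul_eq_mul]
    _ ≤ R * (R : ℝ) ^ 2 := by gcongr
    _ = (R : ℝ) ^ 3 := by ring

lemma sum_sieveWeight_sq_le (a k X R : ℕ) :
    ∑ m ∈ range X, sieveWeight k R (a + k * m) ^ 2 ≤ X * selbergSum k R + (R : ℝ) ^ 6 := by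
  rw [← sub_le_iff_le_add', sum_sieveWeight_sq, selbergSum_eq_sum_sum, mul_sum, ← sum_sub_distrib]
  calc _ ≤ ∑ d ∈ sieveModuli k R, ∑ d' ∈ sieveModuli k R, (d : ℝ) ^ 2 * (d' : ℝ) ^ 2 := by
        refine sum_le_sum fun d hd ↦ ?_
        rw [mul_sum, ← sum_sub_distrib]
        refine sum_le_sum fun d' hd' ↦ ?_
        obtain ⟨⟨hd1, -⟩, hdk⟩ := mem_sieveModuli.1 hd
        obtain ⟨⟨hd1', -⟩, hdk'⟩ := mem_sieveModuli.1 hd'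
        rw [mul_left_comm (X : ℝ), ← mul_sub]
        refine (le_abs_self _).trans ?_
        rw [abs_mul, abs_mul]
        calc _ ≤ 1 * 1 * ((d : ℝ) ^ 2 * (d' : ℝ) ^ 2) := by
              gcongr
              · exact abs_moebius_div_totient_le_one d
              · exact abs_moebius_div_totient_le_one d'
              · exact abs_sum_ramanujanSum_mul_sub_le a X (by lia) (by lia) hdk hdk'
          _ = (d : ℝ) ^ 2 * (d' : ℝ) ^ 2 := by ring
    _ = (∑ d ∈ sieveModuli k R, (d : ℝ) ^ 2) * ∑ d ∈ sieveModuli k R, (d : ℝ) ^ 2 := by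
        rw [sum_mul_sum]
    _ ≤ (R : ℝ) ^ 3 * (R : ℝ) ^ 3 := by gcongr <;> exact sum_sieveModuli_sq_le k R
    _ = (R : ℝ) ^ 6 := by ring

lemma card_lt_minFac_mul_selbergSum_sq_le (a k X R : ℕ) :
    (#{m ∈ range X | R < (a + k * m).minFac} : ℝ) * selbergSum k R ^ 2 ≤
      X * selbergSum k R + (R : ℝ) ^ 6 := by
  calc (#{m ∈ range X | R < (a + k * m).minFac} : ℝ) * selbergSum k R ^ 2
      = ∑ m ∈ range X with R < (a + k * m).minFac, sieveWeight k R (a + k * m) ^ 2 := by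
        rw [← nsmul_eq_mul, ← sum_const]
        exact sum_congr rfl fun m hm ↦ by rw [sieveWeight_of_lt_minFac k (mem_filter.1 hm).2]
    _ ≤ ∑ m ∈ range X, sieveWeight k R (a + k * m) ^ 2 :=
        sum_le_sum_of_subset_of_nonneg (filter_subset _ _) fun _ _ _ ↦ sq_nonneg _
    _ ≤ X * selbergSum k R + (R : ℝ) ^ 6 := sum_sieveWeight_sq_le a k X R

section Pointwise

open scoped Pointwise

lemma sum_inv_mul_le (s t : Finset ℕ) :
    ∑ n ∈ s * t, (n : ℝ)⁻¹ ≤ (∑ a ∈ s, (a : ℝ)⁻¹) * ∑ b ∈ t, (b : ℝ)⁻¹ := by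
  rw [mul_def]
  refine (sum_image_le_of_nonneg fun x _ ↦ by positivity).trans_eq ?_
  simp only [sum_product, sum_mul_sum, Nat.cast_mul, mul_inv]

lemma sum_inv_sieveModuli_le_squarefree (k R : ℕ) :
    ∑ n ∈ sieveModuli k R, (n : ℝ)⁻¹ ≤ 2 * ∑ d ∈ sieveModuli k R with Squarefree d, (d : ℝ)⁻¹ := by
  set squares := (Icc 1 R).image (· ^ 2)
  set squarefrees := {d ∈ sieveModuli k R | Squarefree d}
  have hfactor : sieveModuli k R ⊆ squares * squarefrees := by
    intro n hn
    obtain ⟨⟨hn1, hnR⟩, hnk⟩ := mem_sieveModuli.1 hn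
    obtain ⟨d, b, hbd, hd⟩ := Nat.sq_mul_squarefree n
    have hdn : d ∣ n := ⟨b ^ 2, by rw [← hbd, mul_comm]⟩
    have hbn : b ∣ n := ⟨b * d, by rw [← hbd]; ring⟩
    refine mem_mul.2 ⟨b ^ 2, mem_image_of_mem _ (mem_Icc.2 ⟨?_, ?_⟩), d,
      mem_filter.2 ⟨mem_sieveModuli.2 ⟨⟨?_, ?_⟩, hnk.coprime_dvd_left hdn⟩, hd⟩, hbd⟩
    · exact Nat.pos_of_dvd_of_pos hbn hn1
    · exact (Nat.le_of_dvd hn1 hbn).trans hnR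
    · exact Nat.pos_of_dvd_of_pos hdn hn1
    · exact (Nat.le_of_dvd hn1 hdn).trans hnR
  have hsquares : ∑ b ∈ squares, (b : ℝ)⁻¹ ≤ 2 := by
    have h := sum_Ioo_inv_sq_le (α := ℝ) 0 (R + 1)
    rw [sum_image fun a _ b _ h ↦ Nat.pow_left_injective two_ne_zero h]
    rw [show Ioo 0 (R + 1) = Icc 1 R by ext n; simp only [mem_Ioo, mem_Icc]; lia] at h
    simpa using h
  calc ∑ n ∈ sieveModuli k R, (n : ℝ)⁻¹
      ≤ ∑ n ∈ squares * squarefrees, (n : ℝ)⁻¹ :=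
        sum_le_sum_of_subset_of_nonneg hfactor fun _ _ _ ↦ by positivity
    _ ≤ (∑ b ∈ squares, (b : ℝ)⁻¹) * ∑ d ∈ squarefrees, (d : ℝ)⁻¹ := sum_inv_mul_le _ _
    _ ≤ 2 * ∑ d ∈ squarefrees, (d : ℝ)⁻¹ := by gcongr

lemma sum_inv_Icc_le_sieveModuli {p : ℕ} (hp : p.Prime) (R : ℕ) :
    ∑ n ∈ Icc 1 R, (n : ℝ)⁻¹ ≤ 2 * ∑ n ∈ sieveModuli p R, (n : ℝ)⁻¹ := by
  have hmultiples : {n ∈ Icc 1 R | ¬ n.Coprime p} ⊆ {p} * Icc 1 R := by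
    intro n hn
    obtain ⟨hnR, hnp⟩ := mem_filter.1 hn
    rw [mem_Icc] at hnR
    obtain ⟨k, rfl⟩ : p ∣ n := by rwa [hp.dvd_iff_not_coprime, Nat.coprime_comm]
    have hk := Nat.le_mul_of_pos_left k hp.pos
    have hk0 : 0 < k := Nat.pos_of_mul_pos_left hnR.1
    exact mul_mem_mul (mem_singleton_self p) (mem_Icc.2 ⟨hk0, hk.trans hnR.2⟩)
  have hnot_coprime : ∑ n ∈ Icc 1 R with ¬ n.Coprime p, (n : ℝ)⁻¹ ≤
      2⁻¹ * ∑ n ∈ Icc 1 R, (n : ℝ)⁻¹ := by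
    calc ∑ n ∈ Icc 1 R with ¬ n.Coprime p, (n : ℝ)⁻¹
        ≤ ∑ n ∈ ({p} * Icc 1 R : Finset ℕ), (n : ℝ)⁻¹ :=
          sum_le_sum_of_subset_of_nonneg hmultiples fun _ _ _ ↦ by positivity
      _ ≤ (∑ n ∈ {p}, (n : ℝ)⁻¹) * ∑ n ∈ Icc 1 R, (n : ℝ)⁻¹ := sum_inv_mul_le _ _
      _ ≤ 2⁻¹ * ∑ n ∈ Icc 1 R, (n : ℝ)⁻¹ := by
          rw [sum_singleton]
          gcongr
          exact_mod_cast hp.two_le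
  have hsplit := sum_filter_add_sum_filter_not (Icc 1 R) (fun d ↦ d.Coprime p)
    fun n ↦ (n : ℝ)⁻¹
  rw [sieveModuli]
  linarith

end Pointwise

lemma sum_inv_squarefree_le_selbergSum (k R : ℕ) :
    ∑ d ∈ sieveModuli k R with Squarefree d, (d : ℝ)⁻¹ ≤ selbergSum k R := by
  rw [sum_filter]
  refine sum_le_sum fun d hd ↦ ?_
  have htotient : (0 : ℝ) < d.totient := by
    exact_mod_cast Nat.totient_pos.2 (mem_sieveModuli.1 hd).1.1
  split_ifs with hsquarefree
  · have hmoebius : (μ d : ℝ) ^ 2 = 1 := by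
      exact_mod_cast ArithmeticFunction.moebius_sq_eq_one_of_squarefree hsquarefree
    rw [hmoebius, inv_eq_one_div]
    gcongr
    exact Nat.totient_le d
  · positivity

lemma log_le_sum_inv_Icc (R : ℕ) : log R ≤ ∑ n ∈ Icc 1 R, (n : ℝ)⁻¹ := by
  rcases Nat.eq_zero_or_pos R with rfl | hR
  · simp
  have h := log_add_one_le_harmonic R
  rw [harmonic_eq_sum_Icc] at h
  push_cast at h
  exact (log_le_log (by positivity) (by simp)).trans h

lemma log_le_four_mul_selbergSum {p : ℕ} (hp : p.Prime) (R : ℕ) :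
    log R ≤ 4 * selbergSum p R := by
  linarith [log_le_sum_inv_Icc R, sum_inv_Icc_le_sieveModuli hp R,
    sum_inv_sieveModuli_le_squarefree p R, sum_inv_squarefree_le_selbergSum p R]

lemma card_prime_progression_le_card_lt_minFac (a X R : ℕ) {k : ℕ} (hk : 0 < k) :
    #{m ∈ range X | (a + k * m).Prime} ≤ #{m ∈ range X | R < (a + k * m).minFac} + (R + 1) := by
  calc #{m ∈ range X | (a + k * m).Prime}
      ≤ #({m ∈ range X | R < (a + k * m).minFac} ∪ range (R + 1)) := by
        refine card_le_card fun m hm ↦ ?_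
        obtain ⟨hmX, hprime⟩ := mem_filter.1 hm
        have hm_le := Nat.le_mul_of_pos_left m hk
        rw [mem_union, mem_filter, hprime.minFac_eq, mem_range (n := R + 1)]
        by_cases hR : R < a + k * m
        · exact Or.inl ⟨hmX, hR⟩
        · exact Or.inr (by lia)
    _ ≤ #{m ∈ range X | R < (a + k * m).minFac} + (R + 1) := by
        simpa using card_union_le {m ∈ range X | R < (a + k * m).minFac} (range (R + 1))

lemma card_prime_progression_mul_log_le (a : ℕ) {p X R : ℕ} (hp : p.Prime) (hR : 1 ≤ R)
    (hRX : (R : ℝ) ^ 6 ≤ 64 * X) (hRX_log : (R + 1) * log X ≤ 36 * X)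
    (hlogR : log X ≤ 12 * log R) :
    (#{m ∈ range X | (a + p * m).Prime} : ℝ) * log X ≤ 4000 * X := by
  have hprimes : (#{m ∈ range X | (a + p * m).Prime} : ℝ) ≤
      #{m ∈ range X | R < (a + p * m).minFac} + (R + 1) := by
    exact_mod_cast card_prime_progression_le_card_lt_minFac a X R hp.pos
  set sifted : ℝ := (#{m ∈ range X | R < (a + p * m).minFac} : ℝ)
  have hsieve : sifted * selbergSum p R ^ 2 ≤ X * selbergSum p R + (R : ℝ) ^ 6 :=
    card_lt_minFac_mul_selbergSum_sq_le a p X R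
  have hone := one_le_selbergSum p hR
  have hlog := log_le_four_mul_selbergSum hp R
  set S := selbergSum p R
  have hsifted : sifted * S ≤ 65 * X := by
    refine le_of_mul_le_mul_right ?_ (by linarith : 0 < S)
    nlinarith [(Nat.cast_nonneg X : (0 : ℝ) ≤ X)]
  have hX_log : 0 ≤ log (X : ℝ) := log_natCast_nonneg X
  calc (#{m ∈ range X | (a + p * m).Prime} : ℝ) * log X
      ≤ (sifted + (R + 1)) * log X := by gcongr
    _ = sifted * log X + (R + 1) * log X := by ring
    _ ≤ sifted * (48 * S) + 36 * X := by
        gcongr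
        linarith
    _ ≤ 4000 * X := by linarith [(Nat.cast_nonneg X : (0 : ℝ) ≤ X)]

/-- The Brun–Titchmarsh inequality for prime moduli, with an unspecified constant. -/
theorem exists_card_prime_progression_le : ∃ C : ℝ, 0 < C ∧ ∀ a p X : ℕ, p.Prime → 2 ≤ X →
    (#{m ∈ range X | (a + p * m).Prime} : ℝ) ≤ C * X / log X := by
  refine ⟨4000, by norm_num, fun a p X hp hX ↦ ?_⟩
  have hX' : (2 : ℝ) ≤ X := by exact_mod_cast hX
  rw [le_div_iff₀ (log_pos (by linarith))]
  set y : ℝ := (X : ℝ) ^ (12⁻¹ : ℝ) with hy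
  have hy1 : 1 ≤ y := one_le_rpow (by linarith) (by norm_num)
  have hy12 : y ^ 12 = X := by
    rw [hy, ← rpow_natCast, ← rpow_mul (by linarith)]
    norm_num
  have hlogX : log X = 12 * log y := by rw [← hy12, log_pow]; norm_num
  set R : ℕ := ⌊y⌋₊ + 1 with hR
  have hyR : y ≤ R := by
    rw [hR]
    exact_mod_cast (Nat.lt_floor_add_one y).le
  have hRy : (R : ℝ) ≤ 2 * y := by
    rw [hR]
    push_cast
    linarith [Nat.floor_le (zero_le_one.trans hy1)]
  refine card_prime_progression_mul_log_le a hp (R := R) (by lia) ?_ ?_ ?_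
  · calc (R : ℝ) ^ 6 ≤ (2 * y) ^ 6 := by gcongr
      _ = 64 * y ^ 6 := by ring
      _ ≤ 64 * y ^ 12 := by gcongr; norm_num
      _ = 64 * X := by rw [hy12]
  · calc (R + 1) * log X ≤ (3 * y) * (12 * y) := by
          rw [hlogX]
          gcongr
          · exact mul_nonneg (by norm_num) (log_nonneg hy1)
          · linarith
          · exact log_le_self (by linarith)
      _ = 36 * y ^ 2 := by ring
      _ ≤ 36 * y ^ 12 := by gcongr; norm_num
      _ = 36 * X := by rw [hy12]
  · rw [hlogX]
    gcongr

/-- The primes `q ≤ N` with `q ≡ 1 (mod p)`: those whose group of units has an element of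
order `p`. -/
def primesOneMod (p N : ℕ) : Finset ℕ := {q ∈ range (N + 1) | q.Prime ∧ q ≡ 1 [MOD p]}

lemma mem_primesOneMod {p N q : ℕ} :
    q ∈ primesOneMod p N ↔ q ≤ N ∧ q.Prime ∧ q ≡ 1 [MOD p] := by
  rw [primesOneMod, mem_filter, mem_range, Nat.lt_succ_iff]

lemma sum_Ico_one_two_pow (f : ℕ → ℝ) (K : ℕ) :
    ∑ m ∈ Ico 1 (2 ^ K), f m = ∑ k ∈ range K, ∑ j ∈ range (2 ^ k), f (2 ^ k + j) := by
  induction K with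
  | zero => simp
  | succ K ih =>
    rw [sum_range_succ, ← ih, ← sum_Ico_consecutive f (Nat.one_le_two_pow (n := K))
      (Nat.pow_le_pow_right (by norm_num) K.le_succ), sum_Ico_eq_sum_range f (2 ^ K)]
    congr 3
    rw [pow_succ]
    lia

lemma sum_inv_primesOneMod_le_sum_Ico (p : ℕ) {N M : ℕ} (hNM : N < M) :
    ∑ q ∈ primesOneMod p N, (q : ℝ)⁻¹ ≤
      ∑ m ∈ Ico 1 M, if (1 + p * m).Prime then ((p * m : ℕ) : ℝ)⁻¹ else 0 := by
  have hparam : primesOneMod p N ⊆ {m ∈ Ico 1 M | (1 + p * m).Prime}.image (1 + p * ·) := by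
    intro q hq
    obtain ⟨hqN, hprime, hmod⟩ := mem_primesOneMod.1 hq
    obtain ⟨m, hm⟩ := (Nat.modEq_iff_dvd' hprime.one_le).1 hmod.symm
    have hq : 1 + p * m = q := by have := hprime.one_le; lia
    have hpm : 0 < p * m := by have := hprime.two_le; lia
    have hm_le := Nat.le_mul_of_pos_left m (Nat.pos_of_mul_pos_right hpm)
    exact mem_image.2 ⟨m, mem_filter.2 ⟨mem_Ico.2 ⟨Nat.pos_of_mul_pos_left hpm, by lia⟩,
      hq ▸ hprime⟩, hq⟩
  calc ∑ q ∈ primesOneMod p N, (q : ℝ)⁻¹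
      ≤ ∑ q ∈ {m ∈ Ico 1 M | (1 + p * m).Prime}.image (1 + p * ·), (q : ℝ)⁻¹ :=
        sum_le_sum_of_subset_of_nonneg hparam fun _ _ _ ↦ by positivity
    _ ≤ ∑ m ∈ Ico 1 M with (1 + p * m).Prime, ((1 + p * m : ℕ) : ℝ)⁻¹ :=
        sum_image_le_of_nonneg fun _ _ ↦ by positivity
    _ ≤ ∑ m ∈ Ico 1 M with (1 + p * m).Prime, ((p * m : ℕ) : ℝ)⁻¹ := by
        refine sum_le_sum fun m hm ↦ ?_
        have hpm : p * m ≠ 0 := fun h ↦ Nat.not_prime_one (by simpa [h] using (mem_filter.1 hm).2)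
        gcongr
        lia
    _ = ∑ m ∈ Ico 1 M, if (1 + p * m).Prime then ((p * m : ℕ) : ℝ)⁻¹ else 0 := sum_filter _ _

lemma exists_sum_dyadic_block_le : ∃ C : ℝ, 0 < C ∧ ∀ p k : ℕ, p.Prime → 1 ≤ k →
    ∑ j ∈ range (2 ^ k),
      (if (1 + p * (2 ^ k + j)).Prime then ((p * (2 ^ k + j) : ℕ) : ℝ)⁻¹ else 0) ≤
        C / p * (k : ℝ)⁻¹ := by
  obtain ⟨C, hC, hBrunTitchmarsh⟩ := exists_card_prime_progression_le
  refine ⟨C / log 2, div_pos hC (log_pos one_lt_two), fun p k hp hk ↦ ?_⟩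
  have hcount : (#{j ∈ range (2 ^ k) | (1 + p * (2 ^ k + j)).Prime} : ℝ) ≤
      C * (2 ^ k : ℕ) / log (2 ^ k : ℕ) := by
    simpa only [mul_add, add_assoc] using
      hBrunTitchmarsh (1 + p * 2 ^ k) p (2 ^ k) hp (Nat.le_self_pow (by lia) 2)
  have hp0 : 0 < p := hp.pos
  rw [← sum_filter]
  calc ∑ j ∈ range (2 ^ k) with (1 + p * (2 ^ k + j)).Prime, ((p * (2 ^ k + j) : ℕ) : ℝ)⁻¹
      ≤ ∑ j ∈ range (2 ^ k) with (1 + p * (2 ^ k + j)).Prime, ((p * 2 ^ k : ℕ) : ℝ)⁻¹ := by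
        gcongr
        exact Nat.le_add_right _ _
    _ = #{j ∈ range (2 ^ k) | (1 + p * (2 ^ k + j)).Prime} * ((p * 2 ^ k : ℕ) : ℝ)⁻¹ := by
        rw [sum_const, nsmul_eq_mul]
    _ ≤ C * (2 ^ k : ℕ) / log (2 ^ k : ℕ) * ((p * 2 ^ k : ℕ) : ℝ)⁻¹ := by gcongr
    _ = C / log 2 / p * (k : ℝ)⁻¹ := by
        push_cast
        rw [log_pow]
        field_simp

lemma exp_one_le_log_of_sixteen_le {x : ℝ} (hx : 16 ≤ x) : exp 1 ≤ log x := by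
  have hlog : 4 * log 2 ≤ log x := by
    rw [show 4 * log 2 = log 16 by rw [show (16 : ℝ) = 2 ^ 4 by norm_num, log_pow]; norm_num]
    exact log_le_log (by norm_num) hx
  linarith [exp_one_lt_d9, log_two_gt_d9]

lemma sum_inv_Icc_log_two_le {N : ℕ} (hN : 16 ≤ N) :
    ∑ k ∈ Icc 1 (Nat.log 2 N), (k : ℝ)⁻¹ ≤ 3 * log (log N) := by
  have hexp : exp 1 ≤ log N := exp_one_le_log_of_sixteen_le (by exact_mod_cast hN)
  have hlogN : 0 < log (N : ℝ) := (exp_pos 1).trans_le hexp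
  have hloglog : 1 ≤ log (log N) := (le_log_iff_exp_le hlogN).2 hexp
  have hlog2_pos : 0 < Nat.log 2 N := Nat.log_pos one_lt_two (by lia)
  have hlog2_le : (Nat.log 2 N : ℝ) ≤ 2 * log N := by
    have h : (Nat.log 2 N : ℝ) * log 2 ≤ log N := by
      rw [← log_pow]
      exact log_le_log (by positivity) (by exact_mod_cast Nat.pow_log_le_self 2 (by lia))
    nlinarith [log_two_gt_d9]
  have hlog_log2 : log (Nat.log 2 N : ℝ) ≤ log 2 + log (log N) := by
    rw [← log_mul two_ne_zero hlogN.ne']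
    exact log_le_log (by exact_mod_cast hlog2_pos) hlog2_le
  have hharmonic := harmonic_le_one_add_log (Nat.log 2 N)
  rw [harmonic_eq_sum_Icc] at hharmonic
  push_cast at hharmonic
  linarith [log_two_lt_d9]

theorem exists_sum_inv_primesOneMod_le : ∃ C : ℝ, 0 < C ∧ ∀ p N : ℕ, p.Prime → 16 ≤ N →
    ∑ q ∈ primesOneMod p N, (q : ℝ)⁻¹ ≤ C * log (log N) / p := by
  obtain ⟨C, hC, hblock⟩ := exists_sum_dyadic_block_le
  refine ⟨1 + 3 * C, by positivity, fun p N hp hN ↦ ?_⟩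
  have hp0 : (0 : ℝ) < p := by exact_mod_cast hp.pos
  have hexp : exp 1 ≤ log N := exp_one_le_log_of_sixteen_le (by exact_mod_cast hN)
  have hloglog : 1 ≤ log (log N) := (le_log_iff_exp_le ((exp_pos 1).trans_le hexp)).2 hexp
  set f : ℕ → ℝ := fun m ↦ if (1 + p * m).Prime then ((p * m : ℕ) : ℝ)⁻¹ else 0 with hf
  have hf_one : f 1 ≤ 1 / p := by
    simp only [hf, mul_one, one_div]
    split_ifs
    · rfl
    · positivity
  calc ∑ q ∈ primesOneMod p N, (q : ℝ)⁻¹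
      ≤ ∑ m ∈ Ico 1 (2 ^ (Nat.log 2 N + 1)), f m :=
        sum_inv_primesOneMod_le_sum_Ico p (Nat.lt_pow_succ_log_self one_lt_two N)
    _ = ∑ k ∈ range (Nat.log 2 N), ∑ j ∈ range (2 ^ (k + 1)), f (2 ^ (k + 1) + j) + f 1 := by
        rw [sum_Ico_one_two_pow, sum_range_succ']
        simp
    _ ≤ ∑ k ∈ range (Nat.log 2 N), C / p * ((k + 1 : ℕ) : ℝ)⁻¹ + 1 / p :=
        add_le_add (sum_le_sum fun k _ ↦ hblock p (k + 1) hp k.succ_pos) hf_one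
    _ = C / p * ∑ k ∈ Icc 1 (Nat.log 2 N), (k : ℝ)⁻¹ + 1 / p := by
        rw [← mul_sum, range_eq_Ico, sum_Ico_add' (fun k : ℕ ↦ (k : ℝ)⁻¹) 0 _ 1,
          Ico_add_one_right_eq_Icc]
    _ ≤ C / p * (3 * log (log N)) + log (log N) / p := by
        gcongr
        exact sum_inv_Icc_log_two_le hN
    _ = (1 + 3 * C) * log (log N) / p := by ring

/-! ### Integers free of a given set of primes -/

section Turan

variable {Q : Finset ℕ}

lemma mul_sum_inv_sub_card_le_sum_card_dvd (Q : Finset ℕ) (M : ℕ) :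
    M * ∑ q ∈ Q, (q : ℝ)⁻¹ - #Q ≤ ∑ m ∈ Ioc 0 M, (#{q ∈ Q | q ∣ m} : ℝ) := by
  have double_count : ∑ m ∈ Ioc 0 M, #{q ∈ Q | q ∣ m} = ∑ q ∈ Q, M / q := by
    simp_rw [card_filter, sum_comm (s := Ioc 0 M), ← card_filter, Nat.Ioc_filter_dvd_card_eq_div]
  rw [← Nat.cast_sum, double_count, Nat.cast_sum, mul_sum, card_eq_sum_ones, Nat.cast_sum,
    ← sum_sub_distrib]
  gcongr with q
  have := Nat.lt_floor_add_one ((M : ℝ) / q)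
  rw [Nat.floor_div_eq_div] at this
  rw [← div_eq_mul_inv, Nat.cast_one]
  linarith

lemma card_dvd_and_dvd_le {q r : ℕ} (hq : q.Prime) (hr : r.Prime) (M : ℕ) :
    (#{m ∈ Ioc 0 M | q ∣ m ∧ r ∣ m} : ℝ) ≤
      M * (q : ℝ)⁻¹ * (r : ℝ)⁻¹ + if q = r then M * (q : ℝ)⁻¹ else 0 := by
  rcases eq_or_ne q r with rfl | hqr
  · simp only [and_self, Nat.Ioc_filter_dvd_card_eq_div, if_true]
    have hdiv : ((M / q : ℕ) : ℝ) ≤ M * (q : ℝ)⁻¹ := by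
      simpa only [div_eq_mul_inv] using Nat.cast_div_le (α := ℝ) (m := M) (n := q)
    have : (0 : ℝ) ≤ M * (q : ℝ)⁻¹ * (q : ℝ)⁻¹ := by positivity
    linarith
  · have hcop : q.Coprime r := (Nat.coprime_primes hq hr).2 hqr
    have hdvd (m : ℕ) : q ∣ m ∧ r ∣ m ↔ q * r ∣ m :=
      ⟨fun h ↦ hcop.mul_dvd_of_dvd_of_dvd h.1 h.2,
        fun h ↦ ⟨dvd_of_mul_right_dvd h, dvd_of_mul_left_dvd h⟩⟩
    simp only [hdvd, Nat.Ioc_filter_dvd_card_eq_div, if_neg hqr, add_zero]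
    calc ((M / (q * r) : ℕ) : ℝ) ≤ M / (q * r : ℕ) := Nat.cast_div_le
      _ = M * (q : ℝ)⁻¹ * (r : ℝ)⁻¹ := by push_cast; rw [div_eq_mul_inv, mul_inv, mul_assoc]

lemma sum_card_dvd_sq_le (hQ : ∀ q ∈ Q, q.Prime) (M : ℕ) :
    ∑ m ∈ Ioc 0 M, (#{q ∈ Q | q ∣ m} : ℝ) ^ 2 ≤
      M * (∑ q ∈ Q, (q : ℝ)⁻¹) ^ 2 + M * ∑ q ∈ Q, (q : ℝ)⁻¹ := by
  have double_count : ∑ m ∈ Ioc 0 M, #{q ∈ Q | q ∣ m} ^ 2 =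
      ∑ q ∈ Q, ∑ r ∈ Q, #{m ∈ Ioc 0 M | q ∣ m ∧ r ∣ m} := by
    simp_rw [sq, card_filter, sum_mul_sum, ite_zero_mul_ite_zero, mul_one]
    rw [sum_comm]
    exact sum_congr rfl fun q _ ↦ sum_comm
  calc ∑ m ∈ Ioc 0 M, (#{q ∈ Q | q ∣ m} : ℝ) ^ 2
      = ∑ q ∈ Q, ∑ r ∈ Q, (#{m ∈ Ioc 0 M | q ∣ m ∧ r ∣ m} : ℝ) := by exact_mod_cast double_count
    _ ≤ ∑ q ∈ Q, ∑ r ∈ Q,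
        (M * (q : ℝ)⁻¹ * (r : ℝ)⁻¹ + if q = r then M * (q : ℝ)⁻¹ else 0) :=
      sum_le_sum fun q hq ↦ sum_le_sum fun r hr ↦ card_dvd_and_dvd_le (hQ q hq) (hQ r hr) M
    _ = _ := by
      simp_rw [sum_add_distrib, ← mul_sum, ← sum_mul, sum_ite_eq]
      rw [sum_congr rfl fun q hq ↦ if_pos hq, ← mul_sum]
      ring

/-- Turán's variance method: an `m` with no divisor in `Q` contributes `(∑ q⁻¹) ^ 2` to the
variance of the number of prime divisors in `Q`. -/
theorem card_forall_not_dvd_mul_sum_inv_le (hQ : ∀ q ∈ Q, q.Prime) (M : ℕ) :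
    (#{m ∈ Ioc 0 M | ∀ q ∈ Q, ¬ q ∣ m} : ℝ) * ∑ q ∈ Q, (q : ℝ)⁻¹ ≤ M + 2 * #Q := by
  have first_moment := mul_sum_inv_sub_card_le_sum_card_dvd Q M
  have second_moment := sum_card_dvd_sq_le hQ M
  set E : ℝ := ∑ q ∈ Q, (q : ℝ)⁻¹
  set w : ℕ → ℝ := fun m ↦ (#{q ∈ Q | q ∣ m} : ℝ) with hw
  have hE : 0 ≤ E := sum_nonneg fun _ _ ↦ by positivity
  rcases hE.eq_or_lt with hE0 | hE_pos
  · rw [← hE0, mul_zero]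
    positivity
  have variance_lower : (#{m ∈ Ioc 0 M | ∀ q ∈ Q, ¬ q ∣ m} : ℝ) * E ^ 2 ≤
      ∑ m ∈ Ioc 0 M, (w m - E) ^ 2 :=
    calc _ = ∑ m ∈ Ioc 0 M with ∀ q ∈ Q, ¬ q ∣ m, (w m - E) ^ 2 := by
          rw [← nsmul_eq_mul, ← sum_const]
          refine sum_congr rfl fun m hm ↦ ?_
          simp [hw, filter_false_of_mem (mem_filter.1 hm).2]
      _ ≤ _ := sum_le_sum_of_subset_of_nonneg (filter_subset _ _) fun _ _ _ ↦ sq_nonneg _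
  have variance_eq : ∑ m ∈ Ioc 0 M, (w m - E) ^ 2 =
      ∑ m ∈ Ioc 0 M, w m ^ 2 - 2 * E * ∑ m ∈ Ioc 0 M, w m + M * E ^ 2 := by
    have (m : ℕ) : (w m - E) ^ 2 = w m ^ 2 - 2 * E * w m + E ^ 2 := by ring
    simp_rw [this, sum_add_distrib, sum_sub_distrib, ← mul_sum]
    simp
  refine le_of_mul_le_mul_right ?_ hE_pos
  linarith [mul_le_mul_of_nonneg_left first_moment hE]

end Turan

/-! ### Dirichlet series of characters near `s = 1` -/

section SummationByParts

variable {E : Type*} [NormedAddCommGroup E] [NormedSpace ℝ E] {a : ℕ → E} {f : ℕ → ℝ} {B : ℝ}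

lemma norm_sum_smul_le_of_antitone (hB : ∀ n, ‖∑ i ∈ range n, a i‖ ≤ B) (hf : Antitone f)
    (hf0 : ∀ n, 0 ≤ f n) (n : ℕ) : ‖∑ i ∈ range n, f i • a i‖ ≤ B * f 0 := by
  have boundary_removed (n : ℕ) :
      ‖∑ i ∈ range n, f i • a i - f n • ∑ i ∈ range n, a i‖ ≤ B * (f 0 - f n) := by
    induction n with
    | zero => simp
    | succ n ih =>
      have step : ∑ i ∈ range (n + 1), f i • a i - f (n + 1) • ∑ i ∈ range (n + 1), a i =
          (∑ i ∈ range n, f i • a i - f n • ∑ i ∈ range n, a i) +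
            (f n - f (n + 1)) • ∑ i ∈ range (n + 1), a i := by
        simp only [sum_range_succ, sub_smul, smul_add]
        abel
      have hdiff : 0 ≤ f n - f (n + 1) := sub_nonneg.2 (hf n.le_succ)
      rw [step]
      refine (norm_add_le _ _).trans ?_
      rw [norm_smul, norm_of_nonneg hdiff]
      linarith [mul_le_mul_of_nonneg_left (hB (n + 1)) hdiff]
  have boundary : ‖f n • ∑ i ∈ range n, a i‖ ≤ f n * B := by
    rw [norm_smul, norm_of_nonneg (hf0 n)]
    exact mul_le_mul_of_nonneg_left (hB n) (hf0 n)
  have := norm_le_norm_sub_add (∑ i ∈ range n, f i • a i) (f n • ∑ i ∈ range n, a i)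
  linarith [boundary_removed n]

end SummationByParts

section RpowDifferences

variable {s σ x : ℝ}

lemma rpow_neg_sub_rpow_neg_nonneg (hsσ : s ≤ σ) (hx : 1 ≤ x) : 0 ≤ x ^ (-s) - x ^ (-σ) :=
  sub_nonneg.2 (rpow_le_rpow_of_exponent_le hx (neg_le_neg hsσ))

lemma rpow_neg_sub_rpow_neg_le (hs : 1 ≤ s) (hsσ : s ≤ σ) (hx : 1 ≤ x) :
    x ^ (-s) - x ^ (-σ) ≤ σ - s := by
  have hx0 : 0 < x := by linarith
  have hpos : 0 < x ^ (-s) := rpow_pos_of_pos hx0 _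
  have factor : x ^ (-σ) = x ^ (-s) * x ^ (-(σ - s)) := by
    rw [← rpow_add hx0]
    ring_nf
  have tangent : 1 - log x * (σ - s) ≤ x ^ (-(σ - s)) := by
    rw [rpow_def_of_pos hx0]
    linarith [add_one_le_exp (log x * -(σ - s))]
  have log_le : x ^ (-s) * log x ≤ 1 :=
    calc x ^ (-s) * log x ≤ x⁻¹ * x := by
          gcongr
          · exact log_nonneg hx
          · rw [← rpow_neg_one]
            exact rpow_le_rpow_of_exponent_le hx (neg_le_neg hs)
          · linarith [log_le_sub_one_of_pos hx0]
      _ = 1 := inv_mul_cancel₀ hx0.ne'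
  rw [factor]
  nlinarith [mul_le_mul_of_nonneg_left tangent hpos.le,
    mul_le_mul_of_nonneg_right log_le (sub_nonneg.2 hsσ)]

lemma antitoneOn_rpow_neg_sub_rpow_neg (hs : 1 ≤ s) (hsσ : s ≤ σ) :
    AntitoneOn (fun x : ℝ ↦ x ^ (-s) - x ^ (-σ)) (Set.Ici 3) := by
  have hderiv (x : ℝ) (hx : 3 ≤ x) : HasDerivAt (fun x : ℝ ↦ x ^ (-s) - x ^ (-σ))
      (-s * x ^ (-s - 1) - -σ * x ^ (-σ - 1)) x :=
    (hasDerivAt_rpow_const (.inl (by linarith))).sub (hasDerivAt_rpow_const (.inl (by linarith)))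
  refine antitoneOn_of_hasDerivWithinAt_nonpos (convex_Ici 3)
    (fun x hx ↦ (hderiv x hx).continuousAt.continuousWithinAt)
    (fun x hx ↦ (hderiv x (interior_subset hx)).hasDerivWithinAt) fun x hx ↦ ?_
  replace hx : 3 ≤ x := interior_subset hx
  have hx0 : 0 < x := by linarith
  have hlog : 1 ≤ log x := by
    rw [le_log_iff_exp_le hx0]
    linarith [exp_one_lt_d9]
  have factor : x ^ (-s - 1) = x ^ (-σ - 1) * x ^ (σ - s) := by
    rw [← rpow_add hx0]
    ring_nf
  have bernoulli : 1 + (σ - s) ≤ x ^ (σ - s) := by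
    rw [rpow_def_of_pos hx0]
    nlinarith [add_one_le_exp (log x * (σ - s))]
  have hσ : σ ≤ s * x ^ (σ - s) := by nlinarith
  rw [factor]
  nlinarith [rpow_pos_of_pos hx0 (-σ - 1)]

/-- The tangent line of the convex function `t ↦ t ^ (-x)` at `b`. -/
lemma mul_rpow_neg_mul_sub_le {a b : ℝ} (hx : 0 ≤ x) (ha : 0 < a) (hb : 0 < b) :
    x * b ^ (-(1 + x)) * (b - a) ≤ a ^ (-x) - b ^ (-x) := by
  have factor_a : a ^ (-x) = b ^ (-x) * (a / b) ^ (-x) := by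
    rw [← mul_rpow hb.le (by positivity), mul_div_cancel₀ _ hb.ne']
  have factor_b : b ^ (-(1 + x)) = b ^ (-x) * b⁻¹ := by
    rw [← rpow_neg_one, ← rpow_add hb]
    ring_nf
  have tangent : 1 - x * (a / b - 1) ≤ (a / b) ^ (-x) := by
    rw [rpow_def_of_pos (by positivity)]
    have := log_le_sub_one_of_pos (x := a / b) (by positivity)
    nlinarith [add_one_le_exp (log (a / b) * -x)]
  calc x * b ^ (-(1 + x)) * (b - a) = b ^ (-x) * (1 - x * (a / b - 1)) - b ^ (-x) := by
        rw [factor_b]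
        field_simp
        ring
    _ ≤ a ^ (-x) - b ^ (-x) := by
        rw [factor_a]
        gcongr

lemma mul_sum_rpow_neg_tail_le (hx : 0 ≤ x) (n : ℕ) :
    x * ∑ i ∈ range n, ((i + 1 + 1 : ℕ) : ℝ) ^ (-(1 + x)) ≤ 1 - ((n + 1 : ℕ) : ℝ) ^ (-x) := by
  induction n with
  | zero => simp
  | succ n ih =>
    have := mul_rpow_neg_mul_sub_le (a := (n + 1 : ℕ)) (b := (n + 1 + 1 : ℕ)) hx
      (by positivity) (by positivity)
    rw [sum_range_succ, mul_add]
    push_cast at *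
    linarith

lemma sum_rpow_neg_le (hx : 0 < x) (n : ℕ) :
    ∑ i ∈ range n, ((i + 1 : ℕ) : ℝ) ^ (-(1 + x)) ≤ 1 + x⁻¹ := by
  have htail := mul_sum_rpow_neg_tail_le hx.le n
  have : (0 : ℝ) ≤ ((n + 1 : ℕ) : ℝ) ^ (-x) := by positivity
  calc ∑ i ∈ range n, ((i + 1 : ℕ) : ℝ) ^ (-(1 + x))
      ≤ ∑ i ∈ range (n + 1), ((i + 1 : ℕ) : ℝ) ^ (-(1 + x)) :=
        sum_le_sum_of_subset_of_nonneg (range_mono n.le_succ) fun _ _ _ ↦ by positivity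
    _ = ∑ i ∈ range n, ((i + 1 + 1 : ℕ) : ℝ) ^ (-(1 + x)) + 1 := by simp [sum_range_succ']
    _ ≤ 1 + x⁻¹ := by
        rw [add_comm, add_le_add_iff_left, ← one_div, le_div_iff₀' hx]
        linarith

lemma one_sub_rpow_neg_le_mul_sum (hx : 0 ≤ x) (n : ℕ) :
    1 - ((n + 1 : ℕ) : ℝ) ^ (-x) ≤ x * ∑ i ∈ range n, ((i + 1 : ℕ) : ℝ) ^ (-(1 + x)) := by
  induction n with
  | zero => simp
  | succ n ih =>
    have := mul_rpow_neg_mul_sub_le (a := (n + 1 + 1 : ℕ)) (b := (n + 1 : ℕ)) hx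
      (by positivity) (by positivity)
    rw [sum_range_succ, mul_add]
    push_cast at *
    linarith

end RpowDifferences

section DirichletPartialSum

/-- The partial sum `∑ k ≤ n, χ(k) k⁻ˢ` of the Dirichlet `L`-series of `χ` at a real point `s`,
indexed by `i = k - 1`. -/
noncomputable def dirichletPartialSum {p : ℕ} (χ : DirichletCharacter ℂ p) (s : ℝ) (n : ℕ) : ℂ :=
  ∑ i ∈ range n, ((i + 1 : ℕ) : ℝ) ^ (-s) • χ (i + 1 : ℕ)

variable {p : ℕ} {χ : DirichletCharacter ℂ p} {s σ x : ℝ}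

lemma dirichletPartialSum_tendsto (χ : DirichletCharacter ℂ p) (hs : 1 < s) :
    Tendsto (dirichletPartialSum χ s) atTop (𝓝 (LSeries (fun n ↦ χ n) s)) := by
  have hsum : LSeriesSummable (fun n : ℕ ↦ χ n) s :=
    DirichletCharacter.LSeriesSummable_of_one_lt_re χ (by simpa using hs)
  refine (hsum.hasSum.tendsto_sum_nat.comp (tendsto_add_atTop_nat 1)).congr fun n ↦ ?_
  rw [Function.comp_apply, sum_range_succ', LSeries.term_zero, add_zero, dirichletPartialSum]
  refine sum_congr rfl fun i _ ↦ ?_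
  rw [LSeries.term_of_ne_zero i.succ_ne_zero, Complex.real_smul, div_eq_mul_inv, mul_comm,
    Complex.ofReal_cpow (by positivity), Complex.ofReal_neg, Complex.cpow_neg,
    Complex.ofReal_natCast]

section NonPrincipal

variable [NeZero p]

lemma sum_period_eq_zero (hχ : χ ≠ 1) (m : ℕ) : ∑ i ∈ range p, χ (m + i : ℕ) = 0 := by
  have reindex : ∑ i ∈ range p, χ (m + i : ℕ) = ∑ a : ZMod p, χ (m + a) := by
    refine sum_bij (fun i _ ↦ (i : ZMod p)) (by simp) (fun i hi j hj hij ↦ ?_)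
      (fun a _ ↦ ⟨a.val, mem_range.2 a.val_lt, by simp⟩) (by simp)
    rw [ZMod.natCast_eq_natCast_iff'] at hij
    rwa [Nat.mod_eq_of_lt (mem_range.1 hi), Nat.mod_eq_of_lt (mem_range.1 hj)] at hij
  rw [reindex, ← MulChar.sum_eq_zero_of_ne_one hχ]
  exact Equiv.sum_comp (Equiv.addLeft (m : ZMod p)) fun a ↦ χ a

lemma norm_sum_range_le_modulus (hχ : χ ≠ 1) (m n : ℕ) :
    ‖∑ i ∈ range n, χ (m + i : ℕ)‖ ≤ p := by
  induction n using Nat.strong_induction_on generalizing m with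
  | _ n ih =>
    rcases lt_or_ge n p with hn | hn
    · calc ‖∑ i ∈ range n, χ (m + i : ℕ)‖ ≤ ∑ _i ∈ range n, (1 : ℝ) :=
          norm_sum_le_of_le _ fun i _ ↦ χ.norm_le_one _
        _ = n := by simp
        _ ≤ p := by exact_mod_cast hn.le
    · obtain ⟨k, rfl⟩ := Nat.exists_eq_add_of_le hn
      rw [sum_range_add, sum_period_eq_zero hχ, zero_add]
      simpa only [add_assoc] using ih k (by have := NeZero.pos p; lia) (m + p)

lemma norm_sum_antitone_smul_le (hχ : χ ≠ 1) {f : ℕ → ℝ} (hf : Antitone f) (hf0 : ∀ n, 0 ≤ f n)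
    (m n : ℕ) : ‖∑ i ∈ range n, f i • χ (m + i : ℕ)‖ ≤ p * f 0 :=
  norm_sum_smul_le_of_antitone (norm_sum_range_le_modulus hχ m) hf hf0 n

lemma norm_dirichletPartialSum_le (hχ : χ ≠ 1) (hs : 0 ≤ s) (n : ℕ) :
    ‖dirichletPartialSum χ s n‖ ≤ p := by
  have hanti : Antitone fun i : ℕ ↦ ((i + 1 : ℕ) : ℝ) ^ (-s) := fun i j hij ↦
    rpow_le_rpow_of_nonpos (by positivity) (by gcongr) (neg_nonpos.2 hs)
  simpa [dirichletPartialSum, add_comm] using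
    norm_sum_antitone_smul_le hχ hanti (fun n ↦ by positivity) 1 n

lemma norm_dirichletPartialSum_sub_le (hχ : χ ≠ 1) (hs : 1 ≤ s) (hsσ : s ≤ σ) (n : ℕ) :
    ‖dirichletPartialSum χ s (n + 2) - dirichletPartialSum χ σ (n + 2)‖ ≤ (σ - s) * (p + 2) := by
  set f : ℕ → ℝ := fun i ↦ ((i + 1 : ℕ) : ℝ) ^ (-s) - ((i + 1 : ℕ) : ℝ) ^ (-σ) with hf
  have hone (i : ℕ) : (1 : ℝ) ≤ (i + 1 : ℕ) := by exact_mod_cast i.succ_pos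
  have hf_nonneg (i : ℕ) : 0 ≤ f i := rpow_neg_sub_rpow_neg_nonneg hsσ (hone i)
  have hf_le (i : ℕ) : f i ≤ σ - s := rpow_neg_sub_rpow_neg_le hs hsσ (hone i)
  have hf_anti : Antitone fun i ↦ f (i + 2) := fun i j hij ↦ by
    refine antitoneOn_rpow_neg_sub_rpow_neg hs hsσ ?_ ?_ (by gcongr)
    all_goals simp only [Set.mem_Ici]; push_cast; linarith [(i.cast_nonneg : (0 : ℝ) ≤ i),
      (j.cast_nonneg : (0 : ℝ) ≤ j)]
  have tail : ‖∑ i ∈ range n, f (i + 2) • χ (i + 2 + 1 : ℕ)‖ ≤ p * (σ - s) :=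
    calc ‖∑ i ∈ range n, f (i + 2) • χ (i + 2 + 1 : ℕ)‖
        = ‖∑ i ∈ range n, f (i + 2) • χ (3 + i : ℕ)‖ := by simp only [add_comm, add_left_comm]
      _ ≤ p * f 2 := norm_sum_antitone_smul_le hχ hf_anti (fun i ↦ hf_nonneg _) 3 n
      _ ≤ p * (σ - s) := by gcongr; exact hf_le 2
  have head (i : ℕ) : ‖f i • χ (i + 1 : ℕ)‖ ≤ σ - s := by
    rw [norm_smul, norm_of_nonneg (hf_nonneg i)]
    exact (mul_le_of_le_one_right (hf_nonneg i) (χ.norm_le_one _)).trans (hf_le i)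
  have split : dirichletPartialSum χ s (n + 2) - dirichletPartialSum χ σ (n + 2) =
      ∑ i ∈ range n, f (i + 2) • χ (i + 2 + 1 : ℕ) + f 1 • χ (1 + 1 : ℕ) + f 0 • χ (0 + 1 : ℕ) := by
    simp_rw [dirichletPartialSum, ← sum_sub_distrib, ← sub_smul, sum_range_succ', hf]
  rw [split]
  linarith [norm_add₃_le (a := ∑ i ∈ range n, f (i + 2) • χ (i + 2 + 1 : ℕ))
    (b := f 1 • χ (1 + 1 : ℕ)) (c := f 0 • χ (0 + 1 : ℕ)), head 0, head 1]

lemma norm_LSeries_le_modulus (hχ : χ ≠ 1) (hs : 1 < s) : ‖LSeries (fun n ↦ χ n) s‖ ≤ p :=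
  le_of_tendsto (dirichletPartialSum_tendsto χ hs).norm <|
    .of_forall fun n ↦ norm_dirichletPartialSum_le hχ (by linarith) n

lemma norm_LSeries_sub_le (hχ : χ ≠ 1) (hs : 1 < s) (hsσ : s ≤ σ) :
    ‖LSeries (fun n ↦ χ n) s - LSeries (fun n ↦ χ n) σ‖ ≤ (σ - s) * (p + 2) := by
  have hlim := ((dirichletPartialSum_tendsto χ hs).sub
    (dirichletPartialSum_tendsto χ (hs.trans_le hsσ))).norm.comp (tendsto_add_atTop_nat 2)
  exact le_of_tendsto hlim <| .of_forall fun n ↦ norm_dirichletPartialSum_sub_le hχ hs.le hsσ n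

end NonPrincipal

lemma norm_LSeries_le_one_add_inv (χ : DirichletCharacter ℂ p) (hx : 0 < x) :
    ‖LSeries (fun n ↦ χ n) (1 + x : ℝ)‖ ≤ 1 + x⁻¹ := by
  refine le_of_tendsto (dirichletPartialSum_tendsto χ (lt_add_of_pos_right 1 hx)).norm <|
    .of_forall fun n ↦ ?_
  refine (norm_sum_le_of_le _ fun i _ ↦ ?_).trans (sum_rpow_neg_le hx n)
  rw [norm_smul, norm_of_nonneg (by positivity)]
  exact mul_le_of_le_one_right (by positivity) (χ.norm_le_one _)

lemma inv_le_norm_riemannZeta (hx : 0 < x) : x⁻¹ ≤ ‖riemannZeta (1 + x : ℝ)‖ := by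
  have hζ := dirichletPartialSum_tendsto (1 : DirichletCharacter ℂ 1) (lt_add_of_pos_right 1 hx)
  rw [← DirichletCharacter.LFunction_eq_LSeries _ (by simpa using hx),
    DirichletCharacter.LFunction_modOne_eq] at hζ
  have hlim : Tendsto (fun n : ℕ ↦ x⁻¹ * (1 - ((n + 1 : ℕ) : ℝ) ^ (-x))) atTop (𝓝 x⁻¹) := by
    have hpow := (tendsto_rpow_neg_atTop hx).comp
      ((tendsto_natCast_atTop_atTop (R := ℝ)).comp (tendsto_add_atTop_nat 1))
    simpa using (hpow.const_sub 1).const_mul x⁻¹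
  refine le_of_tendsto_of_tendsto hlim hζ.norm <| .of_forall fun n ↦ ?_
  have hreal : dirichletPartialSum (1 : DirichletCharacter ℂ 1) (1 + x) n =
      ((∑ i ∈ range n, ((i + 1 : ℕ) : ℝ) ^ (-(1 + x)) : ℝ) : ℂ) := by
    rw [dirichletPartialSum, Complex.ofReal_sum]
    refine sum_congr rfl fun i _ ↦ ?_
    rw [MulChar.one_apply (isUnit_of_subsingleton _), Complex.real_smul, mul_one]
  dsimp only
  rw [hreal, Complex.norm_real, norm_of_nonneg (by positivity), inv_mul_le_iff₀ hx]
  exact one_sub_rpow_neg_le_mul_sum hx.le n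

lemma inv_div_two_le_norm_LSeries_one (hp : p.Prime) (hx : 0 < x) :
    x⁻¹ / 2 ≤ ‖LSeries (fun n ↦ (1 : DirichletCharacter ℂ p) n) (1 + x : ℝ)‖ := by
  have : NeZero p := ⟨hp.ne_zero⟩
  have hne : ((1 + x : ℝ) : ℂ) ≠ 1 := by
    rw [Ne, Complex.ofReal_eq_one]
    linarith
  have euler := DirichletCharacter.LFunctionTrivChar_eq_mul_riemannZeta (N := p) hne
  rw [DirichletCharacter.LFunctionTrivChar,
    DirichletCharacter.LFunction_eq_LSeries _ (by simpa using hx), hp.primeFactors,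
    prod_singleton] at euler
  have hp2 : (2 : ℝ) ≤ p := by exact_mod_cast hp.two_le
  have hfactor : ‖(p : ℂ) ^ (-((1 + x : ℝ) : ℂ))‖ ≤ 2⁻¹ := by
    rw [Complex.norm_natCast_cpow_of_pos hp.pos, Complex.neg_re, Complex.ofReal_re]
    calc (p : ℝ) ^ (-(1 + x)) ≤ (p : ℝ) ^ (-1 : ℝ) :=
          rpow_le_rpow_of_exponent_le (by linarith) (by linarith)
      _ = (p : ℝ)⁻¹ := rpow_neg_one _
      _ ≤ 2⁻¹ := by gcongr
  have htriangle := norm_sub_norm_le (1 : ℂ) ((p : ℂ) ^ (-((1 + x : ℝ) : ℂ)))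
  rw [norm_one] at htriangle
  rw [euler, norm_mul, mul_comm, div_eq_mul_inv]
  gcongr
  · exact inv_le_norm_riemannZeta hx
  · linarith

end DirichletPartialSum

section LambertSeries

variable {t : ℝ}

/-- The difference between `1 / (d (1 - t))`, the leading behaviour as `t → 1`, and the Lambert
factor `t ^ d / (1 - t ^ d)`. It decreases in `d`, which lets one compare a Lambert series with
character coefficients to the partial sums of `L(1, χ)` by summation by parts. -/
noncomputable def lambertDefect (t : ℝ) (d : ℕ) : ℝ := (d : ℝ)⁻¹ / (1 - t) - t ^ d / (1 - t ^ d)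

lemma lambertDefect_one (ht : t < 1) : lambertDefect t 1 = 1 := by
  have : 1 - t ≠ 0 := by linarith
  simp only [lambertDefect, Nat.cast_one, inv_one, pow_one]
  field_simp

lemma mul_sqrt_pow_le_geom_sum (ht : 0 ≤ t) (d : ℕ) :
    (d : ℝ) * √t ^ (d - 1) ≤ ∑ i ∈ range d, t ^ i := by
  have pair_up : 2 * ∑ i ∈ range d, t ^ i = ∑ i ∈ range d, (t ^ i + t ^ (d - 1 - i)) := by
    rw [sum_add_distrib, sum_range_reflect (fun i ↦ t ^ i) d]
    ring
  have sq_sqrt_pow (i : ℕ) : (√t ^ i) ^ 2 = t ^ i := by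
    rw [← pow_mul, mul_comm, pow_mul, sq_sqrt ht]
  have am_gm : ∑ _i ∈ range d, 2 * √t ^ (d - 1) ≤ ∑ i ∈ range d, (t ^ i + t ^ (d - 1 - i)) := by
    refine sum_le_sum fun i hi ↦ ?_
    have hexp : d - 1 = i + (d - 1 - i) := by have := mem_range.1 hi; lia
    calc 2 * √t ^ (d - 1) = 2 * √t ^ i * √t ^ (d - 1 - i) := by rw [mul_assoc, ← pow_add, ← hexp]
      _ ≤ (√t ^ i) ^ 2 + (√t ^ (d - 1 - i)) ^ 2 := two_mul_le_add_sq _ _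
      _ = t ^ i + t ^ (d - 1 - i) := by rw [sq_sqrt_pow, sq_sqrt_pow]
  rw [sum_const, card_range, nsmul_eq_mul] at am_gm
  linarith

lemma mul_succ_mul_pow_le_geom_sum_mul (ht : 0 ≤ t) (ht1 : t ≤ 1) (d : ℕ) :
    (d : ℝ) * (d + 1) * t ^ d ≤ (∑ i ∈ range d, t ^ i) * ∑ i ∈ range (d + 1), t ^ i := by
  have hpow : √t ^ d ≤ √t ^ (d - 1) :=
    pow_le_pow_of_le_one (sqrt_nonneg t) (sqrt_le_one.2 ht1) (Nat.sub_le d 1)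
  have hfirst : (d : ℝ) * √t ^ d ≤ ∑ i ∈ range d, t ^ i :=
    (mul_le_mul_of_nonneg_left hpow d.cast_nonneg).trans (mul_sqrt_pow_le_geom_sum ht d)
  have hsecond : ((d : ℝ) + 1) * √t ^ d ≤ ∑ i ∈ range (d + 1), t ^ i := by
    simpa using mul_sqrt_pow_le_geom_sum ht (d + 1)
  calc (d : ℝ) * (d + 1) * t ^ d = (d * √t ^ d) * ((d + 1) * √t ^ d) := by
        nth_rw 1 [← mul_self_sqrt ht]
        rw [mul_pow]
        ring
    _ ≤ _ := by gcongr

lemma geom_sum_pos (ht : 0 < t) {d : ℕ} (hd : d ≠ 0) : 0 < ∑ i ∈ range d, t ^ i :=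
  sum_pos (fun i _ ↦ pow_pos ht i) (nonempty_range_iff.2 hd)

lemma lambertDefect_succ_le (ht : 0 < t) (ht1 : t < 1) {d : ℕ} (hd : d ≠ 0) :
    lambertDefect t (d + 1) ≤ lambertDefect t d := by
  have : (0 : ℝ) < d := by positivity
  have hsub : 0 < 1 - t := by linarith
  have hS := geom_sum_pos ht hd
  have hS' := geom_sum_pos ht d.succ_ne_zero
  have hprod := mul_succ_mul_pow_le_geom_sum_mul ht.le ht1.le d
  have hgeom (k : ℕ) : 1 - t ^ k = (1 - t) * ∑ i ∈ range k, t ^ i := by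
    rw [mul_comm, geom_sum_mul_neg]
  have hrec : ∑ i ∈ range (d + 1), t ^ i - t * ∑ i ∈ range d, t ^ i = 1 := by
    rw [sum_range_succ]
    linarith [hgeom d]
  rw [lambertDefect, lambertDefect, hgeom, hgeom]
  set S := ∑ i ∈ range d, t ^ i
  set S' := ∑ i ∈ range (d + 1), t ^ i
  have lambert_diff : t ^ d / ((1 - t) * S) - t ^ (d + 1) / ((1 - t) * S') =
      t ^ d / (S * S') / (1 - t) := by
    field_simp
    linear_combination t ^ d * hrec
  have inv_diff : (d : ℝ)⁻¹ / (1 - t) - ((d + 1 : ℕ) : ℝ)⁻¹ / (1 - t) =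
      1 / (d * (d + 1)) / (1 - t) := by
    push_cast
    field_simp
    ring
  have : t ^ d / (S * S') / (1 - t) ≤ 1 / (d * (d + 1)) / (1 - t) := by
    gcongr ?_ / _
    rw [div_le_div_iff₀ (by positivity) (by positivity)]
    linarith
  linarith

lemma lambertDefect_nonneg (ht : 0 < t) (ht1 : t < 1) {d : ℕ} (hd : d ≠ 0) :
    0 ≤ lambertDefect t d := by
  have : (0 : ℝ) < d := by positivity
  have : 0 < 1 - t := by linarith
  have := geom_sum_pos ht hd
  have hle : (d : ℝ) * t ^ d ≤ ∑ i ∈ range d, t ^ i :=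
    calc (d : ℝ) * t ^ d = ∑ _i ∈ range d, t ^ d := by simp
      _ ≤ _ := sum_le_sum fun i hi ↦ pow_le_pow_of_le_one ht.le ht1.le (mem_range.1 hi).le
  rw [lambertDefect, ← geom_sum_mul_neg, mul_comm (∑ i ∈ range d, t ^ i), sub_nonneg,
    inv_eq_one_div, div_div, div_le_div_iff₀ (by positivity) (by positivity)]
  nlinarith

lemma sum_Ioc_dvd_eq_sum_range {M : Type*} [AddCommMonoid M] (f : ℕ → M) {d : ℕ} (hd : 0 < d)
    (D : ℕ) : ∑ n ∈ Ioc 0 D with d ∣ n, f n = ∑ k ∈ range (D / d), f (d * (k + 1)) := by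
  symm
  refine sum_bij (fun k _ ↦ d * (k + 1)) (fun k hk ↦ ?_) (fun i _ j _ hij ↦ ?_) (fun n hn ↦ ?_)
    fun _ _ ↦ rfl
  · have := (Nat.mul_le_mul_left d (mem_range.1 hk)).trans (Nat.mul_div_le D d)
    exact mem_filter.2 ⟨mem_Ioc.2 ⟨by positivity, this⟩, dvd_mul_right _ _⟩
  · exact Nat.succ_injective (Nat.eq_of_mul_eq_mul_left hd hij)
  · obtain ⟨hIoc, k, rfl⟩ := mem_filter.1 hn
    obtain ⟨hpos, hle⟩ := mem_Ioc.1 hIoc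
    obtain ⟨j, rfl⟩ := Nat.exists_eq_succ_of_ne_zero (Nat.pos_of_mul_pos_left hpos).ne'
    exact ⟨j, mem_range.2 ((Nat.le_div_iff_mul_le hd).2 (mul_comm d _ ▸ hle)), rfl⟩

lemma abs_lambert_sub_sum_Ioc_dvd_le (ht : 0 ≤ t) (ht1 : t < 1) {d : ℕ} (hd : 0 < d) (D : ℕ) :
    |t ^ d / (1 - t ^ d) - ∑ n ∈ Ioc 0 D with d ∣ n, t ^ n| ≤ t ^ D / (1 - t) := by
  have htd : t ^ d < 1 := pow_lt_one₀ ht ht1 hd.ne'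
  have hsub : 1 - t ^ d ≠ 0 := by linarith
  have truncated : ∑ n ∈ Ioc 0 D with d ∣ n, t ^ n =
      t ^ d * ((1 - (t ^ d) ^ (D / d)) / (1 - t ^ d)) := by
    rw [sum_Ioc_dvd_eq_sum_range _ hd, ← geom_sum_mul_neg, mul_div_cancel_right₀ _ hsub, mul_sum]
    exact sum_congr rfl fun k _ ↦ by rw [pow_mul, pow_succ']
  have tail : t ^ d / (1 - t ^ d) - t ^ d * ((1 - (t ^ d) ^ (D / d)) / (1 - t ^ d)) =
      t ^ (d * (D / d + 1)) / (1 - t ^ d) := by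
    rw [pow_mul, pow_succ]
    field_simp
    ring
  rw [truncated, tail, abs_of_nonneg (div_nonneg (by positivity) (by linarith))]
  have hexp : D ≤ d * (D / d + 1) := (Nat.lt_mul_div_succ D hd).le
  have htd_le : t ^ d ≤ t := pow_le_of_le_one ht ht1.le hd.ne'
  exact div_le_div₀ (by positivity) (pow_le_pow_of_le_one ht ht1.le hexp) (by linarith)
    (by linarith)

end LambertSeries

section QuadraticCharacter

variable {p : ℕ} {χ : DirichletCharacter ℂ p} {t s : ℝ}

lemma zetaMul_eq_sum_divisors (χ : DirichletCharacter ℂ p) (n : ℕ) :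
    χ.zetaMul n = ∑ d ∈ n.divisors, χ d := by
  rw [DirichletCharacter.zetaMul, ArithmeticFunction.coe_zeta_mul_apply]
  exact sum_congr rfl fun d hd ↦ if_neg (Nat.pos_of_mem_divisors hd).ne'

open scoped ComplexOrder in
lemma one_le_zetaMul_sq (hχ : χ ^ 2 = 1) {m : ℕ} (hm : m ≠ 0) : 1 ≤ χ.zetaMul (m ^ 2) := by
  rw [χ.isMultiplicative_zetaMul.multiplicative_factorization _ (pow_ne_zero 2 hm)]
  refine prod_induction _ (fun z : ℂ ↦ 1 ≤ z) (fun a b ↦ one_le_mul_of_one_le_of_one_le) le_rfl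
    fun q hq ↦ ?_
  have hq : q.Prime := Nat.prime_of_mem_primeFactors hq
  have geom (k : ℕ) : χ.zetaMul (q ^ k) = ∑ i ∈ range (k + 1), χ q ^ i := by
    simp [zetaMul_eq_sum_divisors, Nat.sum_divisors_prime_pow hq]
  rw [Nat.factorization_pow, Finsupp.smul_apply, smul_eq_mul]
  change 1 ≤ χ.zetaMul (q ^ (2 * m.factorization q))
  rw [geom]
  rcases MulChar.isQuadratic_iff_sq_eq_one.mpr hχ q with h | h | h
  · rw [h, sum_range_succ']
    simp
  · have : (0 : ℂ) ≤ 2 * m.factorization q := by positivity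
    simpa [h] using this
  · rw [h, neg_one_geom_sum, if_neg (by simp)]

lemma one_le_re_zetaMul_sq (hχ : χ ^ 2 = 1) {m : ℕ} (hm : m ≠ 0) :
    1 ≤ (χ.zetaMul (m ^ 2)).re := by
  simpa using (Complex.le_def.1 (one_le_zetaMul_sq hχ hm)).1

lemma re_zetaMul_nonneg (hχ : χ ^ 2 = 1) (n : ℕ) : 0 ≤ (χ.zetaMul n).re := by
  simpa using (Complex.le_def.1 (DirichletCharacter.zetaMul_nonneg hχ n)).1

lemma sum_re_zetaMul_mul_pow (χ : DirichletCharacter ℂ p) (t : ℝ) (D : ℕ) :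
    ∑ n ∈ Ioc 0 D, (χ.zetaMul n).re * t ^ n =
      ∑ d ∈ Ioc 0 D, (χ d).re * ∑ n ∈ Ioc 0 D with d ∣ n, t ^ n := by
  simp_rw [zetaMul_eq_sum_divisors, Complex.re_sum, sum_mul, mul_sum]
  refine sum_comm' fun n d ↦ ?_
  simp only [mem_Ioc, Nat.mem_divisors, mem_filter]
  constructor
  · rintro ⟨⟨hn, hnD⟩, hdn, -⟩
    exact ⟨⟨⟨hn, hnD⟩, hdn⟩, Nat.pos_of_dvd_of_pos hdn hn, (Nat.le_of_dvd hn hdn).trans hnD⟩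
  · rintro ⟨⟨⟨hn, hnD⟩, hdn⟩, -⟩
    exact ⟨⟨hn, hnD⟩, hdn, hn.ne'⟩

lemma sum_pow_sq_le_sum_re_zetaMul (hχ : χ ^ 2 = 1) (ht : 0 ≤ t) {M D : ℕ} (hD : M ^ 2 ≤ D) :
    ∑ m ∈ Ioc 0 M, t ^ m ^ 2 ≤ ∑ n ∈ Ioc 0 D, (χ.zetaMul n).re * t ^ n :=
  calc ∑ m ∈ Ioc 0 M, t ^ m ^ 2 ≤ ∑ m ∈ Ioc 0 M, (χ.zetaMul (m ^ 2)).re * t ^ m ^ 2 :=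
        sum_le_sum fun m hm ↦ le_mul_of_one_le_left (by positivity)
          (one_le_re_zetaMul_sq hχ (mem_Ioc.1 hm).1.ne')
    _ = ∑ n ∈ (Ioc 0 M).image (· ^ 2), (χ.zetaMul n).re * t ^ n := by
        rw [sum_image (Nat.pow_left_injective two_ne_zero).injOn]
    _ ≤ ∑ n ∈ Ioc 0 D, (χ.zetaMul n).re * t ^ n := by
        refine sum_le_sum_of_subset_of_nonneg (image_subset_iff.2 fun m hm ↦ ?_)
          fun n _ _ ↦ mul_nonneg (re_zetaMul_nonneg hχ n) (by positivity)
        obtain ⟨hm0, hmM⟩ := mem_Ioc.1 hm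
        exact mem_Ioc.2 ⟨by positivity, (Nat.pow_le_pow_left hmM 2).trans hD⟩

lemma sum_pow_sq_sub_le_sum_lambert (hχ : χ ^ 2 = 1) (ht : 0 ≤ t) (ht1 : t < 1) {M D : ℕ}
    (hD : M ^ 2 ≤ D) :
    ∑ m ∈ Ioc 0 M, t ^ m ^ 2 - D * (t ^ D / (1 - t)) ≤
      ∑ d ∈ Ioc 0 D, (χ d).re * (t ^ d / (1 - t ^ d)) := by
  have hsq := sum_pow_sq_le_sum_re_zetaMul hχ ht hD
  rw [sum_re_zetaMul_mul_pow] at hsq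
  have truncation : ∑ d ∈ Ioc 0 D, (χ d).re * ∑ n ∈ Ioc 0 D with d ∣ n, t ^ n ≤
      ∑ d ∈ Ioc 0 D, ((χ d).re * (t ^ d / (1 - t ^ d)) + t ^ D / (1 - t)) := by
    refine sum_le_sum fun d hd ↦ ?_
    have hχd : |(χ d).re| ≤ 1 := (Complex.abs_re_le_norm _).trans (χ.norm_le_one _)
    have herr := mul_le_mul hχd (abs_lambert_sub_sum_Ioc_dvd_le ht ht1 (mem_Ioc.1 hd).1 D)
      (abs_nonneg _) zero_le_one
    rw [← abs_mul, mul_sub, one_mul] at herr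
    linarith [(abs_le.1 herr).1]
  rw [sum_add_distrib, sum_const, Nat.card_Ioc, nsmul_eq_mul, Nat.sub_zero] at truncation
  linarith

lemma sum_pow_sq_sub_le_re_dirichletPartialSum [NeZero p] (hχ1 : χ ≠ 1) (hχ : χ ^ 2 = 1)
    (ht : 0 < t) (ht1 : t < 1) {M D : ℕ} (hD : M ^ 2 ≤ D) :
    ∑ m ∈ Ioc 0 M, t ^ m ^ 2 - D * (t ^ D / (1 - t)) - p ≤
      (dirichletPartialSum χ 1 D).re / (1 - t) := by
  have hlambert := sum_pow_sq_sub_le_sum_lambert hχ ht.le ht1 hD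
  have hdefect : ‖∑ i ∈ range D, lambertDefect t (i + 1) • χ (1 + i : ℕ)‖ ≤ p := by
    simpa [lambertDefect_one ht1] using norm_sum_antitone_smul_le hχ1
      (f := fun n ↦ lambertDefect t (n + 1))
      (antitone_nat_of_succ_le fun n ↦ lambertDefect_succ_le ht ht1 n.succ_ne_zero)
      (fun n ↦ lambertDefect_nonneg ht ht1 n.succ_ne_zero) 1 D
  have split : (∑ i ∈ range D, lambertDefect t (i + 1) • χ (1 + i : ℕ)).re =
      (dirichletPartialSum χ 1 D).re / (1 - t) -
        ∑ d ∈ Ioc 0 D, (χ d).re * (t ^ d / (1 - t ^ d)) := by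
    rw [← Ico_add_one_add_one_eq_Ioc, sum_Ico_eq_sum_range, dirichletPartialSum, Complex.re_sum,
      Complex.re_sum, sum_div, zero_add, Nat.add_sub_cancel, ← sum_sub_distrib]
    refine sum_congr rfl fun i _ ↦ ?_
    rw [Complex.smul_re, Complex.smul_re, rpow_neg_one, lambertDefect, add_comm 1 i, smul_eq_mul,
      smul_eq_mul]
    ring
  linarith [(abs_le.1 ((Complex.abs_re_le_norm _).trans hdefect)).1]

lemma half_le_sum_pow_sq {M : ℕ} (hM : 1 ≤ M) (ht : t = 1 - 1 / (2 * (M : ℝ) ^ 2)) :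
    (M : ℝ) / 2 ≤ ∑ m ∈ Ioc 0 M, t ^ m ^ 2 := by
  have hM1 : (1 : ℝ) ≤ M := by exact_mod_cast hM
  have hgap : 1 / (2 * (M : ℝ) ^ 2) ≤ 1 / 2 := by gcongr; nlinarith
  have hgap0 : 0 ≤ 1 / (2 * (M : ℝ) ^ 2) := by positivity
  have bernoulli : 1 / 2 ≤ t ^ M ^ 2 := by
    refine le_trans (le_of_eq ?_) (one_add_mul_sub_le_pow (by linarith) (M ^ 2))
    rw [ht]
    push_cast
    field_simp
    norm_num
  calc (M : ℝ) / 2 = ∑ _m ∈ Ioc 0 M, (1 / 2 : ℝ) := by simp; ring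
    _ ≤ _ := sum_le_sum fun m hm ↦ bernoulli.trans <| pow_le_pow_of_le_one (by linarith)
        (by linarith) (Nat.pow_le_pow_left (mem_Ioc.1 hm).2 2)

lemma two_le_modulus_of_ne_one [NeZero p] (hχ : χ ≠ 1) : 2 ≤ p := by
  have : p ≠ 1 := fun h ↦ hχ (DirichletCharacter.level_one' χ h)
  have := NeZero.ne p
  lia

/-- The Lambert series is compared at `t = 1 - 1 / (2 M ^ 2)`, where the squares `m ^ 2 ≤ M ^ 2`
contribute at least `M / 2`; the choice `M = 2 p + 3` beats the error term `p`. -/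
lemma eventually_le_re_dirichletPartialSum_one [NeZero p] (hχ1 : χ ≠ 1) (hχ : χ ^ 2 = 1) :
    ∀ᶠ D in atTop, 1 / (32 * (p : ℝ) ^ 2) ≤ (dirichletPartialSum χ 1 D).re := by
  have hp2 : (2 : ℝ) ≤ p := by exact_mod_cast two_le_modulus_of_ne_one hχ1
  obtain ⟨M, hM⟩ : ∃ M : ℕ, M = 2 * p + 3 := ⟨_, rfl⟩
  have hM' : (M : ℝ) = 2 * p + 3 := by rw [hM]; push_cast; ring
  obtain ⟨t, ht⟩ : ∃ t : ℝ, t = 1 - 1 / (2 * (M : ℝ) ^ 2) := ⟨_, rfl⟩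
  have hgap0 : 0 < 1 / (2 * (M : ℝ) ^ 2) := by rw [hM']; positivity
  have hgap1 : 1 / (2 * (M : ℝ) ^ 2) ≤ 1 / 2 := by gcongr; nlinarith
  have ht0 : 0 < t := by linarith
  have ht1 : t < 1 := by linarith
  have truncation : ∀ᶠ D : ℕ in atTop, D * (t ^ D / (1 - t)) < 1 / 2 := by
    have hlim := (tendsto_self_mul_const_pow_of_lt_one ht0.le ht1).div_const (1 - t)
    simp only [mul_div_assoc, zero_div] at hlim
    exact hlim.eventually_lt_const (by norm_num)
  filter_upwards [truncation, eventually_ge_atTop (M ^ 2)] with D hD hMD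
  have hlow := sum_pow_sq_sub_le_re_dirichletPartialSum hχ1 hχ ht0 ht1 hMD
  have hsum := half_le_sum_pow_sq (by lia) ht
  have hone : 1 ≤ (dirichletPartialSum χ 1 D).re / (1 - t) := by linarith
  rw [le_div_iff₀ (by linarith), one_mul, ht, sub_sub_cancel] at hone
  refine le_trans (one_div_le_one_div_of_le (by rw [hM']; positivity) ?_) hone
  nlinarith

lemma mul_le_one_div_pow_four {y : ℝ} (hp : 2 ≤ (p : ℝ)) (hy : y ≤ 1 / (2048 * (p : ℝ) ^ 5)) :
    y * (p + 2) ≤ 1 / (1024 * (p : ℝ) ^ 4) :=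
  calc y * (p + 2) ≤ 1 / (2048 * (p : ℝ) ^ 5) * (2 * p) := by gcongr; linarith
    _ = 1 / (1024 * (p : ℝ) ^ 4) := by field_simp; norm_num

lemma le_norm_LSeries_of_sq_eq_one [NeZero p] (hχ1 : χ ≠ 1) (hχ : χ ^ 2 = 1) (hs : 1 < s)
    (hs' : s ≤ 1 + 1 / (2048 * (p : ℝ) ^ 5)) :
    1 / (1024 * (p : ℝ) ^ 4) ≤ ‖LSeries (fun n ↦ χ n) s‖ := by
  have hp2 : (2 : ℝ) ≤ p := by exact_mod_cast two_le_modulus_of_ne_one hχ1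
  refine ge_of_tendsto (dirichletPartialSum_tendsto χ hs).norm ?_
  filter_upwards [eventually_le_re_dirichletPartialSum_one hχ1 hχ, eventually_ge_atTop 2]
    with D hre hD
  obtain ⟨D, rfl⟩ := Nat.exists_eq_add_of_le' hD
  have hsub := norm_dirichletPartialSum_sub_le hχ1 le_rfl hs.le D
  have herr := mul_le_one_div_pow_four hp2 (sub_le_iff_le_add'.2 hs')
  have hmain : 2 * (1 / (1024 * (p : ℝ) ^ 4)) ≤ 1 / (32 * (p : ℝ) ^ 2) := by
    rw [mul_one_div, div_le_div_iff₀ (by positivity) (by positivity)]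
    have hp4 : (4 : ℝ) ≤ (p : ℝ) ^ 2 := by nlinarith
    nlinarith [mul_le_mul_of_nonneg_right hp4 (sq_nonneg (p : ℝ))]
  have := Complex.re_le_norm (dirichletPartialSum χ 1 (D + 2))
  have := norm_sub_norm_le (dirichletPartialSum χ 1 (D + 2)) (dirichletPartialSum χ s (D + 2))
  linarith

end QuadraticCharacter

section LowerBoundLSeries

variable {p : ℕ} [NeZero p] {χ : DirichletCharacter ℂ p} {s x : ℝ}

lemma one_le_mul_norm_LSeries_pow_four (hχ : χ ^ 2 ≠ 1) (hx : 0 < x) (hx1 : x ≤ 1) :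
    1 ≤ (2 / x) ^ 3 * ‖LSeries (fun n ↦ χ n) (1 + x : ℝ)‖ ^ 4 * p := by
  have h341 := DirichletCharacter.norm_LSeries_product_ge_one χ hx 0
  have hcast : 1 + (x : ℂ) = (1 + x : ℝ) := by push_cast; rfl
  simp only [Complex.ofReal_zero, mul_zero, add_zero, hcast, norm_mul, norm_pow] at h341
  refine h341.le.trans ?_
  have hpole : 1 + x⁻¹ ≤ 2 / x := by
    rw [div_eq_mul_inv]
    linarith [(one_le_inv₀ hx).2 hx1]
  gcongr
  · exact (norm_LSeries_le_one_add_inv 1 hx).trans hpole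
  · exact norm_LSeries_le_modulus hχ (lt_add_of_pos_right 1 hx)

lemma le_norm_LSeries_of_sq_ne_one (hχ : χ ^ 2 ≠ 1) (hs : 1 < s)
    (hs' : s ≤ 1 + 1 / (2048 * (p : ℝ) ^ 5)) :
    1 / (1024 * (p : ℝ) ^ 4) ≤ ‖LSeries (fun n ↦ χ n) s‖ := by
  have hχ1 : χ ≠ 1 := by rintro rfl; simp at hχ
  have hp2 : (2 : ℝ) ≤ p := by exact_mod_cast two_le_modulus_of_ne_one hχ1
  set x : ℝ := 1 / (2048 * (p : ℝ) ^ 5) with hx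
  have hx0 : 0 < x := by positivity
  have hx1 : x ≤ 1 := by
    rw [hx, div_le_one (by positivity)]
    linarith [one_le_pow₀ (n := 5) (by linarith : (1 : ℝ) ≤ p)]
  have hprod := one_le_mul_norm_LSeries_pow_four hχ hx0 hx1
  have hsub := norm_LSeries_sub_le hχ1 hs hs'
  have herr := mul_le_one_div_pow_four hp2 (y := 1 + x - s) (by linarith)
  set a := ‖LSeries (fun n ↦ χ n) (1 + x : ℝ)‖
  have hpoint : 4 * x * p ≤ a := by
    by_contra! hlt
    have hstrict : (2 / x) ^ 3 * a ^ 4 * p < (2 / x) ^ 3 * (4 * x * p) ^ 4 * p := by gcongr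
    have hbalance : (2 / x) ^ 3 * (4 * x * p) ^ 4 * p = 1 := by
      rw [hx]
      field_simp
      norm_num
    linarith
  have hvalue : 4 * x * p = 2 * (1 / (1024 * (p : ℝ) ^ 4)) := by
    rw [hx]
    field_simp
    norm_num
  have := norm_sub_norm_le (LSeries (fun n ↦ χ n) (1 + x : ℝ)) (LSeries (fun n ↦ χ n) s)
  rw [norm_sub_rev] at this
  linarith

theorem le_norm_LSeries (hχ : χ ≠ 1) (hs : 1 < s) (hs' : s ≤ 1 + 1 / (2048 * (p : ℝ) ^ 5)) :
    1 / (1024 * (p : ℝ) ^ 4) ≤ ‖LSeries (fun n ↦ χ n) s‖ := by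
  by_cases h : χ ^ 2 = 1
  · exact le_norm_LSeries_of_sq_eq_one hχ h hs hs'
  · exact le_norm_LSeries_of_sq_ne_one h hs hs'

end LowerBoundLSeries

/-! ### Lower bound for the sum of `1 / q` over primes `q ≡ 1 (mod p)` -/

section LogLSeries

lemma re_neg_log_one_sub_le {z : ℂ} (hz : ‖z‖ ≤ 1 / 2) :
    (-Complex.log (1 - z)).re ≤ z.re + ‖z‖ ^ 2 := by
  have hlog : (-Complex.log (1 - z)).re = (Complex.log (1 - z)⁻¹).re := by
    rw [Complex.neg_re, Complex.log_re, Complex.log_re, norm_inv, log_inv]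
  have htaylor := (Complex.re_le_norm _).trans
    (Complex.norm_log_one_sub_inv_sub_self_le (z := z) (by linarith))
  have hinv : (1 - ‖z‖)⁻¹ ≤ 2 := by
    rw [inv_le_comm₀ (by linarith) (by norm_num)]; linarith
  rw [Complex.sub_re] at htaylor
  rw [hlog]
  nlinarith [sq_nonneg ‖z‖]

variable {p : ℕ} (χ : DirichletCharacter ℂ p) {s : ℝ}

lemma summable_re_mul_prime_rpow_neg (hs : 1 < s) :
    Summable fun q : Nat.Primes ↦ (χ (q : ℕ)).re * (q : ℝ) ^ (-s) := by
  refine .of_norm_bounded (Nat.Primes.summable_rpow.2 (by linarith : -s < -1)) fun q ↦ ?_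
  rw [norm_mul, Real.norm_of_nonneg (by positivity : (0 : ℝ) ≤ (q : ℝ) ^ (-s))]
  exact mul_le_of_le_one_left (by positivity)
    ((Complex.abs_re_le_norm _).trans (χ.norm_le_one _))

lemma summable_prime_rpow_neg_two : Summable fun q : Nat.Primes ↦ (q : ℝ) ^ (-2 : ℝ) :=
  Nat.Primes.summable_rpow.2 (by norm_num)

lemma re_neg_log_one_sub_prime_le (hs : 1 < s) (q : Nat.Primes) :
    (-Complex.log (1 - χ (q : ℕ) * (q : ℂ) ^ (-(s : ℂ)))).re ≤
      (χ (q : ℕ)).re * (q : ℝ) ^ (-s) + (q : ℝ) ^ (-2 : ℝ) := by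
  have hq2 : (2 : ℝ) ≤ q := by exact_mod_cast q.2.two_le
  have hcpow : (q : ℂ) ^ (-(s : ℂ)) = (((q : ℝ) ^ (-s) : ℝ) : ℂ) := by
    rw [Complex.ofReal_cpow (by positivity)]; push_cast; rfl
  have hnorm : ‖χ (q : ℕ) * (q : ℂ) ^ (-(s : ℂ))‖ ≤ (q : ℝ)⁻¹ := by
    rw [norm_mul, hcpow, Complex.norm_real, Real.norm_of_nonneg (by positivity), ← rpow_neg_one]
    exact (mul_le_of_le_one_left (by positivity) (χ.norm_le_one _)).trans
      (rpow_le_rpow_of_exponent_le (by linarith) (by linarith))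
  have hhalf : (q : ℝ)⁻¹ ≤ 1 / 2 := by
    rw [inv_le_comm₀ (by linarith) (by norm_num)]; linarith
  refine (re_neg_log_one_sub_le (hnorm.trans hhalf)).trans (add_le_add (le_of_eq ?_) ?_)
  · rw [hcpow, Complex.re_mul_ofReal]
  · rw [rpow_neg (by positivity), rpow_two, ← inv_pow]
    gcongr

lemma log_norm_LSeries_le [NeZero p] (hs : 1 < s) :
    log ‖LSeries (fun n ↦ χ n) s‖ ≤
      ∑' q : Nat.Primes, (χ (q : ℕ)).re * (q : ℝ) ^ (-s) +
        ∑' q : Nat.Primes, (q : ℝ) ^ (-2 : ℝ) := by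
  have hs' : 1 < (s : ℂ).re := by simpa using hs
  have hsm := DirichletCharacter.summable_neg_log_one_sub_mul_prime_cpow χ hs'
  have hre := summable_re_mul_prime_rpow_neg χ hs
  rw [← DirichletCharacter.LSeries_eulerProduct_exp_log χ hs', Complex.norm_exp, log_exp,
    Complex.re_tsum hsm, ← hre.tsum_add summable_prime_rpow_neg_two]
  exact Summable.tsum_le_tsum (re_neg_log_one_sub_prime_le χ hs)
    (Complex.hasSum_re hsm.hasSum).summable (hre.add summable_prime_rpow_neg_two)

end LogLSeries

section PrimeSum

variable {p : ℕ} {x : ℝ}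

lemma card_dirichletCharacter_prime (hp : p.Prime) :
    (Nat.card (DirichletCharacter ℂ p) : ℝ) = p - 1 := by
  have : NeZero p := ⟨hp.ne_zero⟩
  rw [DirichletCharacter.card_eq_totient_of_hasEnoughRootsOfUnity, Nat.totient_prime hp,
    Nat.cast_sub hp.one_le, Nat.cast_one]

lemma sum_log_norm_LSeries_le (hp : p.Prime) [NeZero p] (hx : 0 < x) :
    ∑ χ : DirichletCharacter ℂ p, log ‖LSeries (fun n ↦ χ n) (1 + x : ℝ)‖ ≤
      (p - 1) * ((∑' q : Nat.Primes, if ((q : ℕ) : ZMod p) = 1 then (q : ℝ) ^ (-(1 + x)) else 0) +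
        ∑' q : Nat.Primes, (q : ℝ) ^ (-2 : ℝ)) := by
  have hs : 1 < 1 + x := by linarith
  have horth (q : Nat.Primes) :
      ∑ χ : DirichletCharacter ℂ p, (χ (q : ℕ)).re * (q : ℝ) ^ (-(1 + x)) =
        (p - 1) * if ((q : ℕ) : ZMod p) = 1 then (q : ℝ) ^ (-(1 + x)) else 0 := by
    rw [← sum_mul, ← Complex.re_sum, DirichletCharacter.sum_characters_eq, Nat.totient_prime hp]
    split_ifs
    · rw [Complex.natCast_re, Nat.cast_sub hp.one_le, Nat.cast_one]
    · simp
  refine (sum_le_sum fun χ _ ↦ log_norm_LSeries_le χ hs).trans_eq ?_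
  rw [sum_add_distrib, sum_const, card_univ, nsmul_eq_mul, ← Nat.card_eq_fintype_card,
    card_dirichletCharacter_prime hp,
    ← Summable.tsum_finsetSum fun χ _ ↦ summable_re_mul_prime_rpow_neg χ hs,
    tsum_congr horth, tsum_mul_left, mul_add]

lemma le_sum_log_norm_LSeries (hp : p.Prime) [NeZero p] (hx : 0 < x)
    (hx' : x ≤ 1 / (2048 * (p : ℝ) ^ 5)) :
    log (x⁻¹ / 2) - (p - 1) * log (1024 * (p : ℝ) ^ 4) ≤
      ∑ χ : DirichletCharacter ℂ p, log ‖LSeries (fun n ↦ χ n) (1 + x : ℝ)‖ := by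
  classical
  have hp1 : (1 : ℝ) ≤ p := by exact_mod_cast hp.one_le
  have hprincipal := log_le_log (by positivity) (inv_div_two_le_norm_LSeries_one hp hx)
  have hothers : ∑ χ ∈ univ.erase (1 : DirichletCharacter ℂ p), (-log (1024 * (p : ℝ) ^ 4)) ≤
      ∑ χ ∈ univ.erase (1 : DirichletCharacter ℂ p),
        log ‖LSeries (fun n ↦ χ n) (1 + x : ℝ)‖ := by
    refine sum_le_sum fun χ hχ ↦ ?_
    rw [← log_inv, inv_eq_one_div]
    exact log_le_log (by positivity)
      (le_norm_LSeries (ne_of_mem_erase hχ) (by linarith) (by linarith))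
  have hlog : 0 ≤ log (1024 * (p : ℝ) ^ 4) := by
    apply log_nonneg
    linarith [one_le_pow₀ hp1 (n := 4)]
  rw [sum_const, card_erase_of_mem (mem_univ _), card_univ, nsmul_eq_mul,
    Nat.cast_sub Fintype.card_pos, ← Nat.card_eq_fintype_card,
    card_dirichletCharacter_prime hp, Nat.cast_one] at hothers
  rw [← add_sum_erase univ _ (mem_univ (1 : DirichletCharacter ℂ p))]
  linarith

lemma exists_le_tsum_prime_one_mod : ∃ A : ℝ, ∀ p : ℕ, p.Prime →
    ∀ x : ℝ, 0 < x → x ≤ 1 / (2048 * (p : ℝ) ^ 5) →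
      log x⁻¹ / p - A - 15 * log p ≤
        ∑' q : Nat.Primes, if ((q : ℕ) : ZMod p) = 1 then (q : ℝ) ^ (-(1 + x)) else 0 := by
  refine ⟨∑' q : Nat.Primes, (q : ℝ) ^ (-2 : ℝ) + 1, fun p hp x hx hx' ↦ ?_⟩
  have : NeZero p := ⟨hp.ne_zero⟩
  have hp2 : (2 : ℝ) ≤ p := by exact_mod_cast hp.two_le
  have hbound := (le_sum_log_norm_LSeries hp hx hx').trans (sum_log_norm_LSeries_le hp hx)
  have hT : 0 ≤ ∑' q : Nat.Primes,
      if ((q : ℕ) : ZMod p) = 1 then (q : ℝ) ^ (-(1 + x)) else 0 :=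
    tsum_nonneg fun q ↦ by split_ifs <;> positivity
  have hA : 0 ≤ ∑' q : Nat.Primes, (q : ℝ) ^ (-2 : ℝ) := tsum_nonneg fun q ↦ by positivity
  have hlogp : log 2 ≤ log p := log_le_log (by norm_num) hp2
  have hlog1024 : log (1024 * (p : ℝ) ^ 4) = 10 * log 2 + 4 * log p := by
    rw [log_mul (by norm_num) (by positivity), log_pow, show (1024 : ℝ) = 2 ^ 10 by norm_num,
      log_pow]
    norm_num
  rw [hlog1024, log_div (by positivity) (by norm_num)] at hbound
  rw [sub_le_iff_le_add, sub_le_iff_le_add, div_le_iff₀ (by linarith)]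
  nlinarith [mul_le_mul_of_nonneg_left hlogp (by linarith : (0 : ℝ) ≤ p - 1), log_two_gt_d9,
    log_two_lt_d9]

end PrimeSum

section Truncation

variable {p y : ℕ} {x K : ℝ}

lemma mul_sum_Ico_rpow_neg_le (hx : 0 < x) (hy : 0 < y) (m : ℕ) :
    x * ∑ j ∈ range m, ((y + 1 + j : ℕ) : ℝ) ^ (-(1 + x)) ≤
      (y : ℝ) ^ (-x) - ((y + m : ℕ) : ℝ) ^ (-x) := by
  induction m with
  | zero => simp
  | succ m ih =>
    have hstep := mul_rpow_neg_mul_sub_le (a := ((y + m : ℕ) : ℝ)) (b := ((y + 1 + m : ℕ) : ℝ))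
      hx.le (by positivity) (by positivity)
    have hlen : ((y + 1 + m : ℕ) : ℝ) - ((y + m : ℕ) : ℝ) = 1 := by push_cast; ring
    rw [hlen, mul_one] at hstep
    rw [sum_range_succ, mul_add, show y + (m + 1) = y + 1 + m by ring]
    linarith

lemma rpow_neg_inv_le_inv (hK : 0 < K) (hy : exp (K ^ 2) ≤ y) : (y : ℝ) ^ (-K⁻¹) ≤ K⁻¹ := by
  have hy0 : (0 : ℝ) < y := (exp_pos _).trans_le hy
  have hlog : K ≤ log y * K⁻¹ := by
    rw [← div_eq_mul_inv, le_div_iff₀ hK, ← sq]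
    exact (le_log_iff_exp_le hy0).2 hy
  calc (y : ℝ) ^ (-K⁻¹) = exp (-(log y * K⁻¹)) := by rw [rpow_def_of_pos hy0, mul_neg]
    _ ≤ exp (-K) := exp_le_exp.2 (by linarith)
    _ = (exp K)⁻¹ := exp_neg K
    _ ≤ K⁻¹ := inv_anti₀ hK (by linarith [add_one_le_exp K])

lemma sum_Ico_rpow_neg_le_one (hK : 0 < K) (hy : exp (K ^ 2) ≤ y) (m : ℕ) :
    ∑ j ∈ range m, ((y + 1 + j : ℕ) : ℝ) ^ (-(1 + K⁻¹)) ≤ 1 := by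
  have hy0 : 0 < y := by exact_mod_cast (exp_pos _).trans_le hy
  have htail := mul_sum_Ico_rpow_neg_le (inv_pos.2 hK) hy0 m
  have hnonneg : (0 : ℝ) ≤ ((y + m : ℕ) : ℝ) ^ (-K⁻¹) := by positivity
  have := rpow_neg_inv_le_inv hK hy
  exact le_of_mul_le_mul_left (by linarith) (inv_pos.2 hK)

lemma tsum_prime_one_mod_le (hK : 0 < K) (hy : exp (K ^ 2) ≤ y) :
    (∑' q : Nat.Primes, if ((q : ℕ) : ZMod p) = 1 then (q : ℝ) ^ (-(1 + K⁻¹)) else 0) ≤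
      ∑ q ∈ primesOneMod p y, (q : ℝ)⁻¹ + 1 := by
  set f : ℕ → ℝ := fun n ↦
    if n.Prime ∧ n ≡ 1 [MOD p] then (n : ℝ) ^ (-(1 + K⁻¹)) else 0 with hf
  have hf0 (n : ℕ) : 0 ≤ f n := by simp only [hf]; split_ifs <;> positivity
  have htsum : (∑' q : Nat.Primes,
      if ((q : ℕ) : ZMod p) = 1 then (q : ℝ) ^ (-(1 + K⁻¹)) else 0) = ∑' n, f n := by
    refine (tsum_subtype {n : ℕ | n.Prime}
      fun n ↦ if (n : ZMod p) = 1 then (n : ℝ) ^ (-(1 + K⁻¹)) else 0).trans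
      (tsum_congr fun n ↦ ?_)
    simp only [Set.indicator, Set.mem_ofPred_eq, hf, ← ZMod.natCast_eq_natCast_iff, Nat.cast_one,
      ite_and]
  have hhead : ∑ n ∈ range (y + 1), f n ≤ ∑ q ∈ primesOneMod p y, (q : ℝ)⁻¹ := by
    rw [primesOneMod, ← sum_filter]
    refine sum_le_sum fun q hq ↦ ?_
    have hq1 : (1 : ℝ) ≤ q := by exact_mod_cast (mem_filter.1 hq).2.1.one_le
    rw [← rpow_neg_one (q : ℝ)]
    exact rpow_le_rpow_of_exponent_le hq1 (by linarith [inv_pos.2 hK])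
  rw [htsum]
  refine Real.tsum_le_of_sum_range_le hf0 fun n ↦ ?_
  calc ∑ i ∈ range n, f i ≤ ∑ i ∈ range (y + 1 + n), f i :=
        sum_le_sum_of_subset_of_nonneg (range_mono (by lia)) fun i _ _ ↦ hf0 i
    _ = ∑ i ∈ range (y + 1), f i + ∑ j ∈ range n, f (y + 1 + j) := sum_range_add _ _ _
    _ ≤ ∑ i ∈ range (y + 1), f i +
          ∑ j ∈ range n, ((y + 1 + j : ℕ) : ℝ) ^ (-(1 + K⁻¹)) := by
        gcongr
        simp only [hf]
        split_ifs
        · rfl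
        · positivity
    _ ≤ _ := add_le_add hhead (sum_Ico_rpow_neg_le_one hK hy n)

end Truncation

theorem exists_le_sum_inv_primesOneMod : ∃ A : ℝ, ∀ p : ℕ, p.Prime →
    ∀ K : ℝ, 2048 * (p : ℝ) ^ 5 ≤ K → ∀ y : ℕ, exp (K ^ 2) ≤ y →
      log K / p - A - 15 * log p ≤ ∑ q ∈ primesOneMod p y, (q : ℝ)⁻¹ := by
  obtain ⟨A, hA⟩ := exists_le_tsum_prime_one_mod
  refine ⟨A + 1, fun p hp K hK y hy ↦ ?_⟩
  have hp0 : (0 : ℝ) < p := by exact_mod_cast hp.pos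
  have hK0 : 0 < K := lt_of_lt_of_le (by positivity) hK
  have hle : K⁻¹ ≤ 1 / (2048 * (p : ℝ) ^ 5) := by
    rw [one_div]; exact inv_anti₀ (by positivity) hK
  have hsum := (hA p hp K⁻¹ (inv_pos.2 hK0) hle).trans (tsum_prime_one_mod_le hK0 hy)
  rw [inv_inv] at hsum
  linarith

/-! ### Integers coprime to a primorial -/

section Coprime

variable {a : ℕ}

lemma count_coprime_mul (a q : ℕ) : Nat.count a.Coprime (a * q) = a.totient * q := by
  induction q with
  | zero => simp
  | succ q ih =>
    rw [mul_add, mul_one, Nat.count_add, ih, Nat.count_eq_card_filter_range, mul_add, mul_one]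
    simp only [Nat.coprime_mul_left_add_right, Nat.totient]

lemma abs_count_coprime_sub_le (ha : 0 < a) (n : ℕ) :
    |(Nat.count a.Coprime n : ℝ) - a.totient / a * n| ≤ a := by
  have ha0 : (0 : ℝ) < a := by exact_mod_cast ha
  have hlow : (a.totient : ℝ) * (n / a : ℕ) ≤ Nat.count a.Coprime n := by
    have := Nat.count_monotone a.Coprime (Nat.mul_div_le n a)
    rw [count_coprime_mul] at this
    exact_mod_cast this
  have hup : (Nat.count a.Coprime n : ℝ) ≤ a.totient * ((n / a : ℕ) + 1) := by
    have := Nat.count_monotone a.Coprime (Nat.lt_mul_div_succ n ha).le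
    rw [count_coprime_mul] at this
    exact_mod_cast this
  have hdiv : ((n / a : ℕ) : ℝ) ≤ n / a := Nat.cast_div_le
  have hdiv' : (n : ℝ) / a ≤ (n / a : ℕ) + 1 := by
    rw [div_le_iff₀' ha0]
    exact_mod_cast (Nat.lt_mul_div_succ n ha).le
  have htot : (a.totient : ℝ) ≤ a := by exact_mod_cast Nat.totient_le a
  have htot0 : (0 : ℝ) ≤ a.totient := by positivity
  rw [div_mul_eq_mul_div, mul_div_assoc, abs_le]
  constructor <;>
    nlinarith [mul_le_mul_of_nonneg_left hdiv htot0, mul_le_mul_of_nonneg_left hdiv' htot0]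

lemma sum_filter_add_sum_count (P : ℕ → Prop) [DecidablePred P] (n : ℕ) :
    ∑ k ∈ range n with P k, k + ∑ k ∈ range n, Nat.count P (k + 1) = n * Nat.count P n := by
  induction n with
  | zero => simp
  | succ n ih =>
    rw [sum_range_succ (fun k ↦ Nat.count P (k + 1)), sum_filter, sum_range_succ, ← sum_filter,
      Nat.count_succ]
    split_ifs <;> grind

lemma abs_sum_coprime_sub_le (ha : 0 < a) {N : ℕ} (hN : 0 < N) :
    |∑ n ∈ range (N + 1) with a.Coprime n, (n : ℝ) - (a.totient / a * N ^ 2 / 2 : ℝ)| ≤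
      5 * (N : ℝ) * a := by
  set ρ : ℝ := (a.totient : ℝ) / a with hρ
  have ha1 : (1 : ℝ) ≤ a := by exact_mod_cast ha
  have hN1 : (1 : ℝ) ≤ N := by exact_mod_cast hN
  have : 0 ≤ ρ := by positivity
  have hρ1 : ρ ≤ 1 := div_le_one_of_le₀ (by exact_mod_cast Nat.totient_le a) (by positivity)
  have hparts : ∑ n ∈ range (N + 1) with a.Coprime n, (n : ℝ) +
      ∑ k ∈ range (N + 1), (Nat.count a.Coprime (k + 1) : ℝ) =
        (N + 1) * Nat.count a.Coprime (N + 1) := by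
    rw [← Nat.cast_sum, ← Nat.cast_sum]
    exact_mod_cast sum_filter_add_sum_count a.Coprime (N + 1)
  have hcount := abs_le.1 (abs_count_coprime_sub_le ha (N + 1))
  have hsum : |∑ k ∈ range (N + 1), (Nat.count a.Coprime (k + 1) : ℝ) -
      ∑ k ∈ range (N + 1), ρ * ((k + 1 : ℕ) : ℝ)| ≤ (N + 1) * a := by
    rw [← sum_sub_distrib]
    refine (abs_sum_le_sum_abs _ _).trans
      ((sum_le_sum fun k _ ↦ abs_count_coprime_sub_le ha (k + 1)).trans_eq ?_)
    simp
  have hgauss : ∑ k ∈ range (N + 1), ρ * ((k + 1 : ℕ) : ℝ) = ρ * ((N + 1) * (N + 2) / 2) := by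
    have := sum_range_id_mul_two (N + 2)
    rw [sum_range_succ'] at this
    rw [← mul_sum, ← Nat.cast_sum]
    congr 1
    rw [eq_div_iff two_ne_zero]
    exact_mod_cast (by simpa [mul_comm] using this)
  rw [hgauss, abs_le] at hsum
  push_cast at hcount
  rw [← hρ] at hcount
  have hNa : (N : ℝ) ≤ N * a := le_mul_of_one_le_right (by positivity) ha1
  have haN : (a : ℝ) ≤ N * a := le_mul_of_one_le_left (by positivity) hN1
  have hρN : ρ * N ≤ N := mul_le_of_le_one_left (by positivity) hρ1
  have : 0 ≤ ρ * N := by positivity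
  rw [abs_le]
  constructor <;> nlinarith [hcount.1, hcount.2, hsum.1, hsum.2]

end Coprime

/-- Mertens' product `∏ p ≤ z, (1 - 1 / p)`, the density of the integers coprime to all
primes up to `z`. -/
noncomputable def mertensProduct (z : ℕ) : ℝ := ∏ p ∈ Nat.primesLE z, (1 - (p : ℝ)⁻¹)

lemma coprime_primorial_iff {z n : ℕ} :
    (primorial z).Coprime n ↔ ∀ p, p.Prime → p ≤ z → ¬ p ∣ n := by
  rw [primorial_eq_prod_primesLE, Nat.coprime_prod_left_iff]
  simp only [Nat.mem_primesLE]
  exact ⟨fun h p hp hz ↦ hp.coprime_iff_not_dvd.1 (h p ⟨hz, hp⟩),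
    fun h p ⟨hz, hp⟩ ↦ hp.coprime_iff_not_dvd.2 (h p hp hz)⟩

lemma totient_primorial_div (z : ℕ) :
    ((primorial z).totient : ℝ) / primorial z = mertensProduct z := by
  have htot := Nat.totient_eq_mul_prod_factors (primorial z)
  rw [primeFactors_primorial] at htot
  rw [div_eq_iff (by exact_mod_cast primorial_ne_zero z), mertensProduct, mul_comm]
  simpa using congrArg (Rat.cast : ℚ → ℝ) htot

/-! ### Mertens' theorems -/

/-- The logarithm `-log (1 - n ^ (-s))` of the Euler factor of `ζ(s)` at a prime `n`, extended by
zero to all natural numbers. -/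
noncomputable def logEulerFactor (s : ℝ) (n : ℕ) : ℝ :=
  if n.Prime then -log (1 - (n : ℝ) ^ (-s)) else 0

section LogEulerFactor

variable {s : ℝ} {p : ℕ}

lemma logEulerFactor_of_not_prime (hp : ¬ p.Prime) : logEulerFactor s p = 0 := if_neg hp

lemma rpow_neg_lt_one (hp : p.Prime) (hs : 0 < s) : (p : ℝ) ^ (-s) < 1 :=
  rpow_lt_one_of_one_lt_of_neg (by exact_mod_cast hp.one_lt) (neg_neg_of_pos hs)

lemma rpow_neg_le_logEulerFactor (hp : p.Prime) (hs : 0 < s) :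
    (p : ℝ) ^ (-s) ≤ logEulerFactor s p := by
  have hlog := log_le_sub_one_of_pos (sub_pos.2 (rpow_neg_lt_one hp hs))
  rw [logEulerFactor, if_pos hp]
  linarith

lemma logEulerFactor_le (hp : p.Prime) (hs : 1 ≤ s) :
    logEulerFactor s p ≤ (p : ℝ) ^ (1 - s) / (p - 1) := by
  have hp2 : (2 : ℝ) ≤ p := by exact_mod_cast hp.two_le
  have hlt := rpow_neg_lt_one hp (s := s) (by linarith)
  have hlog := one_sub_inv_le_log_of_pos (sub_pos.2 hlt)
  have hpow : (p : ℝ) ^ (1 - s) = p * (p : ℝ) ^ (-s) := by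
    rw [sub_eq_add_neg, rpow_add (by linarith), rpow_one]
  have hpow1 : (p : ℝ) ^ (1 - s) ≤ 1 :=
    rpow_le_one_of_one_le_of_nonpos (by linarith) (by linarith)
  have hnonneg : (0 : ℝ) ≤ (p : ℝ) ^ (-s) := by positivity
  have hquot : (1 - (p : ℝ) ^ (-s))⁻¹ - 1 ≤ (p : ℝ) ^ (1 - s) / (p - 1) := by
    rw [inv_eq_one_div, div_sub_one (by linarith), div_le_div_iff₀ (by linarith) (by linarith)]
    nlinarith
  rw [logEulerFactor, if_pos hp]
  linarith

lemma logEulerFactor_nonneg (hs : 0 < s) (n : ℕ) : 0 ≤ logEulerFactor s n := by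
  by_cases hn : n.Prime
  · exact le_trans (by positivity) (rpow_neg_le_logEulerFactor hn hs)
  · exact (logEulerFactor_of_not_prime hn).ge

lemma inv_le_logEulerFactor_one (hp : p.Prime) : (p : ℝ)⁻¹ ≤ logEulerFactor 1 p := by
  simpa only [rpow_neg_one] using rpow_neg_le_logEulerFactor hp one_pos

lemma logEulerFactor_one_le_inv (hp : p.Prime) : logEulerFactor 1 p ≤ ((p : ℝ) - 1)⁻¹ := by
  simpa using logEulerFactor_le hp le_rfl

end LogEulerFactor

section FirstMertens

variable {p n : ℕ}

lemma inv_sub_one_sub_inv_nonneg {t : ℝ} (ht : 1 < t) : 0 ≤ (t - 1)⁻¹ - t⁻¹ :=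
  sub_nonneg.2 (inv_anti₀ (by linarith) (by linarith))

lemma inv_sub_one_sub_inv_le {t : ℝ} (ht : 2 ≤ t) : (t - 1)⁻¹ - t⁻¹ ≤ 2 * (t ^ 2)⁻¹ := by
  have : 0 < t - 1 := by linarith
  have : 0 < t := by linarith
  rw [inv_sub_inv (by linarith) (by linarith), ← div_eq_mul_inv,
    div_le_div_iff₀ (by positivity) (by positivity)]
  nlinarith

lemma exists_sum_log_mul_inv_sub_le : ∃ D : ℝ, ∀ n : ℕ,
    ∑ p ∈ Nat.primesLE n, log p * (((p : ℝ) - 1)⁻¹ - (p : ℝ)⁻¹) ≤ D := by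
  have hsummable : Summable fun n : ℕ ↦ 4 * (1 / (n : ℝ) ^ (3 / 2 : ℝ)) :=
    (summable_one_div_nat_rpow.2 (by norm_num)).mul_left 4
  refine ⟨_, fun n ↦ (sum_le_sum fun p hp ↦ ?_).trans
    (hsummable.sum_le_tsum (Nat.primesLE n) fun n _ ↦ by positivity)⟩
  have hp2 : (2 : ℝ) ≤ p := by exact_mod_cast Nat.two_le_of_mem_primesLE hp
  have hp0 : (0 : ℝ) < p := by linarith
  have hlog : log p ≤ 2 * (p : ℝ) ^ (1 / 2 : ℝ) := by
    linarith [log_le_rpow_div hp0.le (show (0 : ℝ) < 1 / 2 by norm_num)]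
  have hpow : (p : ℝ) ^ (1 / 2 : ℝ) * ((p : ℝ) ^ 2)⁻¹ = 1 / (p : ℝ) ^ (3 / 2 : ℝ) := by
    rw [← rpow_natCast, ← rpow_neg hp0.le, ← rpow_add hp0, one_div ((p : ℝ) ^ (3 / 2 : ℝ)),
      ← rpow_neg hp0.le]
    norm_num
  calc log p * (((p : ℝ) - 1)⁻¹ - (p : ℝ)⁻¹)
      ≤ (2 * (p : ℝ) ^ (1 / 2 : ℝ)) * (2 * ((p : ℝ) ^ 2)⁻¹) :=
        mul_le_mul hlog (inv_sub_one_sub_inv_le hp2) (inv_sub_one_sub_inv_nonneg (by linarith))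
          (by positivity)
    _ = 4 * (1 / (p : ℝ) ^ (3 / 2 : ℝ)) := by rw [← hpow]; ring

lemma log_factorial_eq_sum_primesLE (n : ℕ) :
    log n.factorial = ∑ p ∈ Nat.primesLE n, (n.factorial.factorization p : ℝ) * log p := by
  have hsupp : n.factorial.factorization.support = Nat.primesLE n := by
    ext p
    rw [Nat.support_factorization, Nat.mem_primeFactors, Nat.mem_primesLE]
    exact ⟨fun ⟨hp, hdvd, _⟩ ↦ ⟨hp.dvd_factorial.1 hdvd, hp⟩,
      fun ⟨hle, hp⟩ ↦ ⟨hp, hp.dvd_factorial.2 hle, n.factorial_ne_zero⟩⟩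
  have hprod := Nat.prod_factorization_pow_eq_self n.factorial_ne_zero
  rw [Finsupp.prod, hsupp] at hprod
  conv_lhs => rw [← hprod]
  push_cast
  rw [log_prod fun p hp ↦ by
    have := (Nat.prime_of_mem_primesLE hp).pos
    positivity]
  exact sum_congr rfl fun p _ ↦ log_pow _ _

lemma mul_log_sub_self_le_log_factorial (n : ℕ) : n * log n - n ≤ log n.factorial := by
  rcases Nat.eq_zero_or_pos n with rfl | hn
  · simp
  have hexp := log_le_log (by positivity) (pow_div_factorial_le_exp (n : ℝ) n.cast_nonneg n)
  rw [log_exp, log_div (by positivity) (by positivity), log_pow] at hexp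
  linarith

lemma log_factorial_le_mul_log (n : ℕ) : log n.factorial ≤ n * log n := by
  rw [← log_pow]
  exact log_le_log (by positivity) (by exact_mod_cast n.factorial_le_pow)

lemma factorization_factorial_le (hp : p.Prime) (n : ℕ) :
    (n.factorial.factorization p : ℝ) ≤ n * ((p : ℝ) - 1)⁻¹ := by
  have hp2 : (2 : ℝ) ≤ p := by exact_mod_cast hp.two_le
  have hlegendre : (p - 1) * n.factorial.factorization p ≤ n :=
    (Nat.sub_one_mul_factorization_factorial hp).trans_le (Nat.sub_le _ _)
  have hcast : ((p : ℝ) - 1) * n.factorial.factorization p ≤ n := by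
    rw [← Nat.cast_pred hp.pos]
    exact_mod_cast hlegendre
  rw [← div_eq_mul_inv, le_div_iff₀ (by linarith)]
  linarith

lemma mul_inv_sub_one_le_factorization_factorial (hp : p.Prime) (n : ℕ) :
    (n : ℝ) * (p : ℝ)⁻¹ - 1 ≤ n.factorial.factorization p := by
  have hdiv : n / p ≤ n.factorial.factorization p := by
    rw [Nat.factorization_factorial hp (b := Nat.log p n + 2) (by lia)]
    simpa using single_le_sum (f := fun i ↦ n / p ^ i) (fun i _ ↦ Nat.zero_le _)
      (show 1 ∈ Ico 1 (Nat.log p n + 2) by simp)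
  have hfloor := Nat.lt_floor_add_one ((n : ℝ) / p)
  rw [Nat.floor_div_eq_div] at hfloor
  have hcast : ((n / p : ℕ) : ℝ) ≤ n.factorial.factorization p := by exact_mod_cast hdiv
  rw [← div_eq_mul_inv]
  linarith

lemma log_sub_one_le_sum_log_mul_inv_sub_one (hn : 0 < n) :
    log n - 1 ≤ ∑ p ∈ Nat.primesLE n, log p * ((p : ℝ) - 1)⁻¹ := by
  have hn0 : (0 : ℝ) < n := by exact_mod_cast hn
  refine le_of_mul_le_mul_left ?_ hn0
  calc n * (log n - 1) = n * log n - n := by ring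
    _ ≤ log n.factorial := mul_log_sub_self_le_log_factorial n
    _ = ∑ p ∈ Nat.primesLE n, (n.factorial.factorization p : ℝ) * log p :=
        log_factorial_eq_sum_primesLE n
    _ ≤ ∑ p ∈ Nat.primesLE n, (n * ((p : ℝ) - 1)⁻¹) * log p :=
        sum_le_sum fun p hp ↦ mul_le_mul_of_nonneg_right
          (factorization_factorial_le (Nat.prime_of_mem_primesLE hp) n) (log_natCast_nonneg p)
    _ = n * ∑ p ∈ Nat.primesLE n, log p * ((p : ℝ) - 1)⁻¹ := by
        rw [mul_sum]
        exact sum_congr rfl fun p _ ↦ by ring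

lemma sum_log_mul_inv_le (hn : 0 < n) :
    ∑ p ∈ Nat.primesLE n, log p * (p : ℝ)⁻¹ ≤ log n + log 4 := by
  have hn0 : (0 : ℝ) < n := by exact_mod_cast hn
  have hchebyshev : ∑ p ∈ Nat.primesLE n, log p ≤ log 4 * n := by
    rw [← Chebyshev.theta_eq_sum_primesLE_log]
    exact Chebyshev.theta_le_log4_mul_x n.cast_nonneg
  have hfactorial : ∑ p ∈ Nat.primesLE n, ((n : ℝ) * (p : ℝ)⁻¹ - 1) * log p ≤ n * log n :=
    calc ∑ p ∈ Nat.primesLE n, ((n : ℝ) * (p : ℝ)⁻¹ - 1) * log p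
        ≤ ∑ p ∈ Nat.primesLE n, (n.factorial.factorization p : ℝ) * log p :=
          sum_le_sum fun p hp ↦ mul_le_mul_of_nonneg_right
            (mul_inv_sub_one_le_factorization_factorial (Nat.prime_of_mem_primesLE hp) n)
            (log_natCast_nonneg p)
      _ = log n.factorial := (log_factorial_eq_sum_primesLE n).symm
      _ ≤ n * log n := log_factorial_le_mul_log n
  refine le_of_mul_le_mul_left ?_ hn0
  calc n * ∑ p ∈ Nat.primesLE n, log p * (p : ℝ)⁻¹
      = ∑ p ∈ Nat.primesLE n, ((n : ℝ) * (p : ℝ)⁻¹ - 1) * log p +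
          ∑ p ∈ Nat.primesLE n, log p := by
        rw [mul_sum, ← sum_add_distrib]
        exact sum_congr rfl fun p _ ↦ by ring
    _ ≤ n * (log n + log 4) := by linarith

theorem exists_abs_sum_logEulerFactor_mul_log_sub_le : ∃ D : ℝ, ∀ n : ℕ, 0 < n →
    |∑ k ∈ range (n + 1), logEulerFactor 1 k * log k - log n| ≤ D := by
  obtain ⟨D, hD⟩ := exists_sum_log_mul_inv_sub_le
  refine ⟨D + log 4 + 1, fun n hn ↦ ?_⟩
  have hprimes : ∑ k ∈ range (n + 1), logEulerFactor 1 k * log k =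
      ∑ p ∈ Nat.primesLE n, log p * logEulerFactor 1 p := by
    rw [Nat.primesLE_eq_filter_range, sum_filter]
    refine sum_congr rfl fun k _ ↦ ?_
    split_ifs with hk
    · exact mul_comm _ _
    · rw [logEulerFactor_of_not_prime hk, zero_mul]
  have hlow : ∑ p ∈ Nat.primesLE n, log p * (p : ℝ)⁻¹ ≤
      ∑ p ∈ Nat.primesLE n, log p * logEulerFactor 1 p :=
    sum_le_sum fun p hp ↦ mul_le_mul_of_nonneg_left
      (inv_le_logEulerFactor_one (Nat.prime_of_mem_primesLE hp)) (log_natCast_nonneg p)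
  have hup : ∑ p ∈ Nat.primesLE n, log p * logEulerFactor 1 p ≤
      ∑ p ∈ Nat.primesLE n, log p * ((p : ℝ) - 1)⁻¹ :=
    sum_le_sum fun p hp ↦ mul_le_mul_of_nonneg_left
      (logEulerFactor_one_le_inv (Nat.prime_of_mem_primesLE hp)) (log_natCast_nonneg p)
  have hgap := hD n
  simp only [mul_sub, sum_sub_distrib] at hgap
  have := log_sub_one_le_sum_log_mul_inv_sub_one hn
  have := sum_log_mul_inv_le hn
  have : 0 ≤ log 4 := log_nonneg (by norm_num)
  rw [hprimes, abs_le]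
  constructor <;> linarith

end FirstMertens

section SecondMertens

lemma log_sub_log_mul_le {a b : ℝ} (ha : 0 < a) (hb : 0 < b) :
    (log b - log a) * a ≤ b - a := by
  have hlog := log_le_sub_one_of_pos (div_pos hb ha)
  rw [log_div hb.ne' ha.ne'] at hlog
  calc (log b - log a) * a ≤ (b / a - 1) * a := by gcongr
    _ = b - a := by field_simp

lemma sub_sub_sq_le_log_sub_log_mul {a b : ℝ} (ha : 0 < a) (hb : 1 ≤ b) :
    b - a - (b - a) ^ 2 ≤ (log b - log a) * a := by
  have hb0 : 0 < b := by linarith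
  have hlog := one_sub_inv_le_log_of_pos (div_pos hb0 ha)
  rw [log_div hb0.ne' ha.ne'] at hlog
  calc b - a - (b - a) ^ 2 ≤ b - a - (b - a) ^ 2 / b := by
        gcongr
        exact div_le_self (sq_nonneg _) hb
    _ = (1 - (b / a)⁻¹) * a := by field_simp; ring
    _ ≤ (log b - log a) * a := by gcongr

lemma log_add_one_sub_log_sq_le {t : ℝ} (ht : 1 < t) :
    (log (t + 1) - log t) ^ 2 ≤ (t - 1)⁻¹ - t⁻¹ := by
  have ht0 : 0 < t := by linarith
  have hstep : log (t + 1) - log t ≤ t⁻¹ := by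
    have := log_sub_log_mul_le ht0 (by linarith : 0 < t + 1)
    rw [inv_eq_one_div, le_div_iff₀ ht0]
    linarith
  have hnonneg : 0 ≤ log (t + 1) - log t := sub_nonneg.2 (log_le_log ht0 (by linarith))
  have hpos : 0 < t - 1 := by linarith
  calc (log (t + 1) - log t) ^ 2 ≤ t⁻¹ ^ 2 := by gcongr
    _ ≤ (t - 1)⁻¹ - t⁻¹ := by
        rw [inv_sub_inv hpos.ne' ht0.ne', inv_pow, inv_eq_one_div,
          div_le_div_iff₀ (by positivity) (by positivity)]
        nlinarith

lemma abs_sum_log_log_sub_mul_log_sub_le (n : ℕ) :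
    |∑ k ∈ range n, (log (log (k + 1 + 2 : ℕ)) - log (log (k + 2 : ℕ))) * log (k + 2 : ℕ) -
      log (n + 2 : ℕ)| ≤ 2 := by
  have hstep (k : ℕ) : ((k + 1 + 2 : ℕ) : ℝ) = ((k + 2 : ℕ) : ℝ) + 1 := by push_cast; ring
  have hlog (k : ℕ) : 0 < log (k + 2 : ℕ) := log_pos (by exact_mod_cast (by lia : 1 < k + 2))
  have hup (n : ℕ) : ∑ k ∈ range n,
      (log (log (k + 1 + 2 : ℕ)) - log (log (k + 2 : ℕ))) * log (k + 2 : ℕ) ≤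
        log (n + 2 : ℕ) - log 2 := by
    induction n with
    | zero => simp
    | succ n ih =>
      rw [sum_range_succ]
      linarith [log_sub_log_mul_le (hlog n) (hlog (n + 1))]
  have hlow (n : ℕ) : log (n + 2 : ℕ) - log 2 - (1 - ((n + 1 : ℕ) : ℝ)⁻¹) ≤ ∑ k ∈ range n,
      (log (log (k + 1 + 2 : ℕ)) - log (log (k + 2 : ℕ))) * log (k + 2 : ℕ) := by
    induction n with
    | zero => simp
    | succ n ih =>
      have hlog1 : 1 ≤ log (n + 1 + 2 : ℕ) := by
        rw [le_log_iff_exp_le (by positivity)]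
        push_cast
        linarith [exp_one_lt_d9, n.cast_nonneg (α := ℝ)]
      have hsq := log_add_one_sub_log_sq_le (t := (n + 2 : ℕ)) (by exact_mod_cast (by lia))
      rw [← hstep, show ((n + 2 : ℕ) : ℝ) - 1 = (n + 1 : ℕ) by push_cast; ring] at hsq
      rw [sum_range_succ]
      linarith [sub_sub_sq_le_log_sub_log_mul (hlog n) hlog1]
  have : (0 : ℝ) ≤ ((n + 1 : ℕ) : ℝ)⁻¹ := by positivity
  rw [abs_le]
  constructor <;> linarith [hup n, hlow n, log_two_lt_d9, log_two_gt_d9]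

lemma exists_tendsto_sum_sub_log_log {b : ℕ → ℝ} {D : ℝ}
    (hb : ∀ n, |∑ k ∈ range n, b k * log (k + 2 : ℕ) - log (n + 2 : ℕ)| ≤ D) :
    ∃ c, Tendsto (fun n : ℕ ↦ ∑ k ∈ range n, b k - log (log (n + 2 : ℕ))) atTop (𝓝 c) := by
  have hpos (k : ℕ) : 0 < log (k + 2 : ℕ) := log_pos (by exact_mod_cast (by lia : 1 < k + 2))
  have hanti : Antitone fun k : ℕ ↦ (log (k + 2 : ℕ))⁻¹ := fun i j hij ↦
    inv_anti₀ (hpos i) (log_le_log (by positivity) (by exact_mod_cast (by lia)))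
  have hzero : Tendsto (fun k : ℕ ↦ (log (k + 2 : ℕ))⁻¹) atTop (𝓝 0) :=
    (tendsto_log_atTop.comp
      (tendsto_natCast_atTop_atTop.comp (tendsto_add_atTop_nat 2))).inv_tendsto_atTop
  set u : ℕ → ℝ := fun k ↦ log (log (k + 1 + 2 : ℕ)) - log (log (k + 2 : ℕ))
  have hbounded (n : ℕ) : ‖∑ k ∈ range n, (b k - u k) * log (k + 2 : ℕ)‖ ≤ D + 2 := by
    have hsub : ∑ k ∈ range n, (b k - u k) * log (k + 2 : ℕ) =
        ∑ k ∈ range n, b k * log (k + 2 : ℕ) - ∑ k ∈ range n, u k * log (k + 2 : ℕ) := by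
      rw [← sum_sub_distrib]
      exact sum_congr rfl fun k _ ↦ sub_mul _ _ _
    have hb_bounds := abs_le.1 (hb n)
    have hu_bounds := abs_le.1 (abs_sum_log_log_sub_mul_log_sub_le n)
    rw [norm_eq_abs, hsub, abs_le]
    constructor <;> linarith
  obtain ⟨c, hc⟩ := cauchySeq_tendsto_of_complete
    (hanti.cauchySeq_series_mul_of_tendsto_zero_of_bounded hzero hbounded)
  refine ⟨c - log (log 2), (hc.sub_const _).congr fun n ↦ ?_⟩
  have hcancel (k : ℕ) : (log (k + 2 : ℕ))⁻¹ • ((b k - u k) * log (k + 2 : ℕ)) = b k - u k := by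
    rw [smul_eq_mul, mul_comm (b k - u k), inv_mul_cancel_left₀ (hpos k).ne']
  rw [sum_congr rfl fun k _ ↦ hcancel k, sum_sub_distrib,
    sum_range_sub fun k ↦ log (log (k + 2 : ℕ))]
  push_cast
  ring

lemma exists_tendsto_sum_logEulerFactor_sub_log_log :
    ∃ c, Tendsto (fun n : ℕ ↦ ∑ k ∈ range n, logEulerFactor 1 k - log (log n)) atTop (𝓝 c) := by
  obtain ⟨D, hD⟩ := exists_abs_sum_logEulerFactor_mul_log_sub_le
  have hzero : logEulerFactor 1 0 = 0 := logEulerFactor_of_not_prime Nat.not_prime_zero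
  have hone : logEulerFactor 1 1 = 0 := logEulerFactor_of_not_prime Nat.not_prime_one
  have hshift (f : ℕ → ℝ) (h0 : f 0 = 0) (h1 : f 1 = 0) (n : ℕ) :
      ∑ k ∈ range (n + 2), f k = ∑ k ∈ range n, f (k + 2) := by
    simp [sum_range_succ', h0, h1]
  obtain ⟨c, hc⟩ := exists_tendsto_sum_sub_log_log (b := fun k ↦ logEulerFactor 1 (k + 2))
    (D := D + 1) fun n ↦ by
      have hmertens := hD (n + 1) n.succ_pos
      rw [hshift (fun k ↦ logEulerFactor 1 k * log k) (by simp) (by simp), abs_le] at hmertens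
      have hmono : log (n + 1 : ℕ) ≤ log (n + 2 : ℕ) :=
        log_le_log (by positivity) (by push_cast; linarith)
      have hstep := log_sub_log_mul_le (a := (n + 1 : ℕ)) (b := (n + 2 : ℕ)) (by positivity)
        (by positivity)
      push_cast at hmertens hmono hstep ⊢
      have : log ((n : ℝ) + 2) - log (n + 1) ≤ 1 := by nlinarith [n.cast_nonneg (α := ℝ)]
      rw [abs_le]
      constructor <;> linarith [hmertens.1, hmertens.2]
  refine ⟨c, (tendsto_add_atTop_iff_nat 2).1 (hc.congr fun n ↦ ?_)⟩
  rw [hshift _ hzero hone]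

end SecondMertens

section ZetaPole

variable {x : ℝ}

lemma norm_riemannZeta_le_one_add_inv (hx : 0 < x) : ‖riemannZeta (1 + x : ℝ)‖ ≤ 1 + x⁻¹ := by
  have hL := norm_LSeries_le_one_add_inv (1 : DirichletCharacter ℂ 1) hx
  rwa [← DirichletCharacter.LFunction_eq_LSeries _ (by simpa using hx),
    DirichletCharacter.LFunction_modOne_eq] at hL

lemma norm_riemannZeta_pos (hx : 0 < x) : 0 < ‖riemannZeta (1 + x : ℝ)‖ :=
  (inv_pos.2 hx).trans_le (inv_le_norm_riemannZeta hx)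

lemma tendsto_log_norm_riemannZeta_add_log :
    Tendsto (fun x : ℝ ↦ log ‖riemannZeta (1 + x : ℝ)‖ + log x) (𝓝[>] 0) (𝓝 0) := by
  refine tendsto_of_tendsto_of_tendsto_of_le_of_le' tendsto_const_nhds
    (tendsto_id.mono_left nhdsWithin_le_nhds) ?_ ?_ <;>
  filter_upwards [self_mem_nhdsWithin] with x (hx : 0 < x)
  · have hlog := log_le_log (by positivity) (inv_le_norm_riemannZeta hx)
    rw [log_inv] at hlog
    linarith
  · rw [← log_mul (norm_riemannZeta_pos hx).ne' hx.ne']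
    calc log (‖riemannZeta (1 + x : ℝ)‖ * x) ≤ ‖riemannZeta (1 + x : ℝ)‖ * x - 1 :=
          log_le_sub_one_of_pos (mul_pos (norm_riemannZeta_pos hx) hx)
      _ ≤ (1 + x⁻¹) * x - 1 := by gcongr; exact norm_riemannZeta_le_one_add_inv hx
      _ = x := by field_simp; ring

lemma norm_one_sub_natCast_cpow_neg {p : ℕ} {s : ℝ} (hp : p.Prime) (hs : 0 < s) :
    ‖1 - (p : ℂ) ^ (-(s : ℂ))‖ = 1 - (p : ℝ) ^ (-s) := by
  have hreal : (1 - (p : ℂ) ^ (-(s : ℂ))) = ((1 - (p : ℝ) ^ (-s) : ℝ) : ℂ) := by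
    push_cast [Complex.ofReal_cpow p.cast_nonneg]
    rfl
  rw [hreal, Complex.norm_real, norm_of_nonneg (sub_nonneg.2 (rpow_neg_lt_one hp hs).le)]

lemma hasSum_logEulerFactor (hx : 0 < x) :
    HasSum (logEulerFactor (1 + x)) (log ‖riemannZeta (1 + x : ℝ)‖) := by
  have hs : 0 < 1 + x := by linarith
  rw [hasSum_iff_tendsto_nat_of_nonneg (logEulerFactor_nonneg hs)]
  have heuler := ((riemannZeta_eulerProduct (s := (1 + x : ℝ)) (by simpa using hx)).norm).log
    (norm_riemannZeta_pos hx).ne'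
  refine heuler.congr fun n ↦ ?_
  have hfactor {p : ℕ} (hp : p.Prime) :
      ‖(1 - (p : ℂ) ^ (-((1 + x : ℝ) : ℂ)))⁻¹‖ = (1 - (p : ℝ) ^ (-(1 + x)))⁻¹ := by
    rw [norm_inv, norm_one_sub_natCast_cpow_neg hp hs]
  rw [norm_prod, log_prod]
  · rw [Nat.primesBelow, sum_filter]
    refine sum_congr rfl fun p _ ↦ ?_
    rw [logEulerFactor]
    split_ifs with hp
    · rw [hfactor hp, log_inv]
    · rfl
  · intro p hp
    have hp := Nat.prime_of_mem_primesBelow hp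
    rw [hfactor hp]
    exact inv_ne_zero (sub_pos.2 (rpow_neg_lt_one hp hs)).ne'

-- Both terms lie in the interval `[n ^ (-x) / n, n ^ (-x) / (n - 1)]`.
lemma abs_logEulerFactor_mul_rpow_sub_le (hx : 0 < x) (n : ℕ) :
    |logEulerFactor 1 n * (n : ℝ) ^ (-x) - logEulerFactor (1 + x) n| ≤ 2 * ((n : ℝ) ^ 2)⁻¹ := by
  by_cases hn : n.Prime
  swap
  · simp [logEulerFactor_of_not_prime hn]
  have hn2 : (2 : ℝ) ≤ n := by exact_mod_cast hn.two_le
  have hpow1 : (n : ℝ) ^ (-x) ≤ 1 := rpow_le_one_of_one_le_of_nonpos (by linarith) (by linarith)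
  have hlow := rpow_neg_le_logEulerFactor hn (by linarith : 0 < 1 + x)
  have hup := logEulerFactor_le hn (by linarith : 1 ≤ 1 + x)
  rw [neg_add, rpow_add (by linarith), rpow_neg_one] at hlow
  rw [sub_add_cancel_left, div_eq_inv_mul] at hup
  have hlow1 : (n : ℝ)⁻¹ * (n : ℝ) ^ (-x) ≤ logEulerFactor 1 n * (n : ℝ) ^ (-x) := by
    gcongr
    exact inv_le_logEulerFactor_one hn
  have hup1 : logEulerFactor 1 n * (n : ℝ) ^ (-x) ≤ ((n : ℝ) - 1)⁻¹ * (n : ℝ) ^ (-x) := by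
    gcongr
    exact logEulerFactor_one_le_inv hn
  calc |logEulerFactor 1 n * (n : ℝ) ^ (-x) - logEulerFactor (1 + x) n|
      ≤ (((n : ℝ) - 1)⁻¹ - (n : ℝ)⁻¹) * (n : ℝ) ^ (-x) := by
        rw [abs_le]
        constructor <;> linarith
    _ ≤ ((n : ℝ) - 1)⁻¹ - (n : ℝ)⁻¹ :=
        mul_le_of_le_one_right (inv_sub_one_sub_inv_nonneg (by linarith)) hpow1
    _ ≤ 2 * ((n : ℝ) ^ 2)⁻¹ := inv_sub_one_sub_inv_le hn2

lemma summable_two_mul_inv_sq : Summable fun n : ℕ ↦ 2 * ((n : ℝ) ^ 2)⁻¹ :=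
  (summable_nat_pow_inv.2 one_lt_two).mul_left 2

lemma summable_logEulerFactor_mul_rpow (hx : 0 < x) :
    Summable fun n : ℕ ↦ logEulerFactor 1 n * (n : ℝ) ^ (-x) := by
  simpa using (hasSum_logEulerFactor hx).summable.add
    (summable_two_mul_inv_sq.of_norm_bounded (abs_logEulerFactor_mul_rpow_sub_le hx))

lemma tendsto_tsum_logEulerFactor_mul_rpow_sub :
    Tendsto (fun x : ℝ ↦ ∑' n : ℕ, (logEulerFactor 1 n * (n : ℝ) ^ (-x) -
      logEulerFactor (1 + x) n)) (𝓝[>] 0) (𝓝 0) := by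
  have hterm (n : ℕ) : Tendsto (fun x : ℝ ↦ logEulerFactor 1 n * (n : ℝ) ^ (-x) -
      logEulerFactor (1 + x) n) (𝓝[>] 0) (𝓝 0) := by
    by_cases hn : n.Prime
    swap
    · simp [logEulerFactor_of_not_prime hn]
    have hn0 : (n : ℝ) ≠ 0 := by exact_mod_cast hn.ne_zero
    have hlt := rpow_neg_lt_one hn one_pos
    have hcont : ContinuousAt (fun x : ℝ ↦ logEulerFactor 1 n * (n : ℝ) ^ (-x) -
        logEulerFactor (1 + x) n) 0 := by
      simp only [logEulerFactor, if_pos hn]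
      refine (continuousAt_const.mul ?_).sub (ContinuousAt.log ?_ ?_).neg
      · exact continuousAt_const.rpow continuousAt_neg (Or.inl hn0)
      · exact continuousAt_const.sub (continuousAt_const.rpow (by fun_prop) (Or.inl hn0))
      · rw [add_zero]
        linarith
    simpa using hcont.tendsto.mono_left nhdsWithin_le_nhds
  simpa only [tsum_zero] using tendsto_tsum_of_dominated_convergence summable_two_mul_inv_sq hterm
    (eventually_mem_nhdsWithin.mono fun x hx ↦ abs_logEulerFactor_mul_rpow_sub_le hx)

lemma tendsto_tsum_logEulerFactor_mul_rpow_add_log :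
    Tendsto (fun x : ℝ ↦ ∑' n : ℕ, logEulerFactor 1 n * (n : ℝ) ^ (-x) + log x)
      (𝓝[>] 0) (𝓝 0) := by
  have hsum := tendsto_tsum_logEulerFactor_mul_rpow_sub.add tendsto_log_norm_riemannZeta_add_log
  rw [add_zero] at hsum
  refine hsum.congr' ?_
  filter_upwards [self_mem_nhdsWithin] with x hx
  have hzeta := hasSum_logEulerFactor hx
  rw [(summable_logEulerFactor_mul_rpow hx).tsum_sub hzeta.summable, hzeta.tsum_eq]
  ring

end ZetaPole

/-- The least integer `≥ exp k`; the intervals `[expCeil k, expCeil (k + 1))` partition the positive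
integers into blocks on which `log` is within `1` of `k`. -/
noncomputable def expCeil (k : ℕ) : ℕ := ⌈exp k⌉₊

lemma expCeil_mono : Monotone expCeil := fun _ _ h ↦
  Nat.ceil_mono (exp_le_exp.2 (by exact_mod_cast h))

lemma exp_le_expCeil (k : ℕ) : exp k ≤ expCeil k := Nat.le_ceil _

lemma expCeil_le_exp (k : ℕ) : (expCeil k : ℝ) ≤ exp (k + 1) := by
  have hceil : (expCeil k : ℝ) ≤ exp k + 1 := (Nat.ceil_lt_add_one (exp_pos (k : ℝ)).le).le
  have hone : 1 ≤ exp (k : ℝ) := one_le_exp k.cast_nonneg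
  rw [exp_add]
  nlinarith [add_one_le_exp (1 : ℝ)]

lemma tendsto_expCeil : Tendsto expCeil atTop atTop :=
  tendsto_nat_ceil_atTop.comp (tendsto_exp_atTop.comp tendsto_natCast_atTop_atTop)

lemma tendsto_log_log_expCeil_sub_log :
    Tendsto (fun n : ℕ ↦ log (log (expCeil (n + 1))) - log (n + 1)) atTop (𝓝 0) := by
  have hlow (n : ℕ) : (n : ℝ) + 1 ≤ log (expCeil (n + 1)) := by
    simpa using log_le_log (exp_pos _) (exp_le_expCeil (n + 1))
  have hup (n : ℕ) : log (expCeil (n + 1)) ≤ n + 1 + 1 := by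
    simpa using log_le_log ((exp_pos _).trans_le (exp_le_expCeil (n + 1))) (expCeil_le_exp (n + 1))
  have hpos (n : ℕ) : (0 : ℝ) < n + 1 := n.cast_add_one_pos
  refine squeeze_zero (fun n ↦ sub_nonneg.2 (log_le_log (hpos n) (hlow n))) (fun n ↦ ?_)
    tendsto_one_div_add_atTop_nhds_zero_nat
  have hlog := log_sub_log_mul_le (hpos n) ((hpos n).trans_le (hlow n))
  rw [le_div_iff₀ (hpos n)]
  linarith [hup n]

lemma tendsto_one_sub_exp_neg_div : Tendsto (fun x : ℝ ↦ (1 - exp (-x)) / x) (𝓝[>] 0) (𝓝 1) := by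
  have hderiv : HasDerivAt (fun x : ℝ ↦ -exp (-x)) 1 0 := by
    simpa using (hasDerivAt_neg (0 : ℝ)).exp.fun_neg
  refine (hderiv.tendsto_slope_zero_right).congr fun x ↦ ?_
  simp only [zero_add, neg_zero, exp_zero, smul_eq_mul]
  ring

lemma tendsto_exp_neg_nhdsLT_one : Tendsto (fun x : ℝ ↦ exp (-x)) (𝓝[>] 0) (𝓝[<] 1) := by
  refine tendsto_nhdsWithin_iff.2 ⟨?_, ?_⟩
  · have hcont : ContinuousAt (fun x : ℝ ↦ exp (-x)) 0 := by fun_prop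
    simpa using hcont.tendsto.mono_left nhdsWithin_le_nhds
  · filter_upwards [self_mem_nhdsWithin] with x (hx : 0 < x)
    exact exp_lt_one_iff.2 (neg_neg_of_pos hx)

lemma hasSum_inv_mul_exp_neg_pow {x : ℝ} (hx : 0 < x) :
    HasSum (fun k : ℕ ↦ (k : ℝ)⁻¹ * exp (-x) ^ k) (-log (1 - exp (-x))) := by
  have hlog := hasSum_pow_div_log_of_abs_lt_one (x := exp (-x))
    (by rw [abs_exp]; exact exp_lt_one_iff.2 (neg_neg_of_pos hx))
  rw [← hasSum_nat_add_iff' 1]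
  simpa [div_eq_inv_mul] using hlog

section AbelianComparison

variable {b : ℕ → ℝ} {x : ℝ}

/-- The sum of `b` over the integers `m` with `exp k ≤ m < exp (k + 1)`. -/
noncomputable def expBlockSum (b : ℕ → ℝ) (k : ℕ) : ℝ :=
  ∑ m ∈ Ico (expCeil k) (expCeil (k + 1)), b m

lemma sum_expBlockSum (hb0 : b 0 = 0) (n : ℕ) :
    ∑ k ∈ range n, expBlockSum b k = ∑ m ∈ range (expCeil n), b m := by
  induction n with
  | zero => simp [expCeil, hb0]
  | succ n ih =>
    rw [sum_range_succ, ih, expBlockSum, range_eq_Ico, range_eq_Ico]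
    exact sum_Ico_consecutive b (Nat.zero_le _) (expCeil_mono n.le_succ)

lemma hasSum_expBlockSum (hb0 : b 0 = 0) (hb : ∀ n, 0 ≤ b n) (hsum : Summable b) :
    HasSum (expBlockSum b) (∑' n, b n) := by
  refine (hasSum_iff_tendsto_nat_of_nonneg (fun k ↦ sum_nonneg fun m _ ↦ hb m) _).2 ?_
  exact (hsum.hasSum.tendsto_sum_nat.comp tendsto_expCeil).congr fun n ↦
    (sum_expBlockSum hb0 n).symm

lemma rpow_neg_mem_Icc_of_mem_expBlock (hx : 0 < x) {k m : ℕ}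
    (hm : m ∈ Ico (expCeil k) (expCeil (k + 1))) :
    (m : ℝ) ^ (-x) ≤ exp (-x) ^ k ∧ exp (-x) ^ k ≤ exp x * (m : ℝ) ^ (-x) := by
  rw [mem_Ico] at hm
  have hlow : exp k ≤ m := Nat.ceil_le.1 hm.1
  have hup : (m : ℝ) < exp (k + 1 : ℕ) := Nat.lt_ceil.1 hm.2
  have hm0 : (0 : ℝ) < m := (exp_pos _).trans_le hlow
  have hlog_low : (k : ℝ) ≤ log m := (le_log_iff_exp_le hm0).2 hlow
  have hlog_up : log m < (k + 1 : ℕ) := (log_lt_iff_lt_exp hm0).2 hup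
  push_cast at hlog_up
  rw [rpow_def_of_pos hm0, ← exp_nat_mul, ← exp_add, exp_le_exp, exp_le_exp]
  constructor <;> nlinarith

lemma expBlockSum_mul_rpow_le (hb : ∀ n, 0 ≤ b n) (hx : 0 < x) (k : ℕ) :
    expBlockSum (fun n ↦ b n * (n : ℝ) ^ (-x)) k ≤ expBlockSum b k * exp (-x) ^ k := by
  rw [expBlockSum, expBlockSum, sum_mul]
  exact sum_le_sum fun m hm ↦
    mul_le_mul_of_nonneg_left (rpow_neg_mem_Icc_of_mem_expBlock hx hm).1 (hb m)

lemma expBlockSum_mul_exp_le (hb : ∀ n, 0 ≤ b n) (hx : 0 < x) (k : ℕ) :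
    expBlockSum b k * exp (-x) ^ k ≤
      exp x * expBlockSum (fun n ↦ b n * (n : ℝ) ^ (-x)) k := by
  rw [expBlockSum, expBlockSum, sum_mul, mul_sum]
  refine sum_le_sum fun m hm ↦ ?_
  rw [mul_left_comm]
  exact mul_le_mul_of_nonneg_left (rpow_neg_mem_Icc_of_mem_expBlock hx hm).2 (hb m)

lemma summable_expBlockSum_mul_exp (hb0 : b 0 = 0) (hb : ∀ n, 0 ≤ b n) (hx : 0 < x)
    (hsum : Summable fun n : ℕ ↦ b n * (n : ℝ) ^ (-x)) :
    Summable fun k ↦ expBlockSum b k * exp (-x) ^ k :=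
  .of_nonneg_of_le (fun k ↦ mul_nonneg (sum_nonneg fun m _ ↦ hb m) (by positivity))
    (expBlockSum_mul_exp_le hb hx)
    ((hasSum_expBlockSum (by simp [hb0]) (fun n ↦ mul_nonneg (hb n) (by positivity))
      hsum).summable.mul_left _)

lemma tsum_expBlockSum_mul_exp_mem_Icc (hb0 : b 0 = 0) (hb : ∀ n, 0 ≤ b n) (hx : 0 < x)
    (hsum : Summable fun n : ℕ ↦ b n * (n : ℝ) ^ (-x)) :
    ∑' k, expBlockSum b k * exp (-x) ^ k ∈ Set.Icc (∑' n : ℕ, b n * (n : ℝ) ^ (-x))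
      (exp x * ∑' n : ℕ, b n * (n : ℝ) ^ (-x)) := by
  have hblocks := hasSum_expBlockSum (b := fun n ↦ b n * (n : ℝ) ^ (-x)) (by simp [hb0])
    (fun n ↦ mul_nonneg (hb n) (by positivity)) hsum
  have hexp := summable_expBlockSum_mul_exp hb0 hb hx hsum
  rw [← hblocks.tsum_eq, ← tsum_mul_left]
  exact ⟨hblocks.summable.tsum_le_tsum (expBlockSum_mul_rpow_le hb hx) hexp,
    hexp.tsum_le_tsum (expBlockSum_mul_exp_le hb hx) (hblocks.summable.mul_left _)⟩

lemma tsum_expBlockSum_sub_inv_mul_exp (hb0 : b 0 = 0) (hb : ∀ n, 0 ≤ b n) (hx : 0 < x)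
    (hsum : Summable fun n : ℕ ↦ b n * (n : ℝ) ^ (-x)) :
    ∑' k : ℕ, (expBlockSum b k - (k : ℝ)⁻¹) * exp (-x) ^ k =
      ∑' k, expBlockSum b k * exp (-x) ^ k + log x + log ((1 - exp (-x)) / x) := by
  have hlog := hasSum_inv_mul_exp_neg_pow hx
  simp_rw [sub_mul]
  rw [(summable_expBlockSum_mul_exp hb0 hb hx hsum).tsum_sub hlog.summable, hlog.tsum_eq,
    log_div (sub_pos.2 (exp_lt_one_iff.2 (neg_neg_of_pos hx))).ne' hx.ne']
  ring

lemma tendsto_tsum_expBlockSum_sub_inv_mul_exp (hb0 : b 0 = 0) (hb : ∀ n, 0 ≤ b n)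
    (hsum : ∀ x : ℝ, 0 < x → Summable fun n : ℕ ↦ b n * (n : ℝ) ^ (-x))
    (hpole : Tendsto (fun x : ℝ ↦ ∑' n : ℕ, b n * (n : ℝ) ^ (-x) + log x) (𝓝[>] 0) (𝓝 0)) :
    Tendsto (fun x : ℝ ↦ ∑' k : ℕ, (expBlockSum b k - (k : ℝ)⁻¹) * exp (-x) ^ k)
      (𝓝[>] 0) (𝓝 0) := by
  set Z : ℝ → ℝ := fun x ↦ ∑' n : ℕ, b n * (n : ℝ) ^ (-x)
  have hid : Tendsto (fun x : ℝ ↦ x) (𝓝[>] 0) (𝓝 0) := tendsto_id.mono_left nhdsWithin_le_nhds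
  have hmul_log : Tendsto (fun x : ℝ ↦ x * log x) (𝓝[>] 0) (𝓝 0) := by
    simpa using (continuous_mul_log.tendsto 0).mono_left nhdsWithin_le_nhds
  have herror : Tendsto (fun x ↦ 2 * (x * Z x)) (𝓝[>] 0) (𝓝 0) := by
    have hprod := ((hid.mul hpole).sub hmul_log).const_mul 2
    simp only [mul_zero, sub_zero] at hprod
    exact hprod.congr fun x ↦ by ring
  have hlow : Tendsto (fun x ↦ Z x + log x + log ((1 - exp (-x)) / x)) (𝓝[>] 0) (𝓝 0) := by
    simpa using hpole.add (tendsto_one_sub_exp_neg_div.log one_ne_zero)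
  have hup := hlow.add herror
  rw [add_zero] at hup
  refine tendsto_of_tendsto_of_tendsto_of_le_of_le' hlow hup ?_ ?_
  · filter_upwards [self_mem_nhdsWithin] with x hx
    rw [tsum_expBlockSum_sub_inv_mul_exp hb0 hb hx (hsum x hx)]
    linarith [(tsum_expBlockSum_mul_exp_mem_Icc hb0 hb hx (hsum x hx)).1]
  · filter_upwards [Ioo_mem_nhdsGT one_pos] with x hx
    rw [tsum_expBlockSum_sub_inv_mul_exp hb0 hb hx.1 (hsum x hx.1)]
    have hexp : exp x ≤ 1 + 2 * x := by
      have habs := abs_exp_sub_one_le (x := x) (by rw [abs_of_pos hx.1]; exact hx.2.le)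
      rw [abs_of_pos hx.1] at habs
      linarith [le_abs_self (exp x - 1)]
    have hZ : 0 ≤ Z x := tsum_nonneg fun n ↦ mul_nonneg (hb n) (by positivity)
    have hblock := (tsum_expBlockSum_mul_exp_mem_Icc hb0 hb hx.1 (hsum x hx.1)).2
    linarith [mul_le_mul_of_nonneg_right hexp hZ]

-- Abel's limit theorem for `∑ (expBlockSum b k - 1 / k) t ^ k`, whose value at `t = 1` is `c - γ`.
theorem eq_eulerMascheroniConstant_of_tendsto (hb0 : b 0 = 0) (hb : ∀ n, 0 ≤ b n)
    (hsum : ∀ x : ℝ, 0 < x → Summable fun n : ℕ ↦ b n * (n : ℝ) ^ (-x))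
    (hpole : Tendsto (fun x : ℝ ↦ ∑' n : ℕ, b n * (n : ℝ) ^ (-x) + log x) (𝓝[>] 0) (𝓝 0))
    {c : ℝ} (hc : Tendsto (fun n : ℕ ↦ ∑ k ∈ range n, b k - log (log n)) atTop (𝓝 c)) :
    c = eulerMascheroniConstant := by
  have hseries : Tendsto (fun n ↦ ∑ k ∈ range n, (expBlockSum b k - (k : ℝ)⁻¹)) atTop
      (𝓝 (c - eulerMascheroniConstant)) := by
    rw [← tendsto_add_atTop_iff_nat 1]
    have hlim := ((hc.comp (tendsto_expCeil.comp (tendsto_add_atTop_nat 1))).add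
      tendsto_log_log_expCeil_sub_log).sub tendsto_harmonic_sub_log_add_one
    rw [add_zero] at hlim
    refine hlim.congr fun n ↦ ?_
    rw [sum_sub_distrib, sum_expBlockSum hb0, sum_range_succ' fun k : ℕ ↦ (k : ℝ)⁻¹]
    simp [harmonic]
  have habel := (tendsto_tsum_powerSeries_nhdsWithin_lt hseries).comp tendsto_exp_neg_nhdsLT_one
  exact sub_eq_zero.1 (tendsto_nhds_unique habel
    (tendsto_tsum_expBlockSum_sub_inv_mul_exp hb0 hb hsum hpole))

end AbelianComparison

section ThirdMertens

theorem tendsto_sum_logEulerFactor_sub_log_log :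
    Tendsto (fun n : ℕ ↦ ∑ k ∈ range n, logEulerFactor 1 k - log (log n)) atTop
      (𝓝 eulerMascheroniConstant) := by
  obtain ⟨c, hc⟩ := exists_tendsto_sum_logEulerFactor_sub_log_log
  rwa [← eq_eulerMascheroniConstant_of_tendsto
    (logEulerFactor_of_not_prime Nat.not_prime_zero) (logEulerFactor_nonneg one_pos)
    (fun _ ↦ summable_logEulerFactor_mul_rpow) tendsto_tsum_logEulerFactor_mul_rpow_add_log hc]

lemma mertensProduct_eq_exp (z : ℕ) :
    mertensProduct z = exp (-∑ k ∈ range (z + 1), logEulerFactor 1 k) := by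
  rw [← sum_neg_distrib, exp_sum, mertensProduct, Nat.primesLE_eq_filter_range, prod_filter]
  refine prod_congr rfl fun p _ ↦ ?_
  rw [logEulerFactor]
  split_ifs with hp
  · rw [neg_neg, exp_log (sub_pos.2 (rpow_neg_lt_one hp one_pos)), rpow_neg_one]
  · simp

theorem tendsto_mertensProduct_mul_log :
    Tendsto (fun z : ℕ ↦ mertensProduct z * log (z + 1)) atTop
      (𝓝 (exp (-eulerMascheroniConstant))) := by
  have hexp := (tendsto_sum_logEulerFactor_sub_log_log.comp (tendsto_add_atTop_nat 1)).neg.rexp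
  refine hexp.congr' ?_
  filter_upwards [eventually_ge_atTop 1] with z hz
  have hlog : 0 < log ((z + 1 : ℕ) : ℝ) := log_pos (by exact_mod_cast (by lia : 1 < z + 1))
  rw [Function.comp_apply, neg_sub, sub_eq_add_neg, exp_add, exp_log hlog,
    ← mertensProduct_eq_exp, mul_comm, Nat.cast_add_one]

end ThirdMertens

/-! ### Sieve bounds for the sum of the cyclic numbers -/

lemma cyclicSum_natCast (N : ℕ) :
    cyclicSum N = ∑ n ∈ range (N + 1) with IsCyclicNum n, (n : ℝ) := by
  rw [cyclicSum, Nat.floor_natCast]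

lemma abs_sum_coprime_primorial_sub_le {N : ℕ} (hN : 0 < N) (z : ℕ) :
    |∑ n ∈ range (N + 1) with (primorial z).Coprime n, (n : ℝ) - mertensProduct z * N ^ 2 / 2| ≤
      5 * (N : ℝ) * 4 ^ z := by
  have hsum := abs_sum_coprime_sub_le (primorial_pos z) hN
  rw [totient_primorial_div] at hsum
  have hprimorial : (primorial z : ℝ) ≤ 4 ^ z := by exact_mod_cast primorial_le_four_pow z
  exact hsum.trans (by gcongr)

lemma sum_natCast_le_add_mul_card {S R B : Finset ℕ} {N : ℕ}
    (hS : ∀ n ∈ S, 0 < n → n ∈ R ∪ B) (hB : ∀ n ∈ B, n ≤ N) :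
    ∑ n ∈ S, (n : ℝ) ≤ ∑ n ∈ R, (n : ℝ) + N * #B := by
  calc ∑ n ∈ S, (n : ℝ) = ∑ n ∈ S with 0 < n, (n : ℝ) :=
        (sum_filter_of_ne fun n _ hn ↦ Nat.pos_of_ne_zero (by exact_mod_cast hn)).symm
    _ ≤ ∑ n ∈ R ∪ B, (n : ℝ) := by
        refine sum_le_sum_of_subset_of_nonneg (fun n hn ↦ ?_) fun n _ _ ↦ n.cast_nonneg
        rw [mem_filter] at hn
        exact hS n hn.1 hn.2
    _ ≤ ∑ n ∈ R, (n : ℝ) + ∑ n ∈ B, (n : ℝ) := by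
        rw [← sum_union_inter]
        exact le_add_of_nonneg_right (sum_nonneg fun n _ ↦ n.cast_nonneg)
    _ ≤ ∑ n ∈ R, (n : ℝ) + N * #B := by
        rw [mul_comm, ← nsmul_eq_mul]
        gcongr
        exact sum_le_card_nsmul _ _ _ fun n hn ↦ by exact_mod_cast hB n hn

section UpperBound

lemma not_dvd_of_isCyclicNum {n p q : ℕ} (hn : IsCyclicNum n) (hp : p.Prime) (hpn : p ∣ n)
    (hq : q.Prime) (hqp : q ≡ 1 [MOD p]) : ¬ q ∣ n := by
  intro hqn
  have htot : q - 1 ∣ n.totient := Nat.totient_prime hq ▸ Nat.totient_dvd_of_dvd hqn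
  have hdvd : p ∣ q - 1 := (Nat.modEq_iff_dvd' hq.one_le).1 hqp.symm
  have hgcd : p ∣ n.gcd n.totient := Nat.dvd_gcd hpn (hdvd.trans htot)
  rw [hn.2] at hgcd
  exact hp.not_dvd_one hgcd

/-- The multiples `n ∈ [1, N]` of `p` which no prime `q ≤ y` with `q ≡ 1 (mod p)` prevents from
being cyclic. -/
def unobstructedMultiples (p y N : ℕ) : Finset ℕ :=
  {n ∈ Ioc 0 N | p ∣ n ∧ ∀ q ∈ primesOneMod p y, ¬ q ∣ n}

lemma card_unobstructedMultiples_le_card {p : ℕ} (hp : p.Prime) (y N : ℕ) :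
    #(unobstructedMultiples p y N) ≤
      #{m ∈ Ioc 0 (N / p) | ∀ q ∈ primesOneMod p y, ¬ q ∣ m} := by
  refine card_le_card_of_injOn (· / p) (fun n hn ↦ ?_) fun a ha b hb hab ↦ ?_
  · simp only [unobstructedMultiples, coe_filter, mem_Ioc, Set.mem_ofPred_eq] at hn ⊢
    obtain ⟨⟨hn0, hnN⟩, hpn, havoid⟩ := hn
    exact ⟨⟨Nat.div_pos (Nat.le_of_dvd hn0 hpn) hp.pos, Nat.div_le_div_right hnN⟩,
      fun q hq hqn ↦ havoid q hq (hqn.trans (Nat.div_dvd_of_dvd hpn))⟩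
  · simp only [unobstructedMultiples, coe_filter, mem_Ioc, Set.mem_ofPred_eq] at ha hb
    exact (Nat.div_left_inj ha.2.1 hb.2.1).1 hab

lemma card_unobstructedMultiples_mul_sum_inv_le {p : ℕ} (hp : p.Prime) (y N : ℕ) :
    (#(unobstructedMultiples p y N) : ℝ) * ∑ q ∈ primesOneMod p y, (q : ℝ)⁻¹ ≤
      N / p + 2 * (y + 1) := by
  have hcard : (#(primesOneMod p y) : ℝ) ≤ y + 1 := by
    exact_mod_cast (card_filter_le _ _).trans (card_range (y + 1)).le
  calc (#(unobstructedMultiples p y N) : ℝ) * ∑ q ∈ primesOneMod p y, (q : ℝ)⁻¹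
      ≤ (#{m ∈ Ioc 0 (N / p) | ∀ q ∈ primesOneMod p y, ¬ q ∣ m} : ℝ) *
          ∑ q ∈ primesOneMod p y, (q : ℝ)⁻¹ := by
        refine mul_le_mul_of_nonneg_right ?_ (sum_nonneg fun _ _ ↦ by positivity)
        exact_mod_cast card_unobstructedMultiples_le_card hp y N
    _ ≤ (N / p : ℕ) + 2 * #(primesOneMod p y) :=
        card_forall_not_dvd_mul_sum_inv_le (fun q hq ↦ (mem_primesOneMod.1 hq).2.1) _
    _ ≤ N / p + 2 * (y + 1) := by gcongr; exact Nat.cast_div_le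

variable {N y z : ℕ} {L : ℝ}

lemma card_unobstructedMultiples_le (hL : 0 < L) (hy : (2 * (y : ℝ) + 2) * z ≤ N) {p : ℕ}
    (hp : p.Prime) (hpz : p ≤ z)
    (hsum : L / (8 * p) ≤ ∑ q ∈ primesOneMod p y, (q : ℝ)⁻¹) :
    (#(unobstructedMultiples p y N) : ℝ) ≤ 16 * N / L := by
  have hp0 : (0 : ℝ) < p := by exact_mod_cast hp.pos
  have hbound : (#(unobstructedMultiples p y N) : ℝ) * (L / (8 * p)) ≤ N / p + 2 * (y + 1) :=
    le_trans (by gcongr) (card_unobstructedMultiples_mul_sum_inv_le hp y N)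
  have hpy : (2 * (y : ℝ) + 2) * p ≤ N := le_trans (by gcongr) hy
  rw [le_div_iff₀ hL]
  calc (#(unobstructedMultiples p y N) : ℝ) * L
      = #(unobstructedMultiples p y N) * (L / (8 * p)) * (8 * p) := by field_simp
    _ ≤ (N / p + 2 * (y + 1)) * (8 * p) := by gcongr
    _ = 8 * N + 8 * ((2 * y + 2) * p) := by field_simp
    _ ≤ 16 * N := by linarith

lemma mem_union_unobstructedMultiples {n : ℕ} (hn : IsCyclicNum n) (hnN : n ≤ N) (y z : ℕ) :
    n ∈ ({n ∈ range (N + 1) | (primorial z).Coprime n} : Finset ℕ) ∪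
      (Nat.primesLE z).biUnion fun p ↦ unobstructedMultiples p y N := by
  rw [mem_union, mem_filter, mem_range_succ_iff, mem_biUnion, coprime_primorial_iff]
  by_contra! hcon
  obtain ⟨p, hp, hpz, hpn⟩ := hcon.1 hnN
  refine hcon.2 p (Nat.mem_primesLE.2 ⟨hpz, hp⟩) (mem_filter.2 ⟨mem_Ioc.2 ⟨hn.1, hnN⟩, hpn, ?_⟩)
  intro q hq
  obtain ⟨-, hq, hqp⟩ := mem_primesOneMod.1 hq
  exact not_dvd_of_isCyclicNum hn hp hpn hq hqp

theorem cyclicSum_div_sq_le (hN : 0 < N) (hL : 0 < L) (hy : (2 * (y : ℝ) + 2) * z ≤ N)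
    (hsum : ∀ p, p.Prime → p ≤ z → L / (8 * p) ≤ ∑ q ∈ primesOneMod p y, (q : ℝ)⁻¹) :
    cyclicSum N / N ^ 2 ≤ mertensProduct z / 2 + 5 * (4 ^ z / N) + 16 * (z / L) := by
  set B := (Nat.primesLE z).biUnion fun p ↦ unobstructedMultiples p y N
  have hB : (#B : ℝ) ≤ z * (16 * N / L) := by
    have hcardz : #(Nat.primesLE z) ≤ z := by
      rw [Nat.primesLE_eq_filter_Icc_one]
      simpa using card_filter_le (Icc 1 z) Nat.Prime
    calc (#B : ℝ) ≤ ∑ p ∈ Nat.primesLE z, (#(unobstructedMultiples p y N) : ℝ) := by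
          exact_mod_cast card_biUnion_le
      _ ≤ #(Nat.primesLE z) • (16 * N / L) := sum_le_card_nsmul _ _ _ fun p hp ↦ by
          obtain ⟨hpz, hp⟩ := Nat.mem_primesLE.1 hp
          exact card_unobstructedMultiples_le hL hy hp hpz (hsum p hp hpz)
      _ ≤ z * (16 * N / L) := by rw [nsmul_eq_mul]; gcongr
  have hsplit : cyclicSum N ≤
      ∑ n ∈ range (N + 1) with (primorial z).Coprime n, (n : ℝ) + N * #B := by
    rw [cyclicSum_natCast]
    refine sum_natCast_le_add_mul_card (fun n hn _ ↦ ?_) fun n hn ↦ ?_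
    · rw [mem_filter, mem_range_succ_iff] at hn
      exact mem_union_unobstructedMultiples hn.2 hn.1 y z
    · obtain ⟨p, -, hn⟩ := mem_biUnion.1 hn
      exact (mem_Ioc.1 (mem_filter.1 hn).1).2
  have hcoprime := (abs_le.1 (abs_sum_coprime_primorial_sub_le hN z)).2
  rw [div_le_iff₀ (by positivity)]
  calc cyclicSum N ≤ mertensProduct z * N ^ 2 / 2 + 5 * N * 4 ^ z + N * #B := by linarith
    _ ≤ mertensProduct z * N ^ 2 / 2 + 5 * N * 4 ^ z + N * (z * (16 * N / L)) := by gcongr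
    _ = (mertensProduct z / 2 + 5 * (4 ^ z / N) + 16 * (z / L)) * N ^ 2 := by
        field_simp

end UpperBound

section LowerBound

lemma exists_prime_of_not_isCyclicNum {n : ℕ} (hn : 0 < n) (hcyc : ¬ IsCyclicNum n) :
    ∃ p, p.Prime ∧ p ∣ n ∧ (p ^ 2 ∣ n ∨ ∃ q, q.Prime ∧ q ∣ n ∧ q ≡ 1 [MOD p]) := by
  obtain ⟨p, hp, hdvd⟩ := Nat.exists_prime_and_dvd fun hgcd ↦ hcyc ⟨hn, hgcd⟩
  have hpn := hdvd.trans (Nat.gcd_dvd_left _ _)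
  have htot := hdvd.trans (Nat.gcd_dvd_right _ _)
  refine ⟨p, hp, hpn, ?_⟩
  rw [Nat.totient_eq_prod_factorization hn.ne', Finsupp.prod, hp.prime.dvd_finsetProd_iff] at htot
  obtain ⟨q, hq, hpq⟩ := htot
  rw [Nat.support_factorization, Nat.mem_primeFactors] at hq
  rcases hp.dvd_mul.1 hpq with hpow | hsub
  · left
    obtain rfl : p = q := (Nat.prime_dvd_prime_iff_eq hp hq.1).1 (hp.dvd_of_dvd_pow hpow)
    have hexp : n.factorization p - 1 ≠ 0 := fun h0 ↦ by
      rw [h0, pow_zero] at hpow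
      exact hp.not_dvd_one hpow
    exact (hp.pow_dvd_iff_le_factorization hn.ne').2 (by lia)
  · exact Or.inr ⟨q, hq.1, hq.2.1, ((Nat.modEq_iff_dvd' hq.1.one_le).2 hsub).symm⟩

/-- The integers `n ∈ [1, N]` which the prime `p` prevents from being cyclic: `p ^ 2 ∣ n`, or
`p * q ∣ n` for some prime `q ≡ 1 (mod p)`. -/
def obstructedMultiples (p N : ℕ) : Finset ℕ :=
  {n ∈ Ioc 0 N | p ^ 2 ∣ n} ∪ (primesOneMod p N).biUnion fun q ↦ {n ∈ Ioc 0 N | p * q ∣ n}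

lemma mem_obstructedMultiples {p n N : ℕ} (hp : p.Prime) (hn : n ∈ Ioc 0 N) (hpn : p ∣ n)
    (hobs : p ^ 2 ∣ n ∨ ∃ q, q.Prime ∧ q ∣ n ∧ q ≡ 1 [MOD p]) :
    n ∈ obstructedMultiples p N := by
  rw [obstructedMultiples, mem_union]
  refine hobs.imp (fun hsq ↦ mem_filter.2 ⟨hn, hsq⟩) ?_
  rintro ⟨q, hq, hqn, hqp⟩
  have hne : p ≠ q := by
    rintro rfl
    exact hp.not_dvd_one (hqp.dvd_iff dvd_rfl |>.1 dvd_rfl)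
  obtain ⟨hn0, hnN⟩ := mem_Ioc.1 hn
  exact mem_biUnion.2 ⟨q, mem_primesOneMod.2 ⟨(Nat.le_of_dvd hn0 hqn).trans hnN, hq, hqp⟩,
    mem_filter.2 ⟨hn, ((Nat.coprime_primes hp hq).2 hne).mul_dvd_of_dvd_of_dvd hpn hqn⟩⟩

lemma le_of_mem_obstructedMultiples {p n N : ℕ} (hn : n ∈ obstructedMultiples p N) : n ≤ N := by
  simp only [obstructedMultiples, mem_union, mem_filter, mem_biUnion, mem_Ioc] at hn
  rcases hn with hn | ⟨q, -, hn⟩ <;> exact hn.1.2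

lemma card_multiples_le (d N : ℕ) : (#{n ∈ Ioc 0 N | d ∣ n} : ℝ) ≤ N * (d : ℝ)⁻¹ := by
  rw [Nat.Ioc_filter_dvd_card_eq_div, ← div_eq_mul_inv]
  exact Nat.cast_div_le

lemma exists_card_obstructedMultiples_le : ∃ C : ℝ, 0 < C ∧ ∀ p N : ℕ, p.Prime → 16 ≤ N →
    (#(obstructedMultiples p N) : ℝ) ≤ N * (1 + C * log (log N)) * ((p : ℝ) ^ 2)⁻¹ := by
  obtain ⟨C, hC, hsum⟩ := exists_sum_inv_primesOneMod_le
  refine ⟨C, hC, fun p N hp hN ↦ ?_⟩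
  have hcard : #(obstructedMultiples p N) ≤ #{n ∈ Ioc 0 N | p ^ 2 ∣ n} +
      ∑ q ∈ primesOneMod p N, #{n ∈ Ioc 0 N | p * q ∣ n} :=
    (card_union_le _ _).trans (by gcongr; exact card_biUnion_le)
  calc (#(obstructedMultiples p N) : ℝ) ≤ (#{n ∈ Ioc 0 N | p ^ 2 ∣ n} : ℝ) +
        ∑ q ∈ primesOneMod p N, (#{n ∈ Ioc 0 N | p * q ∣ n} : ℝ) := by exact_mod_cast hcard
    _ ≤ N * ((p ^ 2 : ℕ) : ℝ)⁻¹ + ∑ q ∈ primesOneMod p N, N * ((p * q : ℕ) : ℝ)⁻¹ := by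
        gcongr <;> exact card_multiples_le _ _
    _ = N * ((p : ℝ) ^ 2)⁻¹ + N * (p : ℝ)⁻¹ * ∑ q ∈ primesOneMod p N, (q : ℝ)⁻¹ := by
        rw [mul_sum, Nat.cast_pow]
        congr 1
        refine sum_congr rfl fun q _ ↦ ?_
        rw [Nat.cast_mul, mul_inv, mul_assoc]
    _ ≤ N * ((p : ℝ) ^ 2)⁻¹ + N * (p : ℝ)⁻¹ * (C * log (log N) / p) := by
        gcongr
        exact hsum p N hp hN
    _ = N * (1 + C * log (log N)) * ((p : ℝ) ^ 2)⁻¹ := by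
        rw [div_eq_mul_inv, sq, mul_inv]
        ring

lemma sum_inv_sq_Ioc_le {z : ℕ} (hz : 0 < z) (N : ℕ) :
    ∑ n ∈ Ioc z N, ((n : ℝ) ^ 2)⁻¹ ≤ (z : ℝ)⁻¹ := by
  rcases le_total z N with hzN | hNz
  · exact (sum_Ioc_inv_sq_le_sub hz.ne' hzN).trans (sub_le_self _ (by positivity))
  · rw [Ioc_eq_empty_of_le hNz, sum_empty]
    positivity

lemma exists_card_biUnion_obstructedMultiples_le : ∃ C : ℝ, 0 < C ∧ ∀ N z : ℕ, 16 ≤ N → 0 < z →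
    (#({p ∈ Ioc z N | p.Prime}.biUnion fun p ↦ obstructedMultiples p N) : ℝ) ≤
      N * ((1 + C * log (log N)) / z) := by
  obtain ⟨C, hC, hcard⟩ := exists_card_obstructedMultiples_le
  refine ⟨C, hC, fun N z hN hz ↦ ?_⟩
  have hloglog : 0 ≤ log (log N) := log_nonneg
    ((one_le_exp zero_le_one).trans (exp_one_le_log_of_sixteen_le (by exact_mod_cast hN)))
  calc (#({p ∈ Ioc z N | p.Prime}.biUnion fun p ↦ obstructedMultiples p N) : ℝ)
      ≤ ∑ p ∈ Ioc z N with p.Prime, (#(obstructedMultiples p N) : ℝ) := by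
        exact_mod_cast card_biUnion_le
    _ ≤ ∑ p ∈ Ioc z N with p.Prime, N * (1 + C * log (log N)) * ((p : ℝ) ^ 2)⁻¹ :=
        sum_le_sum fun p hp ↦ hcard p N (mem_filter.1 hp).2 hN
    _ ≤ ∑ p ∈ Ioc z N, N * (1 + C * log (log N)) * ((p : ℝ) ^ 2)⁻¹ :=
        sum_le_sum_of_subset_of_nonneg (filter_subset _ _) fun _ _ _ ↦ by positivity
    _ ≤ N * (1 + C * log (log N)) * (z : ℝ)⁻¹ := by
        rw [← mul_sum]
        gcongr
        exact sum_inv_sq_Ioc_le hz N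
    _ = N * ((1 + C * log (log N)) / z) := by ring

theorem exists_le_cyclicSum_div_sq : ∃ C : ℝ, ∀ N z : ℕ, 16 ≤ N → 0 < z →
    mertensProduct z / 2 - 5 * (4 ^ z / N) - (1 + C * log (log N)) / z ≤ cyclicSum N / N ^ 2 := by
  obtain ⟨C, -, hcard⟩ := exists_card_biUnion_obstructedMultiples_le
  refine ⟨C, fun N z hN hz ↦ ?_⟩
  have hN0 : 0 < N := by lia
  set B := ({p ∈ Ioc z N | p.Prime} : Finset ℕ).biUnion fun p ↦ obstructedMultiples p N
  have hsplit : ∑ n ∈ range (N + 1) with (primorial z).Coprime n, (n : ℝ) ≤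
      cyclicSum N + N * #B := by
    rw [cyclicSum_natCast]
    refine sum_natCast_le_add_mul_card (fun n hn hn0 ↦ ?_) fun n hn ↦ ?_
    · rw [mem_filter, mem_range_succ_iff, coprime_primorial_iff] at hn
      rw [mem_union, mem_filter, mem_range_succ_iff, or_iff_not_imp_left]
      intro hcyc
      obtain ⟨p, hp, hpn, hobs⟩ := exists_prime_of_not_isCyclicNum hn0 fun h ↦ hcyc ⟨hn.1, h⟩
      have hzp : z < p := not_le.1 fun hle ↦ hn.2 p hp hle hpn
      have hpN : p ≤ N := (Nat.le_of_dvd hn0 hpn).trans hn.1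
      exact mem_biUnion.2 ⟨p, mem_filter.2 ⟨mem_Ioc.2 ⟨hzp, hpN⟩, hp⟩,
        mem_obstructedMultiples hp (mem_Ioc.2 ⟨hn0, hn.1⟩) hpn hobs⟩
    · obtain ⟨p, -, hn⟩ := mem_biUnion.1 hn
      exact le_of_mem_obstructedMultiples hn
  have hcoprime := (abs_le.1 (abs_sum_coprime_primorial_sub_le hN0 z)).1
  rw [le_div_iff₀ (by positivity)]
  calc (mertensProduct z / 2 - 5 * (4 ^ z / N) - (1 + C * log (log N)) / z) * (N : ℝ) ^ 2
      = mertensProduct z * N ^ 2 / 2 - 5 * N * 4 ^ z - N * (N * ((1 + C * log (log N)) / z)) := by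
        field_simp
    _ ≤ mertensProduct z * N ^ 2 / 2 - 5 * N * 4 ^ z - N * #B := by
        gcongr
        exact hcard N z hN hz
    _ ≤ cyclicSum N := by linarith

end LowerBound

/-! ### The sieve level -/

lemma eventually_mul_pow_le_exp_mul (c : ℝ) (k : ℕ) {b : ℝ} (hb : 0 < b) :
    ∀ᶠ x : ℝ in atTop, c * x ^ k ≤ exp (b * x) := by
  filter_upwards [((isLittleO_pow_exp_pos_mul_atTop k hb).const_mul_left c).bound one_pos] with x hx
  rw [one_mul, norm_of_nonneg (exp_pos _).le] at hx
  exact (le_abs_self _).trans hx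

/-- A sieve level `L (log L) ^ r` close to the threshold `L = log log N` below which a prime
typically divides `φ n` for `n ≤ N`. The upper bound sieves at `r = -2`, just below the threshold,
and the lower bound at `r = 2`, just above it. -/
noncomputable def sieveLevel (r L : ℝ) : ℕ := ⌊L * log L ^ r⌋₊

section SieveLevel

variable (r : ℝ)

lemma log_mul_log_rpow_isEquivalent : (fun L : ℝ ↦ log (L * log L ^ r)) ~[atTop] log := by
  have hsmall : (fun L : ℝ ↦ r * log (log L)) =o[atTop] log :=
    (isLittleO_log_id_atTop.comp_tendsto tendsto_log_atTop).const_mul_left r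
  refine (IsEquivalent.refl.add_isLittleO hsmall).congr_left ?_
  filter_upwards [eventually_gt_atTop 1] with L hL
  have hlog : 0 < log L := log_pos hL
  rw [Pi.add_apply, log_mul (by positivity) (rpow_pos_of_pos hlog r).ne', log_rpow hlog]

lemma tendsto_mul_log_rpow_atTop : Tendsto (fun L : ℝ ↦ L * log L ^ r) atTop atTop := by
  have hexp := tendsto_exp_atTop.comp
    ((log_mul_log_rpow_isEquivalent r).symm.tendsto_atTop tendsto_log_atTop)
  refine hexp.congr' ?_
  filter_upwards [eventually_gt_atTop 1] with L hL
  have : 0 < log L ^ r := rpow_pos_of_pos (log_pos hL) r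
  exact exp_log (by positivity)

lemma sieveLevel_isEquivalent :
    (fun L ↦ (sieveLevel r L : ℝ)) ~[atTop] fun L ↦ L * log L ^ r :=
  isEquivalent_nat_floor.comp_tendsto (tendsto_mul_log_rpow_atTop r)

lemma tendsto_sieveLevel_atTop : Tendsto (sieveLevel r) atTop atTop :=
  tendsto_nat_floor_atTop.comp (tendsto_mul_log_rpow_atTop r)

lemma log_sieveLevel_add_one_isEquivalent :
    (fun L ↦ log (sieveLevel r L + 1)) ~[atTop] log := by
  have hone : (fun _ : ℝ ↦ (1 : ℝ)) =o[atTop] fun L ↦ L * log L ^ r :=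
    isLittleO_const_left.2 (.inr (tendsto_norm_atTop_atTop.comp (tendsto_mul_log_rpow_atTop r)))
  exact (((sieveLevel_isEquivalent r).add_isLittleO hone).log (tendsto_mul_log_rpow_atTop r)).trans
    (log_mul_log_rpow_isEquivalent r)

lemma eventually_sieveLevel_le_sq : ∀ᶠ L : ℝ in atTop, (sieveLevel r L : ℝ) ≤ L ^ 2 := by
  filter_upwards [(isLittleO_log_rpow_rpow_atTop r zero_lt_one).bound zero_lt_one,
    eventually_gt_atTop 1] with L hbound hL
  have hpow : 0 ≤ log L ^ r := rpow_nonneg (log_nonneg hL.le) r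
  rw [rpow_one, one_mul, norm_of_nonneg hpow, norm_of_nonneg (by linarith)] at hbound
  calc (sieveLevel r L : ℝ) ≤ L * log L ^ r := Nat.floor_le (by positivity)
    _ ≤ L * L := by gcongr
    _ = L ^ 2 := (sq L).symm

lemma tendsto_log_mul_mertensProduct_sieveLevel :
    Tendsto (fun L ↦ log L * mertensProduct (sieveLevel r L)) atTop
      (𝓝 (exp (-eulerMascheroniConstant))) := by
  have hlog := log_sieveLevel_add_one_isEquivalent r
  have hmertens := tendsto_mertensProduct_mul_log.comp (tendsto_sieveLevel_atTop r)
  refine (IsEquivalent.tendsto_nhds_iff ?_).1 hmertens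
  refine (hlog.mul (IsEquivalent.refl (u := mertensProduct ∘ sieveLevel r))).congr_left ?_
  exact .of_forall fun L ↦ mul_comm _ _

lemma tendsto_log_mul_four_pow_sieveLevel_div :
    Tendsto (fun L ↦ log L * (4 ^ sieveLevel r L / exp (exp L))) atTop (𝓝 0) := by
  refine squeeze_zero' ?_ ?_ tendsto_exp_neg_atTop_nhds_zero
  · filter_upwards [eventually_ge_atTop 1] with L hL
    have := log_nonneg hL
    positivity
  · filter_upwards [eventually_sieveLevel_le_sq r, eventually_ge_atTop 1,
      eventually_mul_pow_le_exp_mul 4 2 one_pos] with L hz hL hexp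
    rw [one_mul] at hexp
    have hlog : log L ≤ exp L := (log_le_self (by linarith)).trans (by linarith [add_one_le_exp L])
    have hfour : (4 : ℝ) ^ sieveLevel r L ≤ exp (2 * L ^ 2) := by
      rw [← rpow_natCast, rpow_def_of_pos (by norm_num), exp_le_exp]
      have : log 4 ≤ 2 := by
        rw [show (4 : ℝ) = 2 ^ 2 by norm_num, log_pow, Nat.cast_two]
        linarith [log_two_lt_d9]
      gcongr
    calc log L * (4 ^ sieveLevel r L / exp (exp L))
        ≤ exp L * (exp (2 * L ^ 2) / exp (exp L)) := by gcongr
      _ = exp (L + (2 * L ^ 2 - exp L)) := by rw [exp_add, exp_sub]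
      _ ≤ exp (-L) := by gcongr; nlinarith

variable {r}

lemma tendsto_log_rpow_atTop_nhds_zero (hr : r < 0) :
    Tendsto (fun L ↦ log L ^ r) atTop (𝓝 0) := by
  simpa only [neg_neg, Function.comp_def] using
    (tendsto_rpow_neg_atTop (neg_pos.2 hr)).comp tendsto_log_atTop

lemma tendsto_log_mul_sieveLevel_div (hr : r < -1) :
    Tendsto (fun L ↦ log L * (sieveLevel r L / L)) atTop (𝓝 0) := by
  have hlim := tendsto_log_rpow_atTop_nhds_zero (show r + 1 < 0 by linarith)
  refine (IsEquivalent.tendsto_nhds_iff ?_).2 hlim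
  have hequiv := (IsEquivalent.refl (u := log)).mul
    ((sieveLevel_isEquivalent r).div (IsEquivalent.refl (u := id)))
  refine hequiv.congr_right ?_
  filter_upwards [eventually_gt_atTop 1] with L hL
  have : 0 < log L := log_pos hL
  simp only [Pi.mul_apply, Pi.div_apply, id]
  rw [rpow_add_one this.ne']
  field_simp

lemma tendsto_log_mul_div_sieveLevel (hr : 1 < r) (C : ℝ) :
    Tendsto (fun L ↦ log L * ((1 + C * L) / sieveLevel r L)) atTop (𝓝 0) := by
  have hratio : Tendsto (fun L : ℝ ↦ (1 + C * L) / L) atTop (𝓝 C) := by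
    refine (zero_add C ▸ tendsto_inv_atTop_zero.add_const C).congr' ?_
    filter_upwards [eventually_gt_atTop 0] with L hL
    rw [add_div, mul_div_cancel_right₀ C hL.ne', one_div]
  have hlim := hratio.mul (tendsto_log_rpow_atTop_nhds_zero (show 1 - r < 0 by linarith))
  rw [mul_zero] at hlim
  refine (IsEquivalent.tendsto_nhds_iff ?_).2 hlim
  have hequiv := (IsEquivalent.refl (u := log)).mul
    ((IsEquivalent.refl (u := fun L ↦ 1 + C * L)).div (sieveLevel_isEquivalent r))
  refine hequiv.congr_right ?_
  filter_upwards [eventually_gt_atTop 1] with L hL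
  have : 0 < log L := log_pos hL
  simp only [Pi.mul_apply, Pi.div_apply]
  rw [rpow_sub this, rpow_one]
  field_simp

end SieveLevel

/-! ### Passage to the limit -/

lemma sieveLevel_neg_two_le {L : ℝ} (hL : 1 ≤ L) :
    (sieveLevel (-2) L : ℝ) ≤ L / log L ^ 2 := by
  have hlog := log_nonneg hL
  have hrpow : log L ^ (-2 : ℝ) = (log L ^ 2)⁻¹ := by rw [rpow_neg hlog, rpow_two]
  rw [sieveLevel, hrpow, ← div_eq_mul_inv]
  exact Nat.floor_le (by positivity)

lemma eventually_le_sum_inv_primesOneMod : ∀ᶠ L : ℝ in atTop,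
    ∀ p, p.Prime → p ≤ sieveLevel (-2) L →
      L / (8 * p) ≤ ∑ q ∈ primesOneMod p ⌈exp (exp (L / 2))⌉₊, (q : ℝ)⁻¹ := by
  obtain ⟨A, hA⟩ := exists_le_sum_inv_primesOneMod
  filter_upwards [eventually_ge_atTop 1, tendsto_log_atTop.eventually_ge_atTop 1,
    tendsto_log_atTop.eventually_ge_atTop (8 * (|A| + 15)),
    eventually_mul_pow_le_exp_mul 2048 5 (show (0 : ℝ) < 1 / 4 by norm_num)]
    with L hL hlog hlogA hexp p hp hpz
  have hp0 : (0 : ℝ) < p := by exact_mod_cast hp.pos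
  have hpL : (p : ℝ) ≤ L / log L ^ 2 := le_trans (by exact_mod_cast hpz) (sieveLevel_neg_two_le hL)
  have hsq : log L ^ 2 ≤ L / p := (le_div_comm₀ hp0 (by positivity)).1 hpL
  have hpL' : (p : ℝ) ≤ L := hpL.trans (div_le_self (by linarith) (one_le_pow₀ hlog))
  have hlogp : log p ≤ log L := log_le_log hp0 hpL'
  have hK : 2048 * (p : ℝ) ^ 5 ≤ exp (L / 4) := by
    refine le_trans ?_ (hexp.trans_eq (by ring_nf))
    gcongr
  have hy : exp (exp (L / 4) ^ 2) ≤ ⌈exp (exp (L / 2))⌉₊ := by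
    rw [← exp_nat_mul, Nat.cast_two, show 2 * (L / 4) = L / 2 by ring]
    exact Nat.le_ceil _
  calc L / (8 * p) = L / p / 4 - L / p / 8 := by field_simp; norm_num
    _ ≤ L / p / 4 - log L ^ 2 / 8 := by gcongr
    _ ≤ L / p / 4 - A - 15 * log p := by nlinarith [le_abs_self A, abs_nonneg A]
    _ = log (exp (L / 4)) / p - A - 15 * log p := by rw [log_exp]; ring
    _ ≤ _ := hA p hp _ hK _ hy

lemma eventually_mul_sieveLevel_le_exp_exp : ∀ᶠ L : ℝ in atTop,
    (2 * (⌈exp (exp (L / 2))⌉₊ : ℝ) + 2) * sieveLevel (-2) L ≤ exp (exp L) := by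
  filter_upwards [eventually_sieveLevel_le_sq (-2), eventually_ge_atTop 3,
    eventually_mul_pow_le_exp_mul 1 2 (show (0 : ℝ) < 1 / 2 by norm_num)] with L hlevel hL hexp
  set t := exp (L / 2) with ht
  have hsq : exp L = t ^ 2 := by rw [ht, ← exp_nat_mul]; ring_nf
  have hLt : L ^ 2 ≤ t := by rw [ht]; convert hexp using 1 <;> ring_nf
  have ht9 : 9 ≤ t := le_trans (by nlinarith) hLt
  have hlt : t + 1 ≤ exp t := add_one_le_exp t
  calc (2 * (⌈exp t⌉₊ : ℝ) + 2) * sieveLevel (-2) L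
      ≤ (2 * (exp t + 1) + 2) * sieveLevel (-2) L := by
        gcongr
        exact (Nat.ceil_lt_add_one (exp_pos t).le).le
    _ ≤ exp t * exp t * exp t := by
        gcongr
        · nlinarith
        · linarith
    _ = exp (t + t + t) := by rw [exp_add, exp_add]
    _ ≤ exp (exp L) := by rw [exp_le_exp, hsq]; nlinarith

lemma tendsto_log_log_natCast_atTop : Tendsto (fun N : ℕ ↦ log (log N)) atTop atTop :=
  tendsto_log_atTop.comp (tendsto_log_atTop.comp tendsto_natCast_atTop_atTop)

lemma eventually_exp_exp_log_log_natCast : ∀ᶠ N : ℕ in atTop, exp (exp (log (log N))) = N := by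
  filter_upwards [eventually_gt_atTop 1] with N hN
  have hN1 : (1 : ℝ) < N := by exact_mod_cast hN
  rw [exp_log (log_pos hN1), exp_log (by positivity)]

lemma eventually_log_mul_cyclicSum_div_sq_le : ∀ᶠ N : ℕ in atTop,
    log (log (log N)) * (cyclicSum N / N ^ 2) ≤
      (fun L ↦ log L * mertensProduct (sieveLevel (-2) L) / 2 +
        5 * (log L * (4 ^ sieveLevel (-2) L / exp (exp L))) +
        16 * (log L * (sieveLevel (-2) L / L))) (log (log N)) := by
  have hL := tendsto_log_log_natCast_atTop
  filter_upwards [hL.eventually eventually_le_sum_inv_primesOneMod, eventually_gt_atTop 0,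
    hL.eventually eventually_mul_sieveLevel_le_exp_exp, hL.eventually_ge_atTop 1,
    eventually_exp_exp_log_log_natCast] with N hsum hN hy hL1 hexp
  rw [hexp] at hy ⊢
  refine (mul_le_mul_of_nonneg_left (cyclicSum_div_sq_le hN (by linarith) hy hsum)
    (log_nonneg hL1)).trans_eq ?_
  ring

lemma exists_eventually_le_log_mul_cyclicSum_div_sq : ∃ C : ℝ, ∀ᶠ N : ℕ in atTop,
    (fun L ↦ log L * mertensProduct (sieveLevel 2 L) / 2 -
      5 * (log L * (4 ^ sieveLevel 2 L / exp (exp L))) -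
      log L * ((1 + C * L) / sieveLevel 2 L)) (log (log N)) ≤
      log (log (log N)) * (cyclicSum N / N ^ 2) := by
  obtain ⟨C, hC⟩ := exists_le_cyclicSum_div_sq
  refine ⟨C, ?_⟩
  have hL := tendsto_log_log_natCast_atTop
  filter_upwards [hL.eventually ((tendsto_sieveLevel_atTop 2).eventually_gt_atTop 0),
    eventually_ge_atTop 16, hL.eventually_ge_atTop 1, eventually_exp_exp_log_log_natCast]
    with N hz hN hL1 hexp
  rw [hexp]
  refine le_trans (le_of_eq ?_) (mul_le_mul_of_nonneg_left (hC N _ hN hz) (log_nonneg hL1))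
  ring

theorem tendsto_log_mul_cyclicSum_div_sq :
    Tendsto (fun N : ℕ ↦ log (log (log N)) * (cyclicSum N / N ^ 2)) atTop
      (𝓝 (exp (-eulerMascheroniConstant) / 2)) := by
  obtain ⟨C, hlower⟩ := exists_eventually_le_log_mul_cyclicSum_div_sq
  have hlow := (((tendsto_log_mul_mertensProduct_sieveLevel 2).div_const 2).sub
    ((tendsto_log_mul_four_pow_sieveLevel_div 2).const_mul 5)).sub
    (tendsto_log_mul_div_sieveLevel one_lt_two C)
  have hupp := (((tendsto_log_mul_mertensProduct_sieveLevel (-2)).div_const 2).add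
    ((tendsto_log_mul_four_pow_sieveLevel_div (-2)).const_mul 5)).add
    ((tendsto_log_mul_sieveLevel_div (show (-2 : ℝ) < -1 by norm_num)).const_mul 16)
  simp only [mul_zero, sub_zero, add_zero] at hlow hupp
  exact tendsto_of_tendsto_of_tendsto_of_le_of_le' (hlow.comp tendsto_log_log_natCast_atTop)
    (hupp.comp tendsto_log_log_natCast_atTop) hlower eventually_log_mul_cyclicSum_div_sq_le

lemma cyclicSum_natFloor (x : ℝ) : cyclicSum ⌊x⌋₊ = cyclicSum x := by
  rw [cyclicSum, cyclicSum, Nat.floor_natCast]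

lemma log_log_log_natFloor_isEquivalent :
    (fun x : ℝ ↦ log (log (log ⌊x⌋₊))) ~[atTop] fun x ↦ log (log (log x)) :=
  ((isEquivalent_nat_floor.log tendsto_id).log tendsto_log_atTop).log
    (tendsto_log_atTop.comp tendsto_log_atTop)

end CyclicNum

theorem cyclicSum_isEquivalent :
    (fun x : ℝ => cyclicSum x) ~[atTop]
      (fun x : ℝ => x ^ 2 /
        (2 * Real.exp Real.eulerMascheroniConstant *
          Real.log (Real.log (Real.log x)))) := by
  have hlogs := CyclicNum.log_log_log_natFloor_isEquivalent
  have hlimit := (isEquivalent_const_iff_tendsto (by positivity)).2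
    (CyclicNum.tendsto_log_mul_cyclicSum_div_sq.comp (tendsto_nat_floor_atTop (α := ℝ)))
  have hlogs_ne : ∀ᶠ x : ℝ in atTop, log (log (log ⌊x⌋₊)) ≠ 0 :=
    (hlogs.symm.tendsto_atTop (tendsto_log_atTop.comp
      (tendsto_log_atTop.comp tendsto_log_atTop))).eventually_ne_atTop 0
  refine ((hlimit.mul ((isEquivalent_nat_floor.pow 2).div hlogs)).congr_left ?_).congr_right ?_
  · filter_upwards [hlogs_ne, eventually_ge_atTop 1] with x hlog hx
    have : 0 < ⌊x⌋₊ := Nat.floor_pos.2 hx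
    simp only [Function.comp_apply, Pi.mul_apply, Pi.div_apply, Pi.pow_apply]
    rw [CyclicNum.cyclicSum_natFloor]
    field_simp
  · refine .of_forall fun x ↦ ?_
    simp only [Pi.mul_apply, Pi.div_apply, Pi.pow_apply, Function.const_apply, exp_neg]
    field_simp
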